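/- arXiv:1906.02546 — 4 statements merged into one kernel-verified Lean document; each statement's English description precedes it below -/
import Mathlib

section
/- Let (q_L)_{L≥1} be positive parameters and set δ_L = e^{−2 q_L}. Assume that δ_L² · |Λ| → 0 as L → ∞ (where |Λ| = (2L)²). Then there exists J̄ > 0 such that for every J > J̄ the total variation distance ‖π − π^G‖_TV = (1/2) Σ_{σ∈X_Λ} |π(σ) − π^G(σ)| between the measure π (with parameters J and q_L) and the Ising Gibbs measure π^G (with parameter J) on the 2L×2L torus tends to 0 as L → ∞. -/
/-!
Write `y←`, `y↓` for the left and lower neighbours of `y`. Given `σ`, the spins of `τ` are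
independent, so summing them out gives `π(σ) ∝ exp (-H(σ)) * exp (G σ)` with
`G σ = ∑ y, log (1 + δ exp (-2J σ_y (σ_{y←} + σ_{y↓})))` and `δ = exp (-2q)` (`sum_pair`). The
theorem follows from the bound `‖π - π^G‖ ≤ C_J δ √|Λ|` (`tvDist_le`).

*Interpolation.* Tilting the Gibbs weights by `exp (s G)`, `0 ≤ s ≤ 1`, joins `π^G` to `π`. By the
mean value theorem the `ℓ¹`-distance of the endpoints is at most the supremum over `s` of the mean
of `|G σ - G τ|`, for `σ`, `τ` independent with the tilted law (`sum_abs_le_of_tilt`). By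
Cauchy–Schwarz it suffices to bound the variance of `G` by a multiple of `δ² |Λ|`, uniformly in `s`.

*Covariances.* Each tilted law is a product over sites of a local weight of the two bonds from `y`
to `y←` and `y↓`, with ratio of order `exp (2J)` between an agreeing and a bad (disagreeing) site
(`LowTemp`). For two independent copies, consider the cluster of `x`, for triangular-lattice
adjacency, among the sites bad in one of the copies. If it misses some row and some column, the
domain walls of the two copies can be exchanged on it: the result is closed around every plaquette,
and has no holonomy around the torus (`exact_of_closed`, `exists_flip`). This swap is a
weight-preserving involution which reverses the sign of the difference of local observables at `x`
and fixes the one at `y` when `y` is not in the cluster. Hence the covariance of the observables at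
`x` and `y` is controlled by the probability that the cluster of `x` is long (`sum_swappable`,
`exists_walk_of_not_swappable`).

*Peierls bound.* At low temperature the local weights are combinations of spin products with
nonnegative coefficients, so the first Griffiths inequality gives a factor `O(exp (-2J))` for each
prescribed bad site (`LowTemp.peierls`). Counting walks yields exponential decay of covariances
(`LowTemp.not_swappable_le`, `LowTemp.cov_le`), and summation over `x` and `y` the variance bound
(`LowTemp.var_le`).
-/

open Real Filter

instance instNeZeroTwoMul (L : ℕ) [NeZero L] : NeZero (2 * L) :=
  ⟨by have := NeZero.ne L; omega⟩

/-- The `2L × 2L` discrete torus `Λ`. -/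
abbrev Torus (L : ℕ) := ZMod (2 * L) × ZMod (2 * L)

/-- Spin configurations `X_Λ = {−1,+1}^Λ`, a spin being encoded by a `Bool`. -/
abbrev Cfg (L : ℕ) := Torus L → Bool

/-- The value (±1) of the spin of `σ` at `x`. -/
noncomputable def spin {L : ℕ} (σ : Cfg L) (x : Torus L) : ℝ := if σ x then 1 else -1

/-- Up neighbour on the torus. -/
def up {L : ℕ} (x : Torus L) : Torus L := (x.1, x.2 + 1)

/-- Right neighbour on the torus. -/
def rt {L : ℕ} (x : Torus L) : Torus L := (x.1 + 1, x.2)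

/-- The nearest-neighbour Ising Hamiltonian `H(σ) = −J Σ_{⟨x,y⟩∈B_Λ} σ_x σ_y`
(each nearest-neighbour bond of the torus counted once, as an up- or right-edge). -/
noncomputable def HIsing (L : ℕ) [NeZero L] (J : ℝ) (σ : Cfg L) : ℝ :=
  -J * ∑ x : Torus L, spin σ x * (spin σ (up x) + spin σ (rt x))

/-- Ising partition function `Z^G`. -/
noncomputable def ZG (L : ℕ) [NeZero L] (J : ℝ) : ℝ :=
  ∑ σ : Cfg L, exp (-(HIsing L J σ))

/-- The Gibbs measure `π^G`. -/
noncomputable def gibbs (L : ℕ) [NeZero L] (J : ℝ) (σ : Cfg L) : ℝ :=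
  exp (-(HIsing L J σ)) / ZG L J

/-- The pair Hamiltonian `H(σ,τ) = −Σ_x [J σ_x (τ_{x↑} + τ_{x→}) + q σ_x τ_x]`. -/
noncomputable def Hpair (L : ℕ) [NeZero L] (J q : ℝ) (σ τ : Cfg L) : ℝ :=
  - ∑ x : Torus L, (J * spin σ x * (spin τ (up x) + spin τ (rt x)) + q * spin σ x * spin τ x)

/-- The partition function `Z` of the pair Hamiltonian. -/
noncomputable def Zpair (L : ℕ) [NeZero L] (J q : ℝ) : ℝ :=
  ∑ σ : Cfg L, ∑ τ : Cfg L, exp (-(Hpair L J q σ τ))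

/-- The (non Gibbsian) measure `π(σ) = (1/Z) Σ_τ e^{−H(σ,τ)}`. -/
noncomputable def piMeas (L : ℕ) [NeZero L] (J q : ℝ) (σ : Cfg L) : ℝ :=
  (∑ τ : Cfg L, exp (-(Hpair L J q σ τ))) / Zpair L J q

/-- Total variation distance `‖π − π^G‖_TV = (1/2) Σ_σ |π(σ) − π^G(σ)|`
(defined to be `0` in the degenerate case `L = 0`). -/
noncomputable def tvDist (L : ℕ) (J q : ℝ) : ℝ :=
  if h : L = 0 then 0
  else
    haveI : NeZero L := ⟨h⟩
    (1 / 2) * ∑ σ : Cfg L, |piMeas L J q σ - gibbs L J σ|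

namespace IsingTV

/-! ### Bond variables and local weights -/

variable {N : ℕ}

/-- The `N × N` discrete torus. -/
abbrev Tor (N : ℕ) := ZMod N × ZMod N

/-- The real value (±1) of a Boolean spin. -/
noncomputable def sgn (b : Bool) : ℝ := if b then 1 else -1

/-- Disagreement across the bond joining `y` to its left neighbour. -/
def hb (σ : Tor N → Bool) (y : Tor N) : Bool := xor (σ y) (σ (y - (1, 0)))

/-- Disagreement across the bond joining `y` to its lower neighbour. -/
def vb (σ : Tor N → Bool) (y : Tor N) : Bool := xor (σ y) (σ (y - (0, 1)))

/-- A site is bad if its spin disagrees with its left or with its lower neighbour. -/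
def Bad (σ : Tor N → Bool) (y : Tor N) : Prop := hb σ y = true ∨ vb σ y = true

instance (σ : Tor N → Bool) : DecidablePred (Bad σ) := fun _ => by
  unfold Bad; infer_instance

/-- The unnormalised weight of `σ` in the model with local weight `w`, a function of the two
disagreement bits of each site. -/
noncomputable def wt [NeZero N] (w : Bool → Bool → ℝ) (σ : Tor N → Bool) : ℝ :=
  ∏ y, w (hb σ y) (vb σ y)

/-- The partition function of the model with local weight `w`. -/
noncomputable def Zw (N : ℕ) [NeZero N] (w : Bool → Bool → ℝ) : ℝ :=
  ∑ σ : Tor N → Bool, wt w σ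

/-- Low-temperature local weights: an agreeing site has weight at least `M`, all other sites
have weight at most `2`. -/
structure LowTemp (M : ℝ) (w : Bool → Bool → ℝ) : Prop where
  pos : ∀ a b, 0 < w a b
  good : M ≤ w false false
  bad : ∀ a b, (a = true ∨ b = true) → w a b ≤ 2

/-! ### The first Griffiths inequality and the Peierls bound -/

/-- All correlations of `F` with monomials in the spins are nonnegative. -/
def Pos [NeZero N] (F : (Tor N → Bool) → ℝ) : Prop :=
  ∀ m : Tor N → ℕ, 0 ≤ ∑ σ, F σ * ∏ x, sgn (σ x) ^ m x

lemma Pos.one [NeZero N] : Pos (fun _ : Tor N → Bool => (1 : ℝ)) := by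
  intro m
  have h := Finset.prod_univ_sum (ι := Tor N) (κ := fun _ => Bool) (fun _ => Finset.univ)
    (fun x b => sgn b ^ m x)
  rw [Fintype.piFinset_univ] at h
  simp only [one_mul]
  rw [← h]
  refine Finset.prod_nonneg fun x _ => ?_
  rw [Fintype.sum_bool]
  rcases neg_one_pow_eq_or ℝ (m x) with h | h <;> simp [sgn, h]

lemma Pos.sum_nonneg [NeZero N] {F : (Tor N → Bool) → ℝ} (h : Pos F) : 0 ≤ ∑ σ, F σ := by
  simpa using h 0

lemma Pos.mul_spin [NeZero N] {F : (Tor N → Bool) → ℝ} (h : Pos F) (x : Tor N) :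
    Pos (fun σ => F σ * sgn (σ x)) := by
  intro m
  convert h (m + Pi.single x 1) using 2 with σ
  rw [mul_assoc]
  congr 1
  simp only [Pi.add_apply, pow_add, Finset.prod_mul_distrib]
  rw [mul_comm]
  congr 1
  rw [Finset.prod_eq_single x]
  · simp
  · intro b _ hb; simp [hb]
  · simp

lemma Pos.add [NeZero N] {F G : (Tor N → Bool) → ℝ} (hF : Pos F) (hG : Pos G) :
    Pos (fun σ => F σ + G σ) := by
  intro m
  simp only [add_mul, Finset.sum_add_distrib]
  exact add_nonneg (hF m) (hG m)

lemma Pos.smul [NeZero N] {F : (Tor N → Bool) → ℝ} (hF : Pos F) {c : ℝ} (hc : 0 ≤ c) :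
    Pos (fun σ => c * F σ) := by
  intro m
  simp only [mul_assoc, ← Finset.mul_sum]
  exact mul_nonneg hc (hF m)

lemma sgn_mul_self (a : Bool) : sgn a * sgn a = 1 := by cases a <;> simp [sgn]

/-- A local weight is a combination of spin products; its four coefficients are nonnegative at
low temperature, and the constant one is the mean of `w`, hence at least `M / 4`. -/
lemma LowTemp.expand {M : ℝ} (hM : 384 ≤ M) {w : Bool → Bool → ℝ} (hw : LowTemp M w) :
    ∃ A B B' C : ℝ, M / 4 ≤ A ∧ 0 ≤ B ∧ 0 ≤ B' ∧ 0 ≤ C ∧ ∀ s a b : Bool,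
      w (xor s a) (xor s b) = A + B * (sgn s * sgn a) + B' * (sgn s * sgn b)
        + C * (sgn a * sgn b) := by
  have h0 := hw.good
  have h1 := hw.bad true false (by simp)
  have h2 := hw.bad false true (by simp)
  have h3 := hw.bad true true (by simp)
  have p1 := hw.pos true false
  have p2 := hw.pos false true
  have p3 := hw.pos true true
  refine ⟨(w false false + w true false + w false true + w true true) / 4,
    (w false false - w true false + w false true - w true true) / 4,
    (w false false + w true false - w false true - w true true) / 4,
    (w false false - w true false - w false true + w true true) / 4,
    by linarith, by linarith, by linarith, by linarith, ?_⟩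
  intro s a b
  cases s <;> cases a <;> cases b <;> simp [sgn] <;> ring

lemma LowTemp.pos_mul [NeZero N] {M : ℝ} (hM : 384 ≤ M) {w : Bool → Bool → ℝ}
    (hw : LowTemp M w) {F : (Tor N → Bool) → ℝ} (hF : Pos F) (y : Tor N) :
    Pos (fun σ => w (hb σ y) (vb σ y) * F σ) ∧
      M / 4 * ∑ σ, F σ ≤ ∑ σ, w (hb σ y) (vb σ y) * F σ := by
  obtain ⟨A, B, B', C, hA, hB, hB', hC, h⟩ := hw.expand hM
  have hA0 : 0 ≤ A := by linarith
  have P1 := ((hF.mul_spin y).mul_spin (y - (1, 0))).smul hB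
  have P2 := ((hF.mul_spin y).mul_spin (y - (0, 1))).smul hB'
  have P3 := ((hF.mul_spin (y - (1, 0))).mul_spin (y - (0, 1))).smul hC
  have PP := (P1.add P2).add P3
  have e : (fun σ : Tor N → Bool => w (hb σ y) (vb σ y) * F σ) = fun σ => A * F σ +
      (B * (F σ * sgn (σ y) * sgn (σ (y - (1, 0)))) + B' * (F σ * sgn (σ y) * sgn (σ (y - (0, 1))))
        + C * (F σ * sgn (σ (y - (1, 0))) * sgn (σ (y - (0, 1))))) := by
    funext σ
    rw [hb, vb, h]
    ring
  refine ⟨?_, ?_⟩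
  · rw [e]
    exact (hF.smul hA0).add PP
  · rw [e, Finset.sum_add_distrib, ← Finset.mul_sum]
    have := PP.sum_nonneg
    have := mul_le_mul_of_nonneg_right hA hF.sum_nonneg
    linarith

/-- The Griffiths inequality: weights of the sites of `S` are positively correlated with all
spin monomials. -/
lemma LowTemp.pos_prod [NeZero N] {M : ℝ} (hM : 384 ≤ M) {w : Bool → Bool → ℝ}
    (hw : LowTemp M w) (S : Finset (Tor N)) :
    Pos (fun σ : Tor N → Bool => ∏ y ∈ S, w (hb σ y) (vb σ y)) := by
  induction S using Finset.induction_on with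
  | empty => simpa using Pos.one
  | insert y S hy ih =>
    simp only [Finset.prod_insert hy]
    exact (hw.pos_mul hM ih y).1

lemma LowTemp.prod_le [NeZero N] {M : ℝ} (hM : 384 ≤ M) {w : Bool → Bool → ℝ}
    (hw : LowTemp M w) (S A : Finset (Tor N)) (hSA : Disjoint A S) :
    (M / 4) ^ A.card * ∑ σ : Tor N → Bool, ∏ y ∈ S, w (hb σ y) (vb σ y) ≤
      ∑ σ : Tor N → Bool, ∏ y ∈ A ∪ S, w (hb σ y) (vb σ y) := by
  induction A using Finset.induction_on with
  | empty => simp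
  | insert y A hy ih =>
    rw [Finset.disjoint_insert_left] at hSA
    have h := (hw.pos_mul hM (hw.pos_prod hM (A ∪ S)) y).2
    have ih := ih hSA.2
    rw [Finset.card_insert_of_notMem hy, Finset.insert_union]
    have hy' : y ∉ A ∪ S := by simp [hy, hSA.1]
    simp only [Finset.prod_insert hy']
    refine le_trans ?_ h
    rw [pow_succ', mul_assoc]
    exact mul_le_mul_of_nonneg_left ih (by linarith)

lemma LowTemp.wt_pos [NeZero N] {M : ℝ} {w : Bool → Bool → ℝ}
    (hw : LowTemp M w) (σ : Tor N → Bool) : 0 < wt w σ :=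
  Finset.prod_pos fun _ _ => hw.pos _ _

lemma LowTemp.Zw_pos [NeZero N] {M : ℝ} {w : Bool → Bool → ℝ}
    (hw : LowTemp M w) : 0 < Zw N w :=
  Finset.sum_pos (fun σ _ => hw.wt_pos σ) Finset.univ_nonempty

/-- Peierls bound: each prescribed bad site costs a factor `8 / M`. Replacing the weights on `A`
by `2` bounds the left side; restoring them gains `M / 4` per site by the Griffiths inequality. -/
lemma LowTemp.peierls [NeZero N] {M : ℝ} (hM : 384 ≤ M) {w : Bool → Bool → ℝ}
    (hw : LowTemp M w) (A : Finset (Tor N)) :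
    ∑ σ : Tor N → Bool, (if ∀ y ∈ A, Bad σ y then wt w σ else 0) ≤
      (8 / M) ^ A.card * Zw N w := by
  have h1 : ∑ σ : Tor N → Bool, (if ∀ y ∈ A, Bad σ y then wt w σ else 0) ≤
      2 ^ A.card * ∑ σ : Tor N → Bool, ∏ y ∈ Aᶜ, w (hb σ y) (vb σ y) := by
    rw [Finset.mul_sum]
    refine Finset.sum_le_sum fun σ _ => ?_
    have hc : 0 ≤ ∏ y ∈ Aᶜ, w (hb σ y) (vb σ y) := Finset.prod_nonneg fun _ _ => (hw.pos _ _).le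
    split_ifs with h
    · rw [wt, ← Finset.prod_mul_prod_compl A]
      refine mul_le_mul_of_nonneg_right ?_ hc
      rw [← Finset.prod_const]
      exact Finset.prod_le_prod (fun _ _ => (hw.pos _ _).le) fun y hy => hw.bad _ _ (h y hy)
    · positivity
  have h2 := hw.prod_le hM Aᶜ A disjoint_compl_right
  rw [Finset.union_compl] at h2
  refine h1.trans ?_
  have hM0 : 0 < M := by linarith
  have e : (2 : ℝ) ^ A.card = (8 / M) ^ A.card * (M / 4) ^ A.card := by
    rw [← mul_pow]; congr 1; field_simp; norm_num
  rw [e, mul_assoc]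
  exact mul_le_mul_of_nonneg_left h2 (by positivity)

/-- The Peierls bound for two independent copies: each site of `A` is bad in one of them. -/
lemma LowTemp.peierls_pair [NeZero N] {M : ℝ} (hM : 384 ≤ M) {w : Bool → Bool → ℝ}
    (hw : LowTemp M w) (A : Finset (Tor N)) :
    ∑ σ : Tor N → Bool, ∑ τ : Tor N → Bool,
      (if ∀ y ∈ A, Bad σ y ∨ Bad τ y then wt w σ * wt w τ else 0) ≤
      (16 / M) ^ A.card * (Zw N w * Zw N w) := by
  have h1 : ∀ σ τ : Tor N → Bool,
      (if ∀ y ∈ A, Bad σ y ∨ Bad τ y then wt w σ * wt w τ else 0) ≤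
      ∑ t ∈ A.powerset, (if ∀ y ∈ t, Bad σ y then wt w σ else 0) *
        (if ∀ y ∈ A \ t, Bad τ y then wt w τ else 0) := by
    intro σ τ
    have hn : ∀ t ∈ A.powerset, 0 ≤ (if ∀ y ∈ t, Bad σ y then wt w σ else 0) *
        (if ∀ y ∈ A \ t, Bad τ y then wt w τ else 0) := by
      intro t _
      have := hw.wt_pos σ
      have := hw.wt_pos τ
      split_ifs <;> positivity
    split_ifs with h
    · refine le_trans ?_ (Finset.single_le_sum hn
        (Finset.mem_powerset.2 (Finset.filter_subset (Bad σ) A)))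
      rw [if_pos, if_pos]
      · intro y hy
        simp only [Finset.mem_sdiff, Finset.mem_filter, not_and] at hy
        exact (h y hy.1).resolve_left (hy.2 hy.1)
      · intro y hy
        exact (Finset.mem_filter.1 hy).2
    · exact Finset.sum_nonneg hn
  calc _ ≤ ∑ σ : Tor N → Bool, ∑ τ : Tor N → Bool,
        ∑ t ∈ A.powerset, (if ∀ y ∈ t, Bad σ y then wt w σ else 0) *
        (if ∀ y ∈ A \ t, Bad τ y then wt w τ else 0) :=
        Finset.sum_le_sum fun σ _ => Finset.sum_le_sum fun τ _ => h1 σ τ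
    _ = ∑ t ∈ A.powerset, (∑ σ : Tor N → Bool, if ∀ y ∈ t, Bad σ y then wt w σ else 0) *
        (∑ τ : Tor N → Bool, if ∀ y ∈ A \ t, Bad τ y then wt w τ else 0) := by
        simp only [Finset.sum_mul_sum]
        symm
        rw [Finset.sum_comm]
        refine Finset.sum_congr rfl fun σ _ => ?_
        rw [Finset.sum_comm]
    _ ≤ ∑ t ∈ A.powerset, (8 / M) ^ A.card * (Zw N w * Zw N w) := by
        refine Finset.sum_le_sum fun t ht => ?_
        have hc : A.card = t.card + (A \ t).card := by
          have := Finset.card_sdiff_add_card_eq_card (Finset.mem_powerset.1 ht); omega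
        rw [hc, pow_add, mul_mul_mul_comm]
        refine mul_le_mul (hw.peierls hM t) (hw.peierls hM (A \ t)) ?_ ?_
        · refine Finset.sum_nonneg fun τ _ => ?_
          have := hw.wt_pos τ
          split_ifs <;> positivity
        · have := hw.Zw_pos (N := N)
          positivity
    _ = (16 / M) ^ A.card * (Zw N w * Zw N w) := by
        rw [Finset.sum_const, Finset.card_powerset, nsmul_eq_mul, ← mul_assoc]
        push_cast
        rw [← mul_pow]
        congr 2
        ring

/-! ### Closed cochains on the torus -/

lemma zmod_const [NeZero N] {A : Type*} (f : ZMod N → A) (hf : ∀ j, f j = f (j - 1))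
    (j₀ j : ZMod N) : f j = f j₀ := by
  have h : ∀ k : ℕ, f (j₀ + k) = f j₀ := by
    intro k
    induction k with
    | zero => simp
    | succ k ih =>
      rw [hf, ← ih]
      congr 1
      push_cast
      ring
  have := h (j - j₀).val
  rwa [ZMod.natCast_zmod_val, add_sub_cancel] at this

/-- A function on the cycle with zero sum has a primitive vanishing at `j₀`. -/
lemma zmod_primitive [NeZero N] {A : Type*} [AddCommGroup A] (c : ZMod N → A)
    (hc : ∑ j, c j = 0) (j₀ : ZMod N) :
    ∃ P : ZMod N → A, P j₀ = 0 ∧ ∀ j, P j - P (j - 1) = c j := by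
  refine ⟨fun j => ∑ t ∈ Finset.range (j - j₀).val, c (j₀ + 1 + t), by simp, fun j => ?_⟩
  have htot : ∑ t ∈ Finset.range N, c (j₀ + 1 + t) = 0 := by
    rw [← hc]
    refine Finset.sum_nbij' (fun t => j₀ + 1 + (t : ZMod N)) (fun i => (i - j₀ - 1).val)
      ?_ ?_ ?_ ?_ ?_
    · simp
    · intro i _; simpa using ZMod.val_lt _
    · intro t ht
      have : j₀ + 1 + (t : ZMod N) - j₀ - 1 = t := by ring
      rw [this]
      exact ZMod.val_natCast_of_lt (Finset.mem_range.1 ht)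
    · intro i _
      rw [ZMod.natCast_zmod_val]; ring
    · simp
  set k := (j - 1 - j₀).val with hk
  have hkN : k < N := ZMod.val_lt _
  have hkc : (k : ZMod N) = j - 1 - j₀ := by rw [hk, ZMod.natCast_zmod_val]
  have hj : j - j₀ = ((k + 1 : ℕ) : ZMod N) := by push_cast; rw [hkc]; ring
  have hcj : c (j₀ + 1 + k) = c j := by congr 1; rw [hkc]; ring
  simp only
  rw [hj]
  rcases Nat.lt_or_ge (k + 1) N with h | h
  · rw [ZMod.val_natCast_of_lt h, Finset.sum_range_succ, hcj]
    abel
  · have hN : k + 1 = N := by omega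
    have hr : Finset.range N = Finset.range (k + 1) := by rw [hN]
    rw [hr, Finset.sum_range_succ, hcj] at htot
    have h0 : ((k + 1 : ℕ) : ZMod N) = 0 := (ZMod.natCast_eq_zero_iff _ _).2 (by rw [hN])
    rw [h0, ZMod.val_zero, Finset.sum_range_zero, zero_sub]
    exact neg_eq_of_add_eq_zero_right htot

/-- Poincaré lemma on the torus: a closed 1-cochain `(a, b)` that vanishes along one row and one
column has trivial holonomies, hence is exact. -/
lemma exact_of_closed [NeZero N] {A : Type*} [AddCommGroup A] (a b : Tor N → A)
    (hc : ∀ y, a y + b (y - (1, 0)) = b y + a (y - (0, 1))) (i₀ j₀ : ZMod N)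
    (ha : ∀ i, a (i, j₀) = 0) (hb : ∀ j, b (i₀, j) = 0) :
    ∃ η : Tor N → A, ∀ y, η y - η (y - (1, 0)) = a y ∧ η y - η (y - (0, 1)) = b y := by
  have hc' : ∀ i j, b (i, j) - b (i - 1, j) = a (i, j) - a (i, j - 1) := by
    intro i j
    have := hc (i, j)
    simp only [Prod.mk_sub_mk, sub_zero] at this
    rw [sub_eq_sub_iff_add_eq_add, ← this]
  -- the vertical holonomy does not depend on the column
  have hsum : ∀ i, ∑ j, b (i, j) = 0 := by
    intro i
    rw [zmod_const (fun i => ∑ j, b (i, j)) ?_ i₀ i]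
    · simp [hb]
    · intro i
      rw [← sub_eq_zero, ← Finset.sum_sub_distrib]
      simp only [hc']
      rw [Finset.sum_sub_distrib, sub_eq_zero]
      exact ((Equiv.subRight (1 : ZMod N)).sum_comp fun j => a (i, j)).symm
  choose P hP0 hP using fun i => zmod_primitive (fun j => b (i, j)) (hsum i) j₀
  refine ⟨fun y => P y.1 y.2, fun ⟨i, j⟩ => ⟨?_, ?_⟩⟩
  · have := zmod_const (fun j => P i j - P (i - 1) j - a (i, j)) ?_ j₀ j
    · simp only [hP0, ha, sub_zero] at this
      simpa [sub_eq_zero] using this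
    · intro j
      have h1 := hP i j
      have h2 := hP (i - 1) j
      have h3 := hc' i j
      rw [← h1, ← h2] at h3
      rw [← sub_eq_zero] at h3 ⊢
      rw [← h3]
      abel
  · simpa using hP i j

/-! ### Clusters of bad sites -/

/-- The six steps of the triangular lattice: `±e₁`, `±e₂`, `±(e₁ - e₂)`. Any two of the sites `y`,
`y - e₁`, `y - e₂`, which carry the four bonds of a plaquette, differ by such a step. -/
def dir : Fin 6 → Tor N := ![(1, 0), (-1, 0), (0, 1), (0, -1), (1, -1), (-1, 1)]

lemma dir_neg (k : Fin 6) : ∃ k', (dir k' : Tor N) = -dir k := by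
  fin_cases k
  · exact ⟨1, by simp [dir]⟩
  · exact ⟨0, by simp [dir]⟩
  · exact ⟨3, by simp [dir]⟩
  · exact ⟨2, by simp [dir]⟩
  · exact ⟨5, by simp [dir]⟩
  · exact ⟨4, by simp [dir]⟩

/-- The triangular lattice restricted to the sites satisfying `B`. -/
def gr (B : Tor N → Prop) : SimpleGraph (Tor N) where
  Adj u v := u ≠ v ∧ B u ∧ B v ∧ ∃ k, v = u + dir k
  symm := ⟨by
    rintro u v ⟨h, hu, hv, k, rfl⟩
    obtain ⟨k', hk'⟩ := dir_neg (N := N) k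
    exact ⟨h.symm, hv, hu, k', by rw [hk']; abel⟩⟩
  loopless := ⟨fun u h => h.1 rfl⟩

/-- The cluster of `x` in `B`, empty if `x` does not satisfy `B`. -/
def Clus (B : Tor N → Prop) (x z : Tor N) : Prop := B x ∧ (gr B).Reachable x z

lemma Clus.mem {B : Tor N → Prop} {x z : Tor N} (h : Clus B x z) : B z := by
  obtain ⟨hx, p⟩ := h
  rw [SimpleGraph.reachable_iff_reflTransGen] at p
  cases p with
  | refl => exact hx
  | tail _ h => exact h.2.2.1

lemma Clus.step {B : Tor N → Prop} {x u v : Tor N} (h : Clus B x u) (hv : B v)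
    (huv : ∃ k, v = u + dir k) : Clus B x v := by
  by_cases e : u = v
  · rwa [← e]
  · exact ⟨h.1, h.2.trans (SimpleGraph.Adj.reachable ⟨e, h.mem, hv, huv⟩)⟩

/-- `η` has the domain walls of `ρ` on the sites of `K`, and none elsewhere. -/
def IsFlip (K : Tor N → Prop) (ρ η : Tor N → Bool) : Prop :=
  ∀ z, (K z → hb η z = hb ρ z ∧ vb η z = vb ρ z) ∧ (¬ K z → hb η z = false ∧ vb η z = false)

/-- A Boolean as an element of `ℤ/2ℤ`; exclusive or becomes subtraction. -/
def e2 (b : Bool) : ZMod 2 := if b then 1 else 0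

lemma e2_xor (a b : Bool) : e2 (xor a b) = e2 a - e2 b := by
  cases a <;> cases b <;> decide

lemma e2_surj (z : ZMod 2) : ∃ b, e2 b = z := by
  revert z; decide

lemma e2_inj {a b : Bool} (h : e2 a = e2 b) : a = b := by
  revert a b; decide

/-- The domain walls of `ρ` inside a cluster that misses a row and a column are themselves the
domain walls of a configuration. -/
lemma exists_flip [NeZero N] (B : Tor N → Prop) (ρ : Tor N → Bool)
    (hB : ∀ z, ¬ B z → hb ρ z = false ∧ vb ρ z = false) (x : Tor N) (i₀ j₀ : ZMod N)
    (hrow : ∀ i, ¬ Clus B x (i, j₀)) (hcol : ∀ j, ¬ Clus B x (i₀, j)) :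
    ∃ η, IsFlip (Clus B x) ρ η := by
  classical
  have hcl : ∀ y, (if Clus B x y then e2 (hb ρ y) else 0) +
      (if Clus B x (y - (1, 0)) then e2 (vb ρ (y - (1, 0))) else 0) =
      (if Clus B x y then e2 (vb ρ y) else 0) +
      (if Clus B x (y - (0, 1)) then e2 (hb ρ (y - (0, 1))) else 0) := by
    intro y
    -- around a plaquette, either no site lies in the cluster, or every site outside it is good
    set y₁ := y - (1, 0) with hy₁
    set y₂ := y - (0, 1) with hy₂
    have closed : e2 (hb ρ y) + e2 (vb ρ y₁) = e2 (vb ρ y) + e2 (hb ρ y₂) := by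
      have : y₁ - (0, 1) = y₂ - (1, 0) := by rw [hy₁, hy₂]; abel
      simp only [hb, vb, e2_xor, ← hy₁, ← hy₂, this]
      abel
    have key : ∀ u v : Tor N, (∃ k, v = u + dir k) → Clus B x u → ¬ Clus B x v →
        e2 (hb ρ v) = 0 ∧ e2 (vb ρ v) = 0 := by
      intro u v huv hu hv
      have : ¬ B v := fun h => hv (hu.step h huv)
      rw [(hB v this).1, (hB v this).2]
      exact ⟨rfl, rfl⟩
    have k1 := key y y₁ ⟨1, by simp [hy₁, dir, sub_eq_add_neg]⟩
    have k2 := key y y₂ ⟨3, by simp [hy₂, dir, sub_eq_add_neg]⟩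
    have k3 := key y₁ y ⟨0, by simp [hy₁, dir]⟩
    have k4 := key y₂ y ⟨2, by simp [hy₂, dir]⟩
    have k5 := key y₁ y₂ ⟨4, by simp [hy₁, hy₂, dir, sub_eq_add_neg, Prod.ext_iff]⟩
    have k6 := key y₂ y₁ ⟨5, by simp [hy₁, hy₂, dir, sub_eq_add_neg, Prod.ext_iff]⟩
    by_cases c0 : Clus B x y <;> by_cases c1 : Clus B x y₁ <;> by_cases c2 : Clus B x y₂ <;>
      simp only [c0, c1, c2, if_true, if_false, not_true_eq_false, not_false_eq_true,
        forall_true_left, forall_false] at * <;>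
      simp_all
  obtain ⟨η, hη⟩ := exact_of_closed (A := ZMod 2)
    (fun y => if Clus B x y then e2 (hb ρ y) else 0)
    (fun y => if Clus B x y then e2 (vb ρ y) else 0) hcl i₀ j₀
    (fun i => by simp [hrow]) (fun j => by simp [hcol])
  choose s hs using fun y => e2_surj (η y)
  refine ⟨s, fun z => ⟨fun h => ⟨e2_inj ?_, e2_inj ?_⟩, fun h => ⟨e2_inj ?_, e2_inj ?_⟩⟩⟩
  · rw [hb, e2_xor, hs, hs, (hη z).1, if_pos h]
  · rw [vb, e2_xor, hs, hs, (hη z).2, if_pos h]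
  · rw [hb, e2_xor, hs, hs, (hη z).1, if_neg h]; rfl
  · rw [vb, e2_xor, hs, hs, (hη z).2, if_neg h]; rfl

/-! ### Swapping two copies inside a cluster -/

/-- Sites that are bad in at least one of the two copies. -/
def PBad (σ τ : Tor N → Bool) (y : Tor N) : Prop := Bad σ y ∨ Bad τ y

/-- The sitewise product of two spin configurations. -/
def xr (σ τ : Tor N → Bool) : Tor N → Bool := fun y => xor (σ y) (τ y)

lemma hb_xr (σ τ : Tor N → Bool) (y) : hb (xr σ τ) y = xor (hb σ y) (hb τ y) := by
  simp only [hb, xr]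
  generalize σ y = a, τ y = b, σ (y - (1, 0)) = c, τ (y - (1, 0)) = d
  revert a b c d; decide

lemma vb_xr (σ τ : Tor N → Bool) (y) : vb (xr σ τ) y = xor (vb σ y) (vb τ y) := by
  simp only [vb, xr]
  generalize σ y = a, τ y = b, σ (y - (0, 1)) = c, τ (y - (0, 1)) = d
  revert a b c d; decide

open Classical in
/-- A configuration whose walls are those of `ρ` inside `K`, if there is one. -/
noncomputable def flip (K : Tor N → Prop) (ρ : Tor N → Bool) : Tor N → Bool :=
  if h : ∃ η, IsFlip K ρ η then h.choose else fun _ => false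

/-- The two copies can be exchanged on the cluster of `x` without affecting `y`. -/
def Swappable (x y : Tor N) (p : (Tor N → Bool) × (Tor N → Bool)) : Prop :=
  (∃ η, IsFlip (Clus (PBad p.1 p.2) x) (xr p.1 p.2) η) ∧ ¬ Clus (PBad p.1 p.2) x y

/-- Exchanges the domain walls of the two copies on the cluster of `x`. -/
noncomputable def swp (x : Tor N) (p : (Tor N → Bool) × (Tor N → Bool)) :
    (Tor N → Bool) × (Tor N → Bool) :=
  (xr p.1 (flip (Clus (PBad p.1 p.2) x) (xr p.1 p.2)),
    xr p.2 (flip (Clus (PBad p.1 p.2) x) (xr p.1 p.2)))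

lemma xr_xr (σ τ η : Tor N → Bool) : xr (xr σ η) (xr τ η) = xr σ τ := by
  funext y
  simp only [xr]
  generalize σ y = a, τ y = b, η y = c
  revert a b c; decide

lemma xr_cancel (σ η : Tor N → Bool) : xr (xr σ η) η = σ := by
  funext y
  simp only [xr]
  generalize σ y = a, η y = c
  revert a c; decide

/-- On the cluster the bond variables of the two copies are exchanged. -/
lemma swp_mem {x y : Tor N} {p : (Tor N → Bool) × (Tor N → Bool)} (h : Swappable x y p)
    {z : Tor N} (hz : Clus (PBad p.1 p.2) x z) :
    (hb (swp x p).1 z = hb p.2 z ∧ vb (swp x p).1 z = vb p.2 z) ∧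
      (hb (swp x p).2 z = hb p.1 z ∧ vb (swp x p).2 z = vb p.1 z) := by
  have hf := ((h.1.choose_spec z).1 hz)
  simp only [swp, flip, dif_pos h.1, hb_xr, vb_xr, hf.1, hf.2]
  generalize hb p.1 z = a, hb p.2 z = b, vb p.1 z = c, vb p.2 z = d
  revert a b c d; decide

/-- Off the cluster the bond variables are unchanged. -/
lemma swp_notMem {x y : Tor N} {p : (Tor N → Bool) × (Tor N → Bool)} (h : Swappable x y p)
    {z : Tor N} (hz : ¬ Clus (PBad p.1 p.2) x z) :
    (hb (swp x p).1 z = hb p.1 z ∧ vb (swp x p).1 z = vb p.1 z) ∧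
      (hb (swp x p).2 z = hb p.2 z ∧ vb (swp x p).2 z = vb p.2 z) := by
  have hf := ((h.1.choose_spec z).2 hz)
  simp [swp, flip, dif_pos h.1, hb_xr, vb_xr, hf.1, hf.2]

lemma swp_PBad {x y : Tor N} {p : (Tor N → Bool) × (Tor N → Bool)} (h : Swappable x y p) :
    PBad (swp x p).1 (swp x p).2 = PBad p.1 p.2 := by
  funext z
  by_cases hz : Clus (PBad p.1 p.2) x z
  · obtain ⟨⟨h1, h2⟩, h3, h4⟩ := swp_mem h hz
    simp only [PBad, Bad, h1, h2, h3, h4, or_comm]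
  · obtain ⟨⟨h1, h2⟩, h3, h4⟩ := swp_notMem h hz
    simp only [PBad, Bad, h1, h2, h3, h4]

lemma swp_xr (x : Tor N) (p : (Tor N → Bool) × (Tor N → Bool)) :
    xr (swp x p).1 (swp x p).2 = xr p.1 p.2 := xr_xr _ _ _

lemma swp_swappable {x y : Tor N} {p : (Tor N → Bool) × (Tor N → Bool)} (h : Swappable x y p) :
    Swappable x y (swp x p) := by
  unfold Swappable
  rw [swp_PBad h, swp_xr]
  exact h

lemma swp_swp {x y : Tor N} {p : (Tor N → Bool) × (Tor N → Bool)} (h : Swappable x y p) :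
    swp x (swp x p) = p := by
  rw [swp, swp_PBad h, swp_xr]
  simp only [swp, xr_cancel]

/-- The sum of a local observable difference over swappable pairs cancels: the swap preserves the
weights and the difference at `y`, and reverses the sign of the difference at `x`. -/
lemma sum_swappable [NeZero N] (w g : Bool → Bool → ℝ) (x y : Tor N)
    [DecidablePred (Swappable x y)] :
    ∑ p : (Tor N → Bool) × (Tor N → Bool) with Swappable x y p, wt w p.1 * wt w p.2 *
      ((g (hb p.1 x) (vb p.1 x) - g (hb p.2 x) (vb p.2 x)) *
        (g (hb p.1 y) (vb p.1 y) - g (hb p.2 y) (vb p.2 y))) = 0 := by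
  have hadd : ∀ p : (Tor N → Bool) × (Tor N → Bool), Swappable x y p →
      wt w p.1 * wt w p.2 *
      ((g (hb p.1 x) (vb p.1 x) - g (hb p.2 x) (vb p.2 x)) *
        (g (hb p.1 y) (vb p.1 y) - g (hb p.2 y) (vb p.2 y))) =
      -(wt w (swp x p).1 * wt w (swp x p).2 *
      ((g (hb (swp x p).1 x) (vb (swp x p).1 x) - g (hb (swp x p).2 x) (vb (swp x p).2 x)) *
        (g (hb (swp x p).1 y) (vb (swp x p).1 y)
          - g (hb (swp x p).2 y) (vb (swp x p).2 y)))) := by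
    intro p h
    have hwt : wt w (swp x p).1 * wt w (swp x p).2 = wt w p.1 * wt w p.2 := by
      simp only [wt, ← Finset.prod_mul_distrib]
      refine Finset.prod_congr rfl fun z _ => ?_
      by_cases hz : Clus (PBad p.1 p.2) x z
      · obtain ⟨⟨h1, h2⟩, h3, h4⟩ := swp_mem h hz
        rw [h1, h2, h3, h4, mul_comm]
      · obtain ⟨⟨h1, h2⟩, h3, h4⟩ := swp_notMem h hz
        rw [h1, h2, h3, h4]
    have hx : g (hb (swp x p).1 x) (vb (swp x p).1 x) - g (hb (swp x p).2 x) (vb (swp x p).2 x) =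
        -(g (hb p.1 x) (vb p.1 x) - g (hb p.2 x) (vb p.2 x)) := by
      by_cases hz : Clus (PBad p.1 p.2) x x
      · obtain ⟨⟨h1, h2⟩, h3, h4⟩ := swp_mem h hz
        rw [h1, h2, h3, h4, neg_sub]
      · have hB : ¬ PBad p.1 p.2 x := fun hB => hz ⟨hB, SimpleGraph.Reachable.refl x⟩
        obtain ⟨⟨h1, h2⟩, h3, h4⟩ := swp_notMem h hz
        simp only [PBad, Bad, not_or, Bool.not_eq_true] at hB
        rw [h1, h2, h3, h4, hB.1.1, hB.1.2, hB.2.1, hB.2.2]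
        simp
    obtain ⟨⟨h1, h2⟩, h3, h4⟩ := swp_notMem h h.2
    rw [hwt, hx, h1, h2, h3, h4]
    ring
  have h2 : ∀ S : ℝ, S = -S → S = 0 := fun S h => by linarith
  apply h2
  rw [← Finset.sum_neg_distrib]
  refine Finset.sum_nbij' (swp x) (swp x) ?_ ?_ ?_ ?_ ?_
  · intro p hp
    simp only [Finset.mem_filter, Finset.mem_univ, true_and] at hp ⊢
    exact swp_swappable hp
  · intro p hp
    simp only [Finset.mem_filter, Finset.mem_univ, true_and] at hp ⊢
    exact swp_swappable hp
  · intro p hp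
    exact swp_swp (Finset.mem_filter.1 hp).2
  · intro p hp
    exact swp_swp (Finset.mem_filter.1 hp).2
  · intro p hp
    exact hadd p (Finset.mem_filter.1 hp).2

/-! ### Long clusters are unlikely -/

/-- Distance from `0` on the cycle. -/
def cd (z : ZMod N) : ℕ := z.valMinAbs.natAbs

/-- The `ℓ¹` distance from `0` on the torus. -/
def td (z : Tor N) : ℕ := cd z.1 + cd z.2

lemma cd_add_le (a b : ZMod N) : cd (a + b) ≤ cd a + cd b :=
  (ZMod.natAbs_valMinAbs_add_le a b).trans (Int.natAbs_add_le _ _)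

lemma cd_one [NeZero N] : cd (1 : ZMod N) ≤ 1 := by
  unfold cd
  rcases Nat.lt_or_ge 1 N with h | h
  · have := ZMod.valMinAbs_natCast_of_le_half (n := N) (a := 1) (by omega)
    rw [Nat.cast_one] at this
    simp [this]
  · exact (ZMod.natAbs_valMinAbs_le _).trans (by omega)

lemma cd_dir [NeZero N] (k : Fin 6) :
    cd (dir k : Tor N).1 ≤ 1 ∧ cd (dir k : Tor N).2 ≤ 1 := by
  have h1 : cd (1 : ZMod N) ≤ 1 := cd_one
  have h2 : cd (-1 : ZMod N) ≤ 1 := by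
    unfold cd; rw [ZMod.natAbs_valMinAbs_neg]; exact h1
  have h0 : cd (0 : ZMod N) ≤ 1 := by simp [cd]
  fin_cases k <;> simp [dir, h0, h1, h2]

/-- The position after `k` steps of the walk from `x` with directions `s`. -/
def wpos {n : ℕ} (x : Tor N) (s : Fin n → Fin 6) (k : ℕ) : Tor N :=
  x + ∑ i ∈ Finset.range k, if h : i < n then dir (s ⟨i, h⟩) else 0

/-- A point of the cluster of `x` is reached by a self-avoiding walk of bad sites, whose length is
at least the distance in each coordinate; all its initial segments are such walks too. -/
lemma Clus.exists_walk [NeZero N] {B : Tor N → Prop} {x z : Tor N} (h : Clus B x z) :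
    ∃ l : ℕ, cd (z.1 - x.1) ≤ l ∧ cd (z.2 - x.2) ≤ l ∧ ∀ n ≤ l, ∃ s : Fin n → Fin 6,
      Set.InjOn (wpos x s) (Finset.range (n + 1)) ∧ ∀ k ∈ Finset.range (n + 1), B (wpos x s k) := by
  obtain ⟨hx, hr⟩ := h
  obtain ⟨p, hp⟩ := hr.exists_isPath
  have hstep : ∀ i : Fin p.length, ∃ k, p.getVert (i + 1) = p.getVert i + dir k :=
    fun i => (p.adj_getVert_succ i.2).2.2.2
  choose S hS using hstep
  have hd : ∀ k ≤ p.length, cd ((p.getVert k).1 - x.1) ≤ k ∧ cd ((p.getVert k).2 - x.2) ≤ k := by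
    intro k
    induction k with
    | zero => intro _; simp [cd]
    | succ k ih =>
      intro hk
      obtain ⟨h1, h2⟩ := ih (by omega)
      have e := hS ⟨k, hk⟩
      obtain ⟨d1, d2⟩ := cd_dir (N := N) (S ⟨k, hk⟩)
      simp only at e
      rw [e, Prod.fst_add, Prod.snd_add, add_sub_right_comm, add_sub_right_comm]
      exact ⟨(cd_add_le _ _).trans (by omega), (cd_add_le _ _).trans (by omega)⟩
  have hl := hd p.length le_rfl
  rw [p.getVert_length] at hl
  refine ⟨p.length, hl.1, hl.2, fun n hn => ⟨fun i => S ⟨i, by omega⟩, ?_⟩⟩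
  have hw : ∀ k ≤ n, wpos x (fun i : Fin n => S ⟨i, by omega⟩) k = p.getVert k := by
    intro k
    induction k with
    | zero => intro _; simp [wpos]
    | succ k ih =>
      intro hk
      have := ih (by omega)
      rw [wpos] at this ⊢
      rw [Finset.sum_range_succ, ← add_assoc, this, dif_pos (by omega)]
      exact (hS ⟨k, by omega⟩).symm
  have hB : ∀ k ≤ p.length, B (p.getVert k) := by
    intro k hk
    cases k with
    | zero => simpa using hx
    | succ k => exact (p.adj_getVert_succ (by omega : k < p.length)).2.2.1
  constructor
  · intro a ha b hb hab
    simp only [Finset.coe_range, Set.mem_Iio] at ha hb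
    rw [hw a (by omega), hw b (by omega)] at hab
    exact hp.getVert_injOn (by simp; omega) (by simp; omega) hab
  · intro k hk
    rw [Finset.mem_range] at hk
    rw [hw k (by omega)]
    exact hB k (by omega)

/-- The walk from `x` with directions `s` is self-avoiding and runs through bad sites only. -/
def BadWalk {n : ℕ} (x : Tor N) (s : Fin n → Fin 6) (p : (Tor N → Bool) × (Tor N → Bool)) : Prop :=
  Set.InjOn (wpos x s) (Finset.range (n + 1)) ∧
    ∀ k ∈ Finset.range (n + 1), PBad p.1 p.2 (wpos x s k)

/-- If the swap at `x` is impossible or moves `y`, the cluster of `x` is long: it contains `y`, or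
it meets every row, or it meets every column. -/
lemma exists_walk_of_not_swappable [NeZero N] {x y : Tor N}
    {p : (Tor N → Bool) × (Tor N → Bool)} (h : ¬ Swappable x y p) :
    ∃ s : Fin ((td (y - x) + 1) / 2) → Fin 6, BadWalk x s p := by
  by_cases hy : Clus (PBad p.1 p.2) x y
  · obtain ⟨l, h1, h2, h3⟩ := hy.exists_walk
    refine h3 _ ?_
    simp only [td, Prod.fst_sub, Prod.snd_sub]
    omega
  · have hno : ¬ ∃ η, IsFlip (Clus (PBad p.1 p.2) x) (xr p.1 p.2) η := fun hη => h ⟨hη, hy⟩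
    have hfar : ∃ z, Clus (PBad p.1 p.2) x z ∧
        (z.1 - x.1 = ((N / 2 : ℕ) : ZMod N) ∨ z.2 - x.2 = ((N / 2 : ℕ) : ZMod N)) := by
      by_contra hcon
      push Not at hcon
      refine hno (exists_flip _ _ ?_ x (x.1 + (N / 2 : ℕ)) (x.2 + (N / 2 : ℕ)) ?_ ?_)
      · intro z hz
        simp only [PBad, Bad, not_or, Bool.not_eq_true] at hz
        simp [hb_xr, vb_xr, hz]
      · intro i hi
        exact (hcon _ hi).2 (by simp)
      · intro j hj
        exact (hcon _ hj).1 (by simp)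
    have hhalf : cd ((N / 2 : ℕ) : ZMod N) = N / 2 := by
      rw [cd, ZMod.valMinAbs_natCast_of_le_half le_rfl, Int.natAbs_natCast]
    obtain ⟨z, hz, hzx⟩ := hfar
    obtain ⟨l, h1, h2, h3⟩ := hz.exists_walk
    refine h3 _ ?_
    have b1 : cd (y - x).1 ≤ N / 2 := ZMod.natAbs_valMinAbs_le _
    have b2 : cd (y - x).2 ≤ N / 2 := ZMod.natAbs_valMinAbs_le _
    rw [td]
    rcases hzx with e | e
    · rw [e, hhalf] at h1; omega
    · rw [e, hhalf] at h2; omega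

open Classical in
/-- A union bound over the `6 ^ n` walks of length `n`, about half the distance from `x` to `y`,
against the Peierls bound for two copies: `M ≥ 384` makes `6 * (16 / M) ≤ (1 / 2) ^ 2`. -/
lemma LowTemp.not_swappable_le [NeZero N] {M : ℝ} (hM : 384 ≤ M) {w : Bool → Bool → ℝ}
    (hw : LowTemp M w) (x y : Tor N) :
    ∑ p : (Tor N → Bool) × (Tor N → Bool) with ¬ Swappable x y p, wt w p.1 * wt w p.2 ≤
      (1 / 2) ^ td (y - x) * (Zw N w * Zw N w) := by
  set n := (td (y - x) + 1) / 2 with hn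
  have hZ := hw.Zw_pos (N := N)
  have hM0 : 0 < M := by linarith
  have hnn : ∀ (s : Fin n → Fin 6) (p : (Tor N → Bool) × (Tor N → Bool)),
      0 ≤ if BadWalk x s p then wt w p.1 * wt w p.2 else 0 := by
    intro s p
    have := hw.wt_pos p.1
    have := hw.wt_pos p.2
    split_ifs <;> positivity
  calc _ ≤ ∑ p : (Tor N → Bool) × (Tor N → Bool), ∑ s : Fin n → Fin 6,
        (if BadWalk x s p then wt w p.1 * wt w p.2 else 0) := by
        rw [Finset.sum_filter]
        refine Finset.sum_le_sum fun p _ => ?_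
        split_ifs with h
        · exact Finset.sum_nonneg fun s _ => hnn s p
        · obtain ⟨s, hs⟩ := exists_walk_of_not_swappable h
          refine le_trans ?_ (Finset.single_le_sum (fun s _ => hnn s p) (Finset.mem_univ s))
          rw [if_pos hs]
    _ = ∑ s : Fin n → Fin 6, ∑ p : (Tor N → Bool) × (Tor N → Bool),
        (if BadWalk x s p then wt w p.1 * wt w p.2 else 0) :=
        Finset.sum_comm
    _ ≤ ∑ s : Fin n → Fin 6, (16 / M) ^ (n + 1) * (Zw N w * Zw N w) := by
        refine Finset.sum_le_sum fun s _ => ?_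
        by_cases hs : Set.InjOn (wpos x s) (Finset.range (n + 1))
        · have h := hw.peierls_pair hM ((Finset.range (n + 1)).image (wpos x s))
          rw [Finset.card_image_of_injOn hs, Finset.card_range] at h
          rw [Fintype.sum_prod_type]
          refine le_trans (le_of_eq ?_) h
          refine Finset.sum_congr rfl fun σ _ => Finset.sum_congr rfl fun τ _ => ?_
          refine if_congr ?_ rfl rfl
          rw [Finset.forall_mem_image]
          exact and_iff_right hs
        · have hs' : ∀ p, ¬ BadWalk x s p := fun p h => hs h.1
          simp only [hs', if_false, Finset.sum_const_zero]
          positivity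
    _ = (96 / M) ^ n * (16 / M) * (Zw N w * Zw N w) := by
        rw [Finset.sum_const, Finset.card_univ, Fintype.card_fun, Fintype.card_fin,
          Fintype.card_fin, nsmul_eq_mul]
        have e : 96 / M = 6 * (16 / M) := by ring
        rw [e, mul_pow]
        push_cast
        ring
    _ ≤ (1 / 2) ^ td (y - x) * (Zw N w * Zw N w) := by
        refine mul_le_mul_of_nonneg_right ?_ (by positivity)
        have h1 : 96 / M ≤ 1 / 4 := by rw [div_le_div_iff₀ hM0 (by norm_num)]; linarith
        have h2 : 16 / M ≤ 1 := by rw [div_le_one hM0]; linarith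
        calc (96 / M) ^ n * (16 / M) ≤ (1 / 4) ^ n * 1 :=
              mul_le_mul (pow_le_pow_left₀ (by positivity) h1 n) h2 (by positivity) (by positivity)
          _ = (1 / 2) ^ (2 * n) := by rw [mul_one, pow_mul]; norm_num
          _ ≤ (1 / 2) ^ td (y - x) :=
              pow_le_pow_of_le_one (by norm_num) (by norm_num) (by omega)

/-! ### The variance bound -/

lemma sum_cd_le [NeZero N] : ∑ i : ZMod N, (1 / 2 : ℝ) ^ cd i ≤ 4 := by
  have hv : ∑ i : ZMod N, (1 / 2 : ℝ) ^ i.val ≤ 2 := by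
    have : ∑ i : ZMod N, (1 / 2 : ℝ) ^ i.val = ∑ t ∈ Finset.range N, (1 / 2 : ℝ) ^ t := by
      refine Finset.sum_nbij' (fun i => i.val) (fun t => (t : ZMod N)) ?_ ?_ ?_ ?_ ?_
      · intro i _; simpa using ZMod.val_lt i
      · simp
      · intro i _; exact ZMod.natCast_zmod_val i
      · intro t ht; exact ZMod.val_natCast_of_lt (Finset.mem_range.1 ht)
      · simp
    rw [this]
    exact (Summable.sum_le_tsum _ (fun _ _ => by positivity) summable_geometric_two).trans_eq
      tsum_geometric_two
  have hv' : ∑ i : ZMod N, (1 / 2 : ℝ) ^ (-i).val ≤ 2 := by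
    exact (Equiv.sum_comp (Equiv.neg (ZMod N)) fun i : ZMod N => (1 / 2 : ℝ) ^ i.val).trans_le hv
  calc _ ≤ ∑ i : ZMod N, ((1 / 2 : ℝ) ^ i.val + (1 / 2 : ℝ) ^ (-i).val) := by
        refine Finset.sum_le_sum fun i _ => ?_
        rw [cd, ZMod.valMinAbs_natAbs_eq_min]
        rcases min_choice i.val (N - i.val) with h | h
        · rw [h]; simp
        · rw [h]
          have : (-i).val ≤ N - i.val := by
            rw [ZMod.neg_val]; split_ifs <;> omega
          have := pow_le_pow_of_le_one (a := (1 / 2 : ℝ)) (by norm_num) (by norm_num) this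
          have : (0 : ℝ) ≤ (1 / 2 : ℝ) ^ i.val := by positivity
          linarith
    _ ≤ 4 := by rw [Finset.sum_add_distrib]; linarith

lemma sum_td_le [NeZero N] (x : Tor N) : ∑ y : Tor N, (1 / 2 : ℝ) ^ td (y - x) ≤ 16 := by
  refine ((Equiv.subRight x).sum_comp fun y => (1 / 2 : ℝ) ^ td y).trans_le ?_
  rw [Fintype.sum_prod_type]
  simp only [td, pow_add]
  rw [← Finset.sum_mul_sum]
  have h := sum_cd_le (N := N)
  have h0 : 0 ≤ ∑ i : ZMod N, (1 / 2 : ℝ) ^ cd i := Finset.sum_nonneg fun _ _ => by positivity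
  nlinarith

/-- The sum over the torus of a local observable of the bond variables. -/
noncomputable def tot [NeZero N] (g : Bool → Bool → ℝ) (σ : Tor N → Bool) : ℝ :=
  ∑ y, g (hb σ y) (vb σ y)

/-- Decay of covariances, for pairs of copies. -/
lemma LowTemp.cov_le [NeZero N] {M : ℝ} (hM : 384 ≤ M) {w : Bool → Bool → ℝ}
    (hw : LowTemp M w) (g : Bool → Bool → ℝ) {c : ℝ}
    (hg : ∀ a b a' b', |g a b - g a' b'| ≤ c) (x y : Tor N) :
    ∑ p : (Tor N → Bool) × (Tor N → Bool), wt w p.1 * wt w p.2 *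
      ((g (hb p.1 x) (vb p.1 x) - g (hb p.2 x) (vb p.2 x)) *
        (g (hb p.1 y) (vb p.1 y) - g (hb p.2 y) (vb p.2 y))) ≤
      c ^ 2 * ((1 / 2) ^ td (y - x) * (Zw N w * Zw N w)) := by
  classical
  have hc : 0 ≤ c := (abs_nonneg _).trans (hg true true true true)
  rw [← Finset.sum_filter_add_sum_filter_not Finset.univ (Swappable x y),
    sum_swappable w g x y, zero_add]
  refine le_trans ?_ (mul_le_mul_of_nonneg_left (hw.not_swappable_le hM x y) (sq_nonneg c))
  rw [Finset.mul_sum]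
  refine Finset.sum_le_sum fun p _ => ?_
  rw [mul_comm (c ^ 2)]
  refine mul_le_mul_of_nonneg_left ?_ (mul_nonneg (hw.wt_pos _).le (hw.wt_pos _).le)
  refine (le_abs_self _).trans ?_
  rw [abs_mul, sq]
  exact mul_le_mul (hg _ _ _ _) (hg _ _ _ _) (abs_nonneg _) hc

lemma LowTemp.var_le [NeZero N] {M : ℝ} (hM : 384 ≤ M) {w : Bool → Bool → ℝ}
    (hw : LowTemp M w) (g : Bool → Bool → ℝ) {c : ℝ}
    (hg : ∀ a b a' b', |g a b - g a' b'| ≤ c) :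
    ∑ p : (Tor N → Bool) × (Tor N → Bool), wt w p.1 * wt w p.2 * (tot g p.1 - tot g p.2) ^ 2 ≤
      (4 * c * N * Zw N w) ^ 2 := by
  have hZ := hw.Zw_pos (N := N)
  calc _ = ∑ x : Tor N, ∑ y : Tor N, ∑ p : (Tor N → Bool) × (Tor N → Bool), wt w p.1 * wt w p.2 *
      ((g (hb p.1 x) (vb p.1 x) - g (hb p.2 x) (vb p.2 x)) *
        (g (hb p.1 y) (vb p.1 y) - g (hb p.2 y) (vb p.2 y))) := by
        symm
        simp_rw [Finset.sum_comm (s := (Finset.univ : Finset (Tor N)))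
          (t := (Finset.univ : Finset ((Tor N → Bool) × (Tor N → Bool))))]
        refine Finset.sum_congr rfl fun p _ => ?_
        rw [sq, tot, tot, ← Finset.sum_sub_distrib, Finset.sum_mul_sum, Finset.mul_sum]
        simp only [Finset.mul_sum]
    _ ≤ ∑ x : Tor N, ∑ y : Tor N, c ^ 2 * ((1 / 2) ^ td (y - x) * (Zw N w * Zw N w)) :=
        Finset.sum_le_sum fun x _ => Finset.sum_le_sum fun y _ => hw.cov_le hM g hg x y
    _ ≤ ∑ x : Tor N, c ^ 2 * (16 * (Zw N w * Zw N w)) := by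
        refine Finset.sum_le_sum fun x _ => ?_
        rw [← Finset.mul_sum, ← Finset.sum_mul]
        have := sum_td_le x
        gcongr
    _ = (4 * c * N * Zw N w) ^ 2 := by
        rw [Finset.sum_const, Finset.card_univ, Fintype.card_prod, ZMod.card, nsmul_eq_mul]
        push_cast
        ring

/-- Cauchy–Schwarz turns the variance bound into a first-moment bound. -/
lemma LowTemp.abs_le [NeZero N] {M : ℝ} (hM : 384 ≤ M) {w : Bool → Bool → ℝ}
    (hw : LowTemp M w) (g : Bool → Bool → ℝ) {c : ℝ}
    (hg : ∀ a b a' b', |g a b - g a' b'| ≤ c) :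
    ∑ p : (Tor N → Bool) × (Tor N → Bool), wt w p.1 * wt w p.2 * |tot g p.1 - tot g p.2| ≤
      4 * c * N * (Zw N w * Zw N w) := by
  have hc : 0 ≤ c := (abs_nonneg _).trans (hg true true true true)
  have hZ := hw.Zw_pos (N := N)
  refine le_of_sq_le_sq ?_ (by positivity)
  have hcs := Finset.sum_sq_le_sum_mul_sum_of_sq_le_mul
    (Finset.univ : Finset ((Tor N → Bool) × (Tor N → Bool)))
    (r := fun p => wt w p.1 * wt w p.2 * |tot g p.1 - tot g p.2|)
    (f := fun p => wt w p.1 * wt w p.2)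
    (g := fun p => wt w p.1 * wt w p.2 * (tot g p.1 - tot g p.2) ^ 2)
    (fun p _ => mul_nonneg (hw.wt_pos _).le (hw.wt_pos _).le)
    (fun p _ => mul_nonneg (mul_nonneg (hw.wt_pos _).le (hw.wt_pos _).le) (sq_nonneg _))
    (fun p _ => by rw [mul_pow, sq_abs]; exact le_of_eq (by ring))
  refine hcs.trans ?_
  have e : ∑ p : (Tor N → Bool) × (Tor N → Bool), wt w p.1 * wt w p.2 = Zw N w * Zw N w := by
    rw [Fintype.sum_prod_type, Zw, Finset.sum_mul_sum]
  rw [e]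
  refine (mul_le_mul_of_nonneg_left (hw.var_le hM g hg) (by positivity)).trans_eq (by ring)

/-! ### Interpolation -/

/-- If tilting the weights `A` by `exp (s * G)` keeps the mean of `|G i - G j|` over independent
pairs below `C` for all `0 < s < 1`, then the normalised weights at `s = 0` and `s = 1` are at
`ℓ¹`-distance at most `C`. -/
lemma sum_abs_le_of_tilt {ι : Type*} [Fintype ι] [Nonempty ι] (A G : ι → ℝ) (hA : ∀ i, 0 < A i)
    (C : ℝ)
    (h : ∀ s ∈ Set.Ioo (0 : ℝ) 1, ∑ p : ι × ι, (A p.1 * exp (s * G p.1)) * (A p.2 * exp (s * G p.2))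
      * |G p.1 - G p.2| ≤ C * ((∑ i, A i * exp (s * G i)) * ∑ i, A i * exp (s * G i))) :
    ∑ i, |A i * exp (G i) / (∑ j, A j * exp (G j)) - A i / ∑ j, A j| ≤ C := by
  set Z : ℝ → ℝ := fun s => ∑ i, A i * exp (s * G i) with hZ
  have hZpos : ∀ s, 0 < Z s := fun s =>
    Finset.sum_pos (fun i _ => mul_pos (hA i) (exp_pos _)) Finset.univ_nonempty
  -- test against the signs `ε` of the difference, and apply the mean value theorem
  set ε : ι → ℝ := fun i =>
    if 0 ≤ A i * exp (G i) / (∑ j, A j * exp (G j)) - A i / ∑ j, A j then 1 else -1 with hε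
  have hε1 : ∀ i, |ε i| = 1 := by
    intro i; simp only [hε]; split_ifs <;> simp
  have hεm : ∀ i, |A i * exp (G i) / (∑ j, A j * exp (G j)) - A i / ∑ j, A j| =
      ε i * (A i * exp (G i) / (∑ j, A j * exp (G j)) - A i / ∑ j, A j) := by
    intro i; simp only [hε]; split_ifs with h0
    · rw [abs_of_nonneg h0, one_mul]
    · rw [abs_of_neg (not_le.1 h0)]; ring
  set U : ℝ → ℝ := fun s => ∑ i, ε i * (A i * exp (s * G i)) with hU
  have hd : ∀ (i : ι) (s : ℝ), HasDerivAt (fun s => A i * exp (s * G i))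
      (A i * exp (s * G i) * G i) s := by
    intro i s
    exact ((hasDerivAt_mul_const (x := s) (G i)).exp.const_mul (A i)).congr_deriv (by ring)
  have hdZ : ∀ s, HasDerivAt Z (∑ i, A i * exp (s * G i) * G i) s := fun s =>
    HasDerivAt.fun_sum fun i _ => hd i s
  have hdU : ∀ s, HasDerivAt U (∑ i, ε i * (A i * exp (s * G i) * G i)) s := fun s =>
    HasDerivAt.fun_sum fun i _ => (hd i s).const_mul (ε i)
  have hdF := fun s => (hdU s).div (hdZ s) (hZpos s).ne'
  obtain ⟨s, hs, e⟩ := exists_hasDerivAt_eq_slope (fun s => U s / Z s) _ (zero_lt_one' ℝ)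
    (fun s _ => (hdF s).continuousAt.continuousWithinAt) (fun s _ => hdF s)
  have lhs : ∑ i, |A i * exp (G i) / (∑ j, A j * exp (G j)) - A i / ∑ j, A j| =
      U 1 / Z 1 - U 0 / Z 0 := by
    simp only [hεm, hU, hZ, one_mul, zero_mul, exp_zero, mul_one, Finset.sum_div]
    rw [← Finset.sum_sub_distrib]
    refine Finset.sum_congr rfl fun i _ => ?_
    ring
  rw [lhs]
  rw [sub_zero, div_one] at e
  rw [← e, div_le_iff₀ (pow_pos (hZpos s) 2), sq]
  refine le_trans ?_ (h s hs)
  calc _ = ∑ p : ι × ι, (A p.1 * exp (s * G p.1)) * (A p.2 * exp (s * G p.2)) *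
        (ε p.1 * (G p.1 - G p.2)) := by
        simp only [hU, hZ, Finset.sum_mul_sum]
        rw [Fintype.sum_prod_type, ← Finset.sum_sub_distrib]
        refine Finset.sum_congr rfl fun i _ => ?_
        rw [← Finset.sum_sub_distrib]
        refine Finset.sum_congr rfl fun j _ => ?_
        ring
    _ ≤ _ := by
        refine Finset.sum_le_sum fun p _ => ?_
        refine mul_le_mul_of_nonneg_left ?_
          (mul_pos (mul_pos (hA _) (exp_pos _)) (mul_pos (hA _) (exp_pos _))).le
        refine (le_abs_self _).trans ?_
        rw [abs_mul, hε1, one_mul]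

/-! ### The two measures -/

/-- The sum of the two bond products `σ_y σ_{y←} + σ_y σ_{y↓}`, from the disagreement bits. -/
noncomputable def en (a b : Bool) : ℝ := -(sgn a + sgn b)

/-- The logarithm of the factor `1 + δ exp (-2J σ_y (σ_{y←} + σ_{y↓}))`. -/
noncomputable def lg (J δ : ℝ) (a b : Bool) : ℝ := log (1 + δ * exp (-(2 * J * en a b)))

/-- Local weights interpolating between the Gibbs measure (`s = 0`) and `π` (`s = 1`). -/
noncomputable def ws (J δ s : ℝ) (a b : Bool) : ℝ := exp (J * en a b) * exp (s * lg J δ a b)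

lemma en_cases (a b : Bool) : (a = false ∧ b = false ∧ en a b = 2) ∨ en a b = 0 ∨ en a b = -2 := by
  cases a <;> cases b <;> norm_num [en, sgn]

lemma lg_nonneg {J δ : ℝ} (hδ : 0 < δ) (a b : Bool) : 0 ≤ lg J δ a b :=
  log_nonneg (by have := exp_pos (-(2 * J * en a b)); nlinarith)

lemma lg_le {J δ : ℝ} (hJ : 0 < J) (hδ : 0 < δ) (a b : Bool) : lg J δ a b ≤ δ * exp (4 * J) := by
  have h : exp (-(2 * J * en a b)) ≤ exp (4 * J) := by
    apply exp_le_exp.2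
    rcases en_cases a b with ⟨-, -, h⟩ | h | h <;> rw [h] <;> linarith
  have hp := exp_pos (-(2 * J * en a b))
  rw [lg]
  refine (log_le_sub_one_of_pos (by positivity)).trans ?_
  have := mul_le_mul_of_nonneg_left h hδ.le
  linarith

lemma ws_lowTemp {J δ s : ℝ} (hJ : 0 < J) (hδ : 0 < δ) (hδJ : δ * exp (2 * J) ≤ 1)
    (hs : s ∈ Set.Ioo (0 : ℝ) 1) : LowTemp (exp (2 * J)) (ws J δ s) where
  pos a b := mul_pos (exp_pos _) (exp_pos _)
  good := by
    have : en false false = 2 := by norm_num [en, sgn]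
    rw [ws, this, mul_comm J]
    refine le_mul_of_one_le_right (exp_pos _).le ?_
    exact one_le_exp (mul_nonneg hs.1.le (lg_nonneg hδ _ _))
  bad a b hab := by
    have h1 : exp (s * lg J δ a b) ≤ 1 + δ * exp (-(2 * J * en a b)) := by
      have hp : 0 < 1 + δ * exp (-(2 * J * en a b)) := by positivity
      calc exp (s * lg J δ a b) ≤ exp (lg J δ a b) := by
            apply exp_le_exp.2
            have := lg_nonneg (J := J) hδ a b
            nlinarith [hs.2]
        _ = _ := exp_log hp
    have h2 : ws J δ s a b ≤ exp (J * en a b) + δ * exp (-(J * en a b)) := by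
      refine (mul_le_mul_of_nonneg_left h1 (exp_pos _).le).trans_eq ?_
      rw [mul_add, mul_one, mul_left_comm, ← exp_add]
      ring_nf
    refine h2.trans ?_
    have hone : 1 ≤ exp (2 * J) := one_le_exp (by linarith)
    rcases en_cases a b with ⟨ha, hb, -⟩ | h | h
    · simp [ha, hb] at hab
    · rw [h]; simp only [mul_zero, neg_zero, exp_zero, mul_one]
      nlinarith
    · rw [h]
      have e1 : exp (J * -2) ≤ 1 := exp_le_one_iff.2 (by linarith)
      have e2 : -(J * -2) = 2 * J := by ring
      rw [e2]; linarith

lemma wt_ws [NeZero N] (J δ s : ℝ) (σ : Tor N → Bool) :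
    wt (ws J δ s) σ = exp (J * tot en σ) * exp (s * tot (lg J δ) σ) := by
  simp only [wt, ws, tot, Finset.prod_mul_distrib, ← exp_sum, Finset.mul_sum]

variable {L : ℕ} [NeZero L]

lemma sgn_mul_sgn (a b : Bool) : sgn a * sgn b = -sgn (xor a b) := by
  cases a <;> cases b <;> simp [sgn]

lemma spin_mul_left (σ : Cfg L) (y : Torus L) :
    spin σ y * spin σ (y - (1, 0)) = -sgn (hb σ y) :=
  sgn_mul_sgn _ _

lemma spin_mul_down (σ : Cfg L) (y : Torus L) :
    spin σ y * spin σ (y - (0, 1)) = -sgn (vb σ y) :=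
  sgn_mul_sgn _ _

lemma sum_up (f : Torus L → Torus L → ℝ) : ∑ x, f x (up x) = ∑ y, f (y - (0, 1)) y := by
  rw [← Equiv.sum_comp (Equiv.addRight ((0, 1) : Torus L)) fun y => f (y - (0, 1)) y]
  refine Finset.sum_congr rfl fun x _ => ?_
  have : up x = x + (0, 1) := by simp [up, Prod.ext_iff]
  simp [this]

lemma sum_rt (f : Torus L → Torus L → ℝ) : ∑ x, f x (rt x) = ∑ y, f (y - (1, 0)) y := by
  rw [← Equiv.sum_comp (Equiv.addRight ((1, 0) : Torus L)) fun y => f (y - (1, 0)) y]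
  refine Finset.sum_congr rfl fun x _ => ?_
  have : rt x = x + (1, 0) := by simp [rt, Prod.ext_iff]
  simp [this]

lemma neg_HIsing (J : ℝ) (σ : Cfg L) : -(HIsing L J σ) = J * tot en σ := by
  rw [HIsing, neg_mul, neg_neg]
  congr 1
  simp only [mul_add, Finset.sum_add_distrib]
  rw [sum_up (fun x y => spin σ x * spin σ y), sum_rt (fun x y => spin σ x * spin σ y),
    ← Finset.sum_add_distrib, tot]
  refine Finset.sum_congr rfl fun y _ => ?_
  rw [mul_comm (spin σ (y - (0, 1))), spin_mul_down, mul_comm (spin σ (y - (1, 0))), spin_mul_left, en]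
  ring

lemma neg_Hpair (J q : ℝ) (σ τ : Cfg L) : -(Hpair L J q σ τ) =
    ∑ y, spin τ y * (J * (spin σ (y - (1, 0)) + spin σ (y - (0, 1))) + q * spin σ y) := by
  rw [Hpair, neg_neg]
  simp only [mul_add, Finset.sum_add_distrib]
  rw [sum_up (fun x y => J * spin σ x * spin τ y), sum_rt (fun x y => J * spin σ x * spin τ y),
    ← Finset.sum_add_distrib, ← Finset.sum_add_distrib, ← Finset.sum_add_distrib,
    ← Finset.sum_add_distrib]
  refine Finset.sum_congr rfl fun y _ => ?_
  ring

/-- Summing out `τ`: the spins of `τ` are independent given `σ`, so the sum is a product of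
hyperbolic cosines, and each one is a local weight up to the constant `exp q`. -/
lemma sum_pair (J q : ℝ) (σ : Cfg L) :
    ∑ τ : Cfg L, exp (-(Hpair L J q σ τ)) =
      exp q ^ Fintype.card (Torus L) *
        (exp (J * tot en σ) * exp (tot (lg J (exp (-(2 * q)))) σ)) := by
  have h1 := wt_ws J (exp (-(2 * q))) 1 σ
  rw [one_mul] at h1
  rw [← h1, wt, ← Finset.card_univ, ← Finset.prod_const, ← Finset.prod_mul_distrib]
  have h := Finset.prod_univ_sum (ι := Torus L) (κ := fun _ => Bool) (fun _ => Finset.univ)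
    (fun y b => exp (sgn b * (J * (spin σ (y - (1, 0)) + spin σ (y - (0, 1))) + q * spin σ y)))
  rw [Fintype.piFinset_univ] at h
  have h' : ∑ τ : Cfg L, exp (-(Hpair L J q σ τ)) = ∑ τ : Cfg L, ∏ y,
      exp (sgn (τ y) * (J * (spin σ (y - (1, 0)) + spin σ (y - (0, 1))) + q * spin σ y)) := by
    refine Finset.sum_congr rfl fun τ _ => ?_
    rw [neg_Hpair, exp_sum]
    rfl
  rw [h', ← h]
  refine Finset.prod_congr rfl fun y _ => ?_
  have hen : en (hb σ y) (vb σ y) = spin σ y * (spin σ (y - (1, 0)) + spin σ (y - (0, 1))) := by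
    rw [mul_add, spin_mul_left, spin_mul_down, en]; ring
  rw [ws, lg, one_mul, exp_log (by positivity), hen, Fintype.sum_bool]
  generalize spin σ (y - (1, 0)) + spin σ (y - (0, 1)) = m
  have ht : sgn true = 1 := rfl
  have hf : sgn false = -1 := rfl
  have hr : ∀ c : ℝ, exp q * (exp (J * c) * (1 + exp (-(2 * q)) * exp (-(2 * J * c)))) =
      exp (q + J * c) + exp (-(q + J * c)) := by
    intro c
    have e1 : exp (-(q + J * c)) = exp q * (exp (J * c) * (exp (-(2 * q)) * exp (-(2 * J * c)))) := by
      rw [← exp_add, ← exp_add, ← exp_add]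
      congr 1
      ring
    rw [e1, exp_add]
    ring
  rw [hr, ht, hf]
  have hsp : spin σ y = 1 ∨ spin σ y = -1 := by
    unfold spin; split_ifs <;> simp
  rcases hsp with e | e <;> rw [e]
  · congr 2 <;> ring
  · rw [add_comm]
    congr 2 <;> ring

lemma piMeas_eq (J q : ℝ) (σ : Cfg L) : piMeas L J q σ =
    exp (J * tot en σ) * exp (tot (lg J (exp (-(2 * q)))) σ) /
      ∑ σ' : Cfg L, exp (J * tot en σ') * exp (tot (lg J (exp (-(2 * q)))) σ') := by
  rw [piMeas, Zpair]
  simp only [sum_pair, ← Finset.mul_sum]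
  exact mul_div_mul_left _ _ (pow_pos (exp_pos q) _).ne'

lemma gibbs_eq (J : ℝ) (σ : Cfg L) : gibbs L J σ =
    exp (J * tot en σ) / ∑ σ' : Cfg L, exp (J * tot en σ') := by
  simp only [gibbs, ZG, neg_HIsing]

/-- The quantitative bound `O(δ √|Λ|)`, valid for large `J` once `δ ≤ exp (-2J)`. -/
lemma tvDist_le {J q : ℝ} (hJ : 1000 < J) (hq : exp (-(2 * q)) * exp (2 * J) ≤ 1) :
    tvDist L J q ≤ 2 * exp (4 * J) * (exp (-(2 * q)) * (2 * L)) := by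
  set δ := exp (-(2 * q)) with hδ
  have hδ0 : 0 < δ := exp_pos _
  have hM : 384 ≤ exp (2 * J) := by have := add_one_le_exp (2 * J); linarith
  have hg : ∀ a b a' b', |lg J δ a b - lg J δ a' b'| ≤ δ * exp (4 * J) := by
    intro a b a' b'
    have h1 := lg_nonneg (J := J) hδ0 a b
    have h2 := lg_nonneg (J := J) hδ0 a' b'
    have h3 := lg_le (J := J) (by linarith) hδ0 a b
    have h4 := lg_le (J := J) (by linarith) hδ0 a' b'
    rw [abs_le]
    constructor <;> linarith
  have key := sum_abs_le_of_tilt (fun σ : Cfg L => exp (J * tot en σ))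
    (fun σ => tot (lg J δ) σ) (fun _ => exp_pos _) (4 * (δ * exp (4 * J)) * (2 * L : ℕ)) (by
      intro s hs
      have h := (ws_lowTemp (by linarith) hδ0 hq hs).abs_le (N := 2 * L) hM (lg J δ) hg
      simp only [Zw, wt_ws] at h
      exact h)
  rw [tvDist, dif_neg (NeZero.ne L)]
  simp only [piMeas_eq, gibbs_eq]
  push_cast at key
  linarith

end IsingTV

/-- If `δ_L = e^{−2 q_L}` satisfies `δ_L² |Λ| → 0` with `|Λ| = (2L)²`,
then there is `J̄ > 0` such that for every `J > J̄` the total variation distance between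
`π` (with parameters `J, q_L`) and `π^G` (with parameter `J`) tends to `0` as `L → ∞`. -/
theorem statement0 (q : ℕ → ℝ) (hq : ∀ L : ℕ, 1 ≤ L → 0 < q L)
    (hδ : Tendsto (fun L : ℕ => (exp (-(2 * q L))) ^ 2 * ((2 * L : ℝ) ^ 2)) atTop (nhds 0)) :
    ∃ Jbar : ℝ, 0 < Jbar ∧ ∀ J : ℝ, Jbar < J →
      Tendsto (fun L : ℕ => tvDist L J (q L)) atTop (nhds 0) := by
  refine ⟨1000, by norm_num, fun J hJ => ?_⟩
  have hlim : Tendsto (fun L : ℕ => exp (-(2 * q L)) * (2 * L : ℝ)) atTop (nhds 0) := by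
    have h := (Real.continuous_sqrt.tendsto 0).comp hδ
    rw [Real.sqrt_zero] at h
    refine h.congr fun L => ?_
    simp only [Function.comp]
    rw [← mul_pow, Real.sqrt_sq (by positivity)]
  have hbound := hlim.const_mul (2 * exp (4 * J))
  rw [mul_zero] at hbound
  have hsmall : ∀ᶠ L : ℕ in atTop, exp (-(2 * q L)) * (2 * L : ℝ) < exp (-(2 * J)) :=
    hlim.eventually_lt_const (exp_pos _)
  refine squeeze_zero' ?_ ?_ hbound
  · refine Eventually.of_forall fun L => ?_
    rw [tvDist]
    split_ifs
    · exact le_rfl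
    · exact mul_nonneg (by norm_num) (Finset.sum_nonneg fun _ _ => abs_nonneg _)
  · filter_upwards [hsmall, eventually_ge_atTop 1] with L hL hL1
    have : NeZero L := ⟨by omega⟩
    refine IsingTV.tvDist_le hJ ?_
    have h1 : (1 : ℝ) ≤ L := by exact_mod_cast hL1
    have h2 : exp (-(2 * q L)) ≤ exp (-(2 * J)) := by
      have := exp_pos (-(2 * q L))
      nlinarith
    calc exp (-(2 * q L)) * exp (2 * J) ≤ exp (-(2 * J)) * exp (2 * J) :=
          mul_le_mul_of_nonneg_right h2 (exp_pos _).le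
      _ = 1 := by rw [← exp_add]; simp
end

section
/- With p_J = 1 − e^{−2J} and p_q = 1 − e^{−2q}, for every x, y ∈ Λ the two-point correlation under π equals a connection probability under the random cluster measure: Σ_{σ∈X_Λ} π(σ) σ_x σ_y = Φ(x¹ ↔ y¹), where {x¹ ↔ y¹} is the event that the vertices x¹, y¹ ∈ Λ¹ are joined by a path of open edges. -/
/-!
The proof is the Edwards–Sokal coupling. Each Boltzmann factor of an edge of coupling `K` splits as
`e^{K s t} = e^K ((1 - p) + p 1{s = t})` with `p = 1 - e^{-2K}`, so expanding the product over
edges writes `e^{-H(σ,τ)}` as a constant times `Σ_ω muWeight σ τ ω` (`exp_neg_Hpair`).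
For fixed `ω`, the weight `muWeight σ τ ω` is the percolation weight times the indicator that
`(σ,τ)` is constant on the open clusters of `ω` (`muWeight_eq`). Summing `σ_x σ_y` over such
spin configurations gives `2^{k(ω)}` when `x¹ ↔ y¹`, and `0` otherwise, because flipping the
cluster of `x¹` changes the sign (`sum_compatible`). Hence the unnormalised correlation is the
constant times `Σ_ω rcWeight ω 1{x¹ ↔ y¹}`; the case `x = y` identifies the two partition
functions, and the constant cancels.
-/

open Real

attribute [local instance] Classical.propDecidable

/-- The Gibbs measure `π₂` on pairs of configurations (Ising model on the hexagonal
lattice `ℍ`, whose vertex set is `Λ¹ ⊔ Λ²`). -/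
noncomputable def pi2 (L : ℕ) [NeZero L] (J q : ℝ) (σ1 σ2 : Cfg L) : ℝ :=
  exp (-(Hpair L J q σ1 σ2)) / Zpair L J q

/-- Vertices of the hexagonal lattice `ℍ`: the two layers `Λ¹ ⊔ Λ²`. -/
abbrev HexV (L : ℕ) := Torus L ⊕ Torus L

/-- Edges of the hexagonal lattice, indexed by a site `x ∈ Λ` and a label:
`0` for the `J`-edge `{x¹,(x↑)²}`, `1` for the `J`-edge `{x¹,(x→)²}`,
`2` for the `q`-edge `{x¹,x²}`. -/
abbrev HexE (L : ℕ) := Torus L × Fin 3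

/-- The endpoint `e¹ ∈ Λ¹` of an edge (as a site of `Λ`). -/
def ep1 {L : ℕ} (e : HexE L) : Torus L := e.1

/-- The endpoint `e² ∈ Λ²` of an edge (as a site of `Λ`). -/
def ep2 {L : ℕ} (e : HexE L) : Torus L :=
  if e.2 = 0 then up e.1 else if e.2 = 1 then rt e.1 else e.1

/-- The endpoint `e¹` of an edge as a vertex of `ℍ`. -/
def end1 {L : ℕ} (e : HexE L) : HexV L := Sum.inl (ep1 e)

/-- The endpoint `e²` of an edge as a vertex of `ℍ`. -/
def end2 {L : ℕ} (e : HexE L) : HexV L := Sum.inr (ep2 e)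

/-- Edge probabilities: `p_q` on `q`-edges, `p_J` on `J`-edges. -/
def pEdge {L : ℕ} (pJ pq : ℝ) (e : HexE L) : ℝ := if e.2 = 2 then pq else pJ

/-- Percolation configurations `ω ∈ Ω = {0,1}^E`. -/
abbrev EdgeCfg (L : ℕ) := HexE L → Bool

/-- The graph `(V, η(ω))` of open edges of `ω`. -/
def openGraph {L : ℕ} (ω : EdgeCfg L) : SimpleGraph (HexV L) :=
  SimpleGraph.fromRel (fun u v => ∃ e : HexE L, ω e = true ∧ end1 e = u ∧ end2 e = v)

/-- `k(ω)`: the number of connected components of the graph of open edges. -/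
noncomputable def kCl {L : ℕ} (ω : EdgeCfg L) : ℕ :=
  Nat.card (openGraph ω).ConnectedComponent

/-- Random cluster weight `[Π_e p_e^{ω(e)} (1−p_e)^{1−ω(e)}] 2^{k(ω)}`. -/
noncomputable def rcWeight (L : ℕ) [NeZero L] (pJ pq : ℝ) (ω : EdgeCfg L) : ℝ :=
  (∏ e : HexE L, if ω e then pEdge pJ pq e else 1 - pEdge pJ pq e) * 2 ^ kCl ω

/-- Random cluster partition function `Z^{RC}`. -/
noncomputable def Zrc (L : ℕ) [NeZero L] (pJ pq : ℝ) : ℝ :=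
  ∑ ω : EdgeCfg L, rcWeight L pJ pq ω

/-- The random cluster measure `Φ`. -/
noncomputable def Phi (L : ℕ) [NeZero L] (pJ pq : ℝ) (ω : EdgeCfg L) : ℝ :=
  rcWeight L pJ pq ω / Zrc L pJ pq

/-- `δ_e(σ¹,σ²)`: indicator that the spins at the two endpoints of `e` agree. -/
noncomputable def deltaE {L : ℕ} (σ1 σ2 : Cfg L) (e : HexE L) : ℝ :=
  if σ1 (ep1 e) = σ2 (ep2 e) then 1 else 0

/-- Unnormalized Edwards–Sokal coupling weight
`Π_e [(1−p_e)·1{ω(e)=0} + p_e·1{ω(e)=1}·δ_e(σ¹,σ²)]`. -/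
noncomputable def muWeight (L : ℕ) [NeZero L] (pJ pq : ℝ) (σ1 σ2 : Cfg L) (ω : EdgeCfg L) : ℝ :=
  ∏ e : HexE L,
    ((1 - pEdge pJ pq e) * (if ω e = false then 1 else 0)
      + pEdge pJ pq e * (if ω e = true then 1 else 0) * deltaE σ1 σ2 e)

/-- Normalizing constant `Z_μ` of the coupling. -/
noncomputable def Zmu (L : ℕ) [NeZero L] (pJ pq : ℝ) : ℝ :=
  ∑ σ1 : Cfg L, ∑ σ2 : Cfg L, ∑ ω : EdgeCfg L, muWeight L pJ pq σ1 σ2 ω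

/-- The Edwards–Sokal coupling `μ` on `(X_Λ × X_Λ) × Ω`. -/
noncomputable def mu (L : ℕ) [NeZero L] (pJ pq : ℝ) (σ1 σ2 : Cfg L) (ω : EdgeCfg L) : ℝ :=
  muWeight L pJ pq σ1 σ2 ω / Zmu L pJ pq

/-- A spin as a real number `±1`. -/
noncomputable def sgn (b : Bool) : ℝ := if b then 1 else -1

lemma sgn_mul_self (b : Bool) : sgn b * sgn b = 1 := by cases b <;> simp [sgn]

/-- `s` takes equal values at the endpoints of every edge of `G`. -/
def Compatible {V : Type*} (G : SimpleGraph V) (s : V → Bool) : Prop :=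
  ∀ u v, G.Adj u v → s u = s v

lemma Compatible.reachable {V : Type*} {G : SimpleGraph V} {s : V → Bool}
    (h : Compatible G s) {u v : V} (huv : G.Reachable u v) : s u = s v := by
  obtain ⟨p⟩ := huv
  induction p with
  | nil => rfl
  | cons hadj _ ih => exact (h _ _ hadj).trans ih

/-- Compatible configurations are the colourings of the connected components. -/
def compatibleEquiv {V : Type*} (G : SimpleGraph V) :
    {s : V → Bool // Compatible G s} ≃ (G.ConnectedComponent → Bool) where
  toFun s := fun c => c.lift s.1 (fun _ _ p _ => s.2.reachable p.reachable)
  invFun c := ⟨fun v => c (G.connectedComponentMk v), fun u v h =>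
    congrArg c (SimpleGraph.ConnectedComponent.sound h.reachable)⟩
  left_inv s := by ext v; rfl
  right_inv c := by
    funext d
    induction d using SimpleGraph.ConnectedComponent.ind
    rfl

/-- Flip of the spins in the cluster of `x`. -/
noncomputable def flipCluster {V : Type*} (G : SimpleGraph V) (x : V) (s : V → Bool) : V → Bool :=
  fun v => if G.Reachable x v then !(s v) else s v

lemma flipCluster_involutive {V : Type*} (G : SimpleGraph V) (x : V) :
    Function.Involutive (flipCluster G x) := by
  intro s
  funext v
  by_cases h : G.Reachable x v <;> simp [flipCluster, h]

lemma compatible_flipCluster {V : Type*} (G : SimpleGraph V) (x : V) (s : V → Bool) :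
    Compatible G (flipCluster G x s) ↔ Compatible G s := by
  have key : ∀ s, Compatible G s → Compatible G (flipCluster G x s) := by
    intro s hs u v huv
    have h : G.Reachable x u ↔ G.Reachable x v :=
      ⟨fun h => h.trans huv.reachable, fun h => h.trans huv.symm.reachable⟩
    simp only [flipCluster, h, hs u v huv]
  refine ⟨fun h => ?_, key s⟩
  have := key _ h
  rwa [flipCluster_involutive G x s] at this

/-- The spin side of the coupling at a fixed percolation configuration: spins are constant on
clusters, and independent fair signs across clusters. -/
lemma sum_compatible {V : Type*} [Fintype V] [DecidableEq V] (G : SimpleGraph V) (x y : V) :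
    ∑ s : V → Bool, (if Compatible G s then (1 : ℝ) else 0) * (sgn (s x) * sgn (s y))
      = if G.Reachable x y then 2 ^ Nat.card G.ConnectedComponent else 0 := by
  split_ifs with hxy
  · have h1 : ∀ s : V → Bool, (if Compatible G s then (1 : ℝ) else 0) * (sgn (s x) * sgn (s y))
        = if Compatible G s then (1 : ℝ) else 0 := by
      intro s
      split_ifs with h
      · rw [h.reachable hxy, sgn_mul_self, one_mul]
      · simp
    rw [Finset.sum_congr rfl (fun s _ => h1 s), Finset.sum_boole, ← Fintype.card_subtype,
      ← Nat.card_eq_fintype_card, Nat.card_congr (compatibleEquiv G), Nat.card_fun]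
    simp
  · have h := Equiv.sum_comp (Function.Involutive.toPerm _ (flipCluster_involutive G x))
      (fun s : V → Bool => (if Compatible G s then (1 : ℝ) else 0) * (sgn (s x) * sgn (s y)))
    have h2 : ∀ s : V → Bool, (fun s : V → Bool =>
          (if Compatible G s then (1 : ℝ) else 0) * (sgn (s x) * sgn (s y)))
          (Function.Involutive.toPerm _ (flipCluster_involutive G x) s)
        = -((if Compatible G s then (1 : ℝ) else 0) * (sgn (s x) * sgn (s y))) := by
      intro s
      have hx : flipCluster G x s x = !(s x) := by simp [flipCluster]
      have hy : flipCluster G x s y = s y := by simp [flipCluster, hxy]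
      have hn : sgn (!(s x)) = - sgn (s x) := by cases s x <;> simp [sgn]
      simp only [Function.Involutive.coe_toPerm, compatible_flipCluster, hx, hy, hn]
      ring
    rw [Finset.sum_congr rfl (fun s _ => h2 s), Finset.sum_neg_distrib] at h
    linarith

lemma compatible_openGraph {L : ℕ} (ω : EdgeCfg L) (σ τ : Cfg L) :
    Compatible (openGraph ω) (Sum.elim σ τ)
      ↔ ∀ e : HexE L, ω e = true → σ (ep1 e) = τ (ep2 e) := by
  constructor
  · intro h e he
    have := h (end1 e) (end2 e) (by
      rw [openGraph, SimpleGraph.fromRel_adj]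
      exact ⟨by simp [end1, end2], Or.inl ⟨e, he, rfl, rfl⟩⟩)
    simpa [end1, end2] using this
  · intro h u v huv
    rw [openGraph, SimpleGraph.fromRel_adj] at huv
    rcases huv.2 with ⟨e, he, rfl, rfl⟩ | ⟨e, he, rfl, rfl⟩
    · simpa [end1, end2] using h e he
    · simpa [end1, end2] using (h e he).symm

lemma muWeight_eq (L : ℕ) [NeZero L] (pJ pq : ℝ) (σ τ : Cfg L) (ω : EdgeCfg L) :
    muWeight L pJ pq σ τ ω
      = (∏ e : HexE L, if ω e then pEdge pJ pq e else 1 - pEdge pJ pq e)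
        * if Compatible (openGraph ω) (Sum.elim σ τ) then 1 else 0 := by
  rw [muWeight]
  split_ifs with h
  · rw [compatible_openGraph] at h
    rw [mul_one]
    refine Finset.prod_congr rfl fun e _ => ?_
    cases he : ω e
    · simp
    · simp [deltaE, h e he]
  · rw [compatible_openGraph] at h
    push Not at h
    obtain ⟨e, he, hne⟩ := h
    rw [mul_zero]
    exact Finset.prod_eq_zero (Finset.mem_univ e) (by simp [he, deltaE, hne])

lemma sum_muWeight (L : ℕ) [NeZero L] (pJ pq : ℝ) (σ τ : Cfg L) :
    ∑ ω : EdgeCfg L, muWeight L pJ pq σ τ ω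
      = ∏ e : HexE L, ((1 - pEdge pJ pq e) + pEdge pJ pq e * deltaE σ τ e) := by
  have h := Finset.prod_univ_sum (R := ℝ) (fun _ : HexE L => (Finset.univ : Finset Bool))
    (fun e b => (1 - pEdge pJ pq e : ℝ) * (if b = false then 1 else 0)
      + pEdge pJ pq e * (if b = true then 1 else 0) * deltaE σ τ e)
  rw [Fintype.piFinset_univ] at h
  simp only [muWeight]
  rw [← h]
  refine Finset.prod_congr rfl fun e _ => ?_
  simp [add_comm]

/-- The coupling constant of an edge: `q` on `q`-edges, `J` on `J`-edges. -/
def coupling {L : ℕ} (J q : ℝ) (e : HexE L) : ℝ := if e.2 = 2 then q else J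

lemma exp_coupling (K : ℝ) (a b : Bool) :
    exp (K * (sgn a * sgn b))
      = exp K * ((1 - (1 - exp (-(2 * K)))) + (1 - exp (-(2 * K))) * if a = b then 1 else 0) := by
  have h : exp K * exp (-(2 * K)) = exp (-K) := by rw [← exp_add]; ring_nf
  cases a <;> cases b <;> simp [sgn, h]

lemma exp_neg_Hpair (L : ℕ) [NeZero L] (J q : ℝ) (σ τ : Cfg L) :
    exp (-(Hpair L J q σ τ)) = (∏ e : HexE L, exp (coupling J q e)) *
      ∑ ω : EdgeCfg L, muWeight L (1 - exp (-(2 * J))) (1 - exp (-(2 * q))) σ τ ω := by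
  have hH : -(Hpair L J q σ τ)
      = ∑ e : HexE L, coupling J q e * (sgn (σ (ep1 e)) * sgn (τ (ep2 e))) := by
    rw [Hpair, neg_neg]
    refine Eq.trans ?_ (Fintype.sum_prod_type (fun e : HexE L =>
      coupling J q e * (sgn (σ (ep1 e)) * sgn (τ (ep2 e))))).symm
    refine Finset.sum_congr rfl fun x _ => ?_
    have hs : ∀ (ρ : Cfg L) z, spin ρ z = sgn (ρ z) := fun _ _ => rfl
    simp [Fin.sum_univ_three, coupling, ep1, ep2, hs]
    ring
  rw [sum_muWeight, hH, exp_sum, ← Finset.prod_mul_distrib]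
  refine Finset.prod_congr rfl fun e _ => ?_
  rw [exp_coupling, deltaE, pEdge, coupling]
  split_ifs <;> rfl

/-- The unnormalised correlation of `σ_x σ_y` is, up to a constant independent of `x` and `y`, the
random cluster weight of the event `x¹ ↔ y¹`. -/
lemma sum_exp_spin (L : ℕ) [NeZero L] (J q : ℝ) (x y : Torus L) :
    ∑ σ : Cfg L, ∑ τ : Cfg L, exp (-(Hpair L J q σ τ)) * (spin σ x * spin σ y)
      = (∏ e : HexE L, exp (coupling J q e)) *
        ∑ ω : EdgeCfg L, if (openGraph ω).Reachable (Sum.inl x) (Sum.inl y) then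
          rcWeight L (1 - exp (-(2 * J))) (1 - exp (-(2 * q))) ω else 0 := by
  set pJ := 1 - exp (-(2 * J))
  set pq := 1 - exp (-(2 * q))
  have hω : ∀ ω : EdgeCfg L,
      ∑ σ : Cfg L, ∑ τ : Cfg L, muWeight L pJ pq σ τ ω * (spin σ x * spin σ y)
        = if (openGraph ω).Reachable (Sum.inl x) (Sum.inl y) then rcWeight L pJ pq ω else 0 := by
    intro ω
    have h := sum_compatible (openGraph ω) (Sum.inl x) (Sum.inl y)
    rw [← Equiv.sum_comp (Equiv.sumArrowEquivProdArrow (Torus L) (Torus L) Bool).symm,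
      Fintype.sum_prod_type] at h
    have h' : ∑ σ : Cfg L, ∑ τ : Cfg L, muWeight L pJ pq σ τ ω * (spin σ x * spin σ y)
        = (∏ e : HexE L, if ω e then pEdge pJ pq e else 1 - pEdge pJ pq e) *
          if (openGraph ω).Reachable (Sum.inl x) (Sum.inl y) then
            2 ^ Nat.card (openGraph ω).ConnectedComponent else 0 := by
      rw [← h, Finset.mul_sum]
      refine Finset.sum_congr rfl fun σ _ => ?_
      rw [Finset.mul_sum]
      refine Finset.sum_congr rfl fun τ _ => ?_
      rw [muWeight_eq, mul_assoc]
      rfl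
    rw [h', rcWeight, kCl, mul_ite, mul_zero]
  simp_rw [← hω, exp_neg_Hpair L J q]
  rw [Finset.sum_comm (s := (Finset.univ : Finset (EdgeCfg L))), Finset.mul_sum]
  refine Finset.sum_congr rfl fun σ _ => ?_
  rw [Finset.sum_comm (s := (Finset.univ : Finset (EdgeCfg L))), Finset.mul_sum]
  refine Finset.sum_congr rfl fun τ _ => ?_
  rw [mul_assoc, Finset.sum_mul]

lemma Zpair_eq (L : ℕ) [NeZero L] (J q : ℝ) :
    Zpair L J q = (∏ e : HexE L, exp (coupling J q e)) *
      Zrc L (1 - exp (-(2 * J))) (1 - exp (-(2 * q))) := by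
  have h := sum_exp_spin L J q 0 0
  have hs : ∀ σ : Cfg L, spin σ 0 * spin σ 0 = 1 := fun σ => sgn_mul_self (σ 0)
  simp only [hs, mul_one, SimpleGraph.Reachable.refl, if_true] at h
  exact h

/-- With `p_J = 1 − e^{−2J}` and `p_q = 1 − e^{−2q}`, for all `x, y ∈ Λ`
the two-point correlation under `π` equals the connection probability of `x¹` and `y¹`
under the random cluster measure: `π(σ_x σ_y) = Φ(x¹ ↔ y¹)`. -/
theorem statement7 (L : ℕ) [NeZero L] (J q : ℝ) (hJ : 0 < J) (hq : 0 < q)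
    (x y : Torus L) :
    ∑ σ : Cfg L, piMeas L J q σ * (spin σ x * spin σ y)
      = ∑ ω : EdgeCfg L,
          if (openGraph ω).Reachable (Sum.inl x) (Sum.inl y) then
            Phi L (1 - exp (-(2 * J))) (1 - exp (-(2 * q))) ω
          else 0 := by
  have hC : (∏ e : HexE L, exp (coupling J q e)) ≠ 0 :=
    Finset.prod_ne_zero_iff.mpr fun e _ => (exp_pos _).ne'
  calc ∑ σ : Cfg L, piMeas L J q σ * (spin σ x * spin σ y)
      = (∑ σ : Cfg L, ∑ τ : Cfg L, exp (-(Hpair L J q σ τ)) * (spin σ x * spin σ y))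
          / Zpair L J q := by
        rw [Finset.sum_div]
        refine Finset.sum_congr rfl fun σ _ => ?_
        rw [piMeas, ← Finset.sum_mul, div_mul_eq_mul_div]
    _ = _ := by
        rw [sum_exp_spin, Zpair_eq, mul_div_mul_left _ _ hC, Finset.sum_div]
        refine Finset.sum_congr rfl fun ω _ => ?_
        split_ifs
        · rfl
        · exact zero_div _
end

section
/- For every J > 0 there exists q₀ > 0 such that for all q ∈ (0, q₀), all integers L and all integers ℓ with 0 < ℓ < L, there exist constants c₁ < c₂ with π(σ_{(0,0)} σ_{(ℓ,ℓ)}) ≤ c₁ < c₂ ≤ π(σ_{(0,ℓ)} σ_{(ℓ,0)}); i.e., the correlation along the main diagonal of the torus is strictly smaller than the correlation along the anti-diagonal at the same lattice distance. -/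
/-!
Write `σ` and `τ` as one spin field on the hexagonal lattice whose vertices are two copies of the
torus. The pair weight is an Ising weight on it; in high-temperature form its bonds have strength
`t = tanh J` (between `σ_x` and `τ_{x↑}`, `τ_{x→}`) and `s = tanh q` (the vertical bonds, between
`σ_x` and `τ_x`), and `π(σ_x σ_y)` is its two-point function (`corr_eq_G`). The `J`-bonds decompose
the lattice into `2L` antidiagonal closed chains, coupled only through the weak vertical bonds. The
points `(0,ℓ)` and `(ℓ,0)` lie on one chain, at distance `2ℓ`, so their correlation `g` is at least
`t ^ (2ℓ)` by Griffiths' second inequality (`chain_lower`). The points `(0,0)` and `(ℓ,ℓ)` lie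
`2ℓ` chains apart, modulo `2L`.

Conditioning on the three neighbours of a vertex makes the two-point function subharmonic for
weights `α, α, s` with `α = t / (1 + t²)` and `2α + s < 1` (`site_sub`), and the maximum principle
gives exponential decay `κ ^ dist` with the number of chains crossed, `κ = s / (1 - 2α)`
(`two_point_le`). If `2ℓ ≤ L` this already suffices, because `κ < t`.

If `2ℓ > L` the decay is useless, since the two sites are close around the torus. Instead a
reflection exchanging `σ` and `τ` is used. For a reflection-symmetric model in which bonds cross
the reflection line only perpendicularly, `⟨σ_x σ_y⟩ ≤ ⟨σ_x σ_{Ry}⟩` when `x` and `y` lie on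
opposite sides (`reflection`, proved by duplication as for Griffiths' inequalities). On the torus
the reflection has a second line, the seam, which it maps to itself by a glide; the bonds on the
seam are removed first. The cost of doing so is a sum of truncated four-point functions, which are
again subharmonic and are controlled by the same barrier (`trunc_le`, `cut_bounds`,
`approx_reflection`). Two reflections move `(ℓ,ℓ)` to the antipode `(L,L)`, up to an error
`O(L κ ^ (2ℓ))` (`diag_le_antipode`). The antipode lies on the chain of `0`. Along this chain the
two-point function satisfies a one-dimensional subharmonicity inequality, the vertical neighbour
being dominated by reflection (`chain_rec`); being symmetric about the antipode, it is smaller there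
by the factor `1 - (1 - 2α) / 2` than at distance `2ℓ` (`profile`, `antipode_le`). For `q` small
the errors are below `(1 - 2α) / 2 * t ^ (2ℓ)`, uniformly in `L` (`diag_lt`).
-/

open Real

/-- The two-point correlation function `π(σ_x σ_y) = Σ_σ π(σ) σ_x σ_y`. -/
noncomputable def corr (L : ℕ) [NeZero L] (J q : ℝ) (x y : Torus L) : ℝ :=
  ∑ σ : Cfg L, piMeas L J q σ * (spin σ x * spin σ y)

/-! ### Ising models in high-temperature form: Griffiths and reflection inequalities -/

section Generic

set_option linter.unusedSectionVars false

variable {V E : Type*}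

/-- The numerical value of a spin encoded by a `Bool`. -/
noncomputable def bs (b : Bool) : ℝ := if b then 1 else -1

lemma bs_beq (a b : Bool) : bs (a == b) = bs a * bs b := by
  cases a <;> cases b <;> simp [bs]

lemma bs_mul_self (a : Bool) : bs a * bs a = 1 := by cases a <;> simp [bs]

lemma bs_cases (a : Bool) : bs a = 1 ∨ bs a = -1 := by cases a <;> simp [bs]

lemma bs_not (a : Bool) : bs (!a) = - bs a := by cases a <;> simp [bs]

/-- The monomial `∏_{v ∈ A} σ_v`; repetitions in the list `A` are allowed. -/
noncomputable def mon (A : List V) (σ : V → Bool) : ℝ := (A.map (fun v => bs (σ v))).prod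

lemma mon_nil (σ : V → Bool) : mon [] σ = 1 := by simp [mon]

lemma mon_cons (a : V) (A : List V) (σ : V → Bool) : mon (a :: A) σ = bs (σ a) * mon A σ := by
  simp [mon]

lemma mon_append (A B : List V) (σ : V → Bool) : mon (A ++ B) σ = mon A σ * mon B σ := by
  simp [mon]

lemma mon_beq (A : List V) (σ ρ : V → Bool) :
    mon A (fun v => ρ v == σ v) = mon A ρ * mon A σ := by
  induction A with
  | nil => simp [mon]
  | cons a A ih => simp only [mon_cons, ih, bs_beq]; ring

lemma mon_cases (A : List V) (σ : V → Bool) : mon A σ = 1 ∨ mon A σ = -1 := by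
  induction A with
  | nil => simp [mon]
  | cons a A ih =>
    rw [mon_cons]
    rcases ih with h | h <;> rcases bs_cases (σ a) with h' | h' <;> simp [h, h']

variable [Fintype V] [DecidableEq V] [Fintype E] [DecidableEq E]

lemma sum_mon_nonneg (A : List V) : 0 ≤ ∑ σ : V → Bool, mon A σ := by
  have h : ∀ σ : V → Bool, mon A σ = ∏ v, bs (σ v) ^ (A.count v) := by
    intro σ
    rw [mon, Finset.prod_list_map_count]
    apply Finset.prod_subset (Finset.subset_univ _)
    intro v _ hv
    rw [List.count_eq_zero_of_not_mem (by simpa using hv), pow_zero]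
  simp_rw [h]
  rw [← Fintype.prod_sum (fun (v : V) (b : Bool) => bs b ^ (A.count v))]
  apply Finset.prod_nonneg
  intro v _
  rw [Fintype.sum_bool]
  rcases Nat.even_or_odd (A.count v) with h | h <;> simp [bs, h]

/-- First Griffiths inequality, for a product of factors `c_e + d_e σ_{p e} σ_{r e}` with
nonnegative coefficients. -/
lemma griffiths_one (p r : E → V) (c d : E → ℝ) (hc : ∀ e, 0 ≤ c e) (hd : ∀ e, 0 ≤ d e)
    (A : List V) :
    0 ≤ ∑ σ : V → Bool, mon A σ * ∏ e, (c e + d e * (bs (σ (p e)) * bs (σ (r e)))) := by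
  suffices H : ∀ (s : Finset E) (A : List V),
      0 ≤ ∑ σ : V → Bool, mon A σ * ∏ e ∈ s, (c e + d e * (bs (σ (p e)) * bs (σ (r e)))) from
    H Finset.univ A
  intro s
  induction s using Finset.induction_on with
  | empty => intro A; simpa using sum_mon_nonneg A
  | insert e s he ih =>
    intro A
    have h1 := mul_nonneg (hc e) (ih A)
    have h2 := mul_nonneg (hd e) (ih (p e :: r e :: A))
    rw [Finset.mul_sum] at h1 h2
    have h3 := add_nonneg h1 h2
    rw [← Finset.sum_add_distrib] at h3
    refine h3.trans_eq (Finset.sum_congr rfl fun σ _ => ?_)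
    rw [Finset.prod_insert he, mon_cons, mon_cons]
    ring

/-- The high-temperature form `∏_e (1 + T_e σ_{p e} σ_{r e})` of the Boltzmann weight of an Ising
model with bonds `e ∈ E` joining `p e` to `r e`; here `T_e` is the hyperbolic tangent of the
coupling of `e`. -/
noncomputable def wt (p r : E → V) (T : E → ℝ) (σ : V → Bool) : ℝ :=
  ∏ e, (1 + T e * (bs (σ (p e)) * bs (σ (r e))))

/-- The unnormalised expectation of `f`. -/
noncomputable def Sm (p r : E → V) (T : E → ℝ) (f : (V → Bool) → ℝ) : ℝ :=
  ∑ σ, f σ * wt p r T σ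

/-- The correlation function `⟨∏_{v ∈ A} σ_v⟩`. -/
noncomputable def cor (p r : E → V) (T : E → ℝ) (A : List V) : ℝ :=
  Sm p r T (mon A) / Sm p r T (fun _ => 1)

lemma bond_cases (p r : E → V) (σ : V → Bool) (e : E) :
    bs (σ (p e)) * bs (σ (r e)) = 1 ∨ bs (σ (p e)) * bs (σ (r e)) = -1 := by
  rcases bs_cases (σ (p e)) with h | h <;> rcases bs_cases (σ (r e)) with h' | h' <;>
    simp [h, h']

lemma wt_pos (p r : E → V) (T : E → ℝ) (h0 : ∀ e, 0 ≤ T e) (h1 : ∀ e, T e < 1)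
    (σ : V → Bool) : 0 < wt p r T σ := by
  refine Finset.prod_pos fun e _ => ?_
  rcases bond_cases p r σ e with h | h <;> rw [h] <;> linarith [h0 e, h1 e]

lemma Z_pos (p r : E → V) (T : E → ℝ) (h0 : ∀ e, 0 ≤ T e) (h1 : ∀ e, T e < 1) :
    0 < Sm p r T (fun _ => 1) := by
  refine Finset.sum_pos (fun σ _ => ?_) ⟨fun _ => true, Finset.mem_univ _⟩
  rw [one_mul]; exact wt_pos p r T h0 h1 σ

lemma Sm_mon_nonneg (p r : E → V) (T : E → ℝ) (h0 : ∀ e, 0 ≤ T e) (A : List V) :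
    0 ≤ Sm p r T (mon A) :=
  griffiths_one p r (fun _ => 1) T (fun _ => zero_le_one) h0 A

lemma cor_nonneg (p r : E → V) (T : E → ℝ) (h0 : ∀ e, 0 ≤ T e) (h1 : ∀ e, T e < 1)
    (A : List V) : 0 ≤ cor p r T A :=
  div_nonneg (Sm_mon_nonneg p r T h0 A) (Z_pos p r T h0 h1).le

lemma cor_congr (p r : E → V) (T : E → ℝ) {A B : List V} (h : ∀ σ, mon A σ = mon B σ) :
    cor p r T A = cor p r T B := by
  have : mon A = mon B := funext h
  rw [cor, cor, this]

lemma cor_comm (p r : E → V) (T : E → ℝ) (x y : V) : cor p r T [x, y] = cor p r T [y, x] :=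
  cor_congr p r T fun σ => by simp [mon, mul_comm]

lemma cor_self (p r : E → V) (T : E → ℝ) (h0 : ∀ e, 0 ≤ T e) (h1 : ∀ e, T e < 1) (x : V) :
    cor p r T [x, x] = 1 := by
  have : mon [x, x] = fun _ : V → Bool => (1 : ℝ) := by
    funext σ; simp [mon, bs_mul_self]
  have hZ := (Z_pos p r T h0 h1).ne'
  rw [cor, this, div_self hZ]

/-- Positivity for two copies `σ`, `σ'` of an Ising model coupled through a nonnegative function
of the products `ρ_v = σ_v σ'_v`. At fixed `ρ` the two copies merge into one ferromagnetic system
with bond factors `(1 + T_e² ρ_e) + T_e (1 + ρ_e) σ_e`, to which the first Griffiths inequality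
applies. With `H = 1` this is the second Griffiths inequality; with `H` the interaction across a
reflection line it is the reflection inequality for correlations. -/
lemma dup_nonneg (p r : E → V) (T : E → ℝ) (h0 : ∀ e, 0 ≤ T e) (h1 : ∀ e, T e < 1)
    (H : (V → Bool) → ℝ) (hH : ∀ ρ, 0 ≤ H ρ) (A B : List V) :
    0 ≤ ∑ σ : V → Bool, ∑ σ' : V → Bool, wt p r T σ * wt p r T σ' *
      H (fun v => σ' v == σ v) * (mon A σ * (mon B σ - mon B σ')) := by
  have key : ∀ σ : V → Bool, ∑ σ' : V → Bool, wt p r T σ * wt p r T σ' *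
      H (fun v => σ' v == σ v) * (mon A σ * (mon B σ - mon B σ')) =
      ∑ ρ : V → Bool, H ρ * (1 - mon B ρ) * (mon (A ++ B) σ *
        ∏ e, ((1 + T e ^ 2 * (bs (ρ (p e)) * bs (ρ (r e)))) +
          (T e * (1 + bs (ρ (p e)) * bs (ρ (r e)))) * (bs (σ (p e)) * bs (σ (r e))))) := by
    intro σ
    have hinv : Function.Involutive (fun (ρ : V → Bool) (v : V) => ρ v == σ v) := by
      intro ρ; funext v
      cases h : ρ v <;> cases h' : σ v <;> simp [h, h']
    rw [← Equiv.sum_comp (Function.Involutive.toPerm _ hinv)]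
    refine Finset.sum_congr rfl fun ρ _ => ?_
    have e1 : (Function.Involutive.toPerm _ hinv) ρ = fun v => ρ v == σ v := rfl
    have e2 : (fun v => (Function.Involutive.toPerm _ hinv) ρ v == σ v) = ρ := hinv ρ
    rw [e2, e1, mon_beq, mon_append]
    have hw : wt p r T σ * wt p r T (fun v => ρ v == σ v) =
        ∏ e, ((1 + T e ^ 2 * (bs (ρ (p e)) * bs (ρ (r e)))) +
          (T e * (1 + bs (ρ (p e)) * bs (ρ (r e)))) * (bs (σ (p e)) * bs (σ (r e)))) := by
      rw [wt, wt, ← Finset.prod_mul_distrib]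
      refine Finset.prod_congr rfl fun e _ => ?_
      simp only [bs_beq]
      rcases bond_cases p r σ e with h | h
      · rw [show bs (ρ (p e)) * bs (σ (p e)) * (bs (ρ (r e)) * bs (σ (r e))) =
          bs (ρ (p e)) * bs (ρ (r e)) * (bs (σ (p e)) * bs (σ (r e))) by ring, h]
        ring
      · rw [show bs (ρ (p e)) * bs (σ (p e)) * (bs (ρ (r e)) * bs (σ (r e))) =
          bs (ρ (p e)) * bs (ρ (r e)) * (bs (σ (p e)) * bs (σ (r e))) by ring, h]
        ring
    rw [hw]; ring
  rw [Finset.sum_congr rfl fun σ _ => key σ, Finset.sum_comm]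
  refine Finset.sum_nonneg fun ρ _ => ?_
  rw [← Finset.mul_sum]
  refine mul_nonneg (mul_nonneg (hH ρ) ?_) (griffiths_one p r _ _ ?_ ?_ _)
  · rcases mon_cases B ρ with h | h <;> rw [h] <;> norm_num
  · intro e
    rcases bond_cases p r ρ e with h | h <;> rw [h] <;> nlinarith [h0 e, h1 e]
  · intro e
    rcases bond_cases p r ρ e with h | h <;> rw [h] <;> nlinarith [h0 e, h1 e]

/-- Second Griffiths inequality. -/
lemma griffiths_two (p r : E → V) (T : E → ℝ) (h0 : ∀ e, 0 ≤ T e) (h1 : ∀ e, T e < 1)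
    (A B : List V) : cor p r T A * cor p r T B ≤ cor p r T (A ++ B) := by
  have hZ := Z_pos p r T h0 h1
  have h := dup_nonneg p r T h0 h1 (fun _ => 1) (fun _ => zero_le_one) A B
  have h2 : ∑ σ : V → Bool, ∑ σ' : V → Bool, wt p r T σ * wt p r T σ' *
      1 * (mon A σ * (mon B σ - mon B σ')) =
      Sm p r T (mon (A ++ B)) * Sm p r T (fun _ => 1) -
        Sm p r T (mon A) * Sm p r T (mon B) := by
    simp only [Sm, Finset.sum_mul_sum, ← Finset.sum_sub_distrib]
    refine Finset.sum_congr rfl fun σ _ => Finset.sum_congr rfl fun σ' _ => ?_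
    rw [mon_append]; ring
  rw [h2] at h
  rw [cor, cor, cor, div_mul_div_comm, div_le_div_iff₀ (by positivity) hZ]
  nlinarith

/-- Invariance of correlations under a symmetry of the bond structure. -/
lemma cor_map (p r : E → V) (T : E → ℝ) (f : V ≃ V) (g : E ≃ E) (hT : ∀ e, T (g e) = T e)
    (hg : ∀ e, (p (g e) = f (p e) ∧ r (g e) = f (r e)) ∨
      (p (g e) = f (r e) ∧ r (g e) = f (p e))) (A : List V) :
    cor p r T (A.map f) = cor p r T A := by
  have hw : ∀ σ : V → Bool, wt p r T σ = wt p r T (fun v => σ (f v)) := by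
    intro σ
    rw [wt, wt, ← Equiv.prod_comp g]
    refine Finset.prod_congr rfl fun e _ => ?_
    rw [hT]
    rcases hg e with ⟨h, h'⟩ | ⟨h, h'⟩ <;> rw [h, h']
    ring
  have hS : ∀ F : (V → Bool) → ℝ, Sm p r T (fun σ => F (fun v => σ (f v))) = Sm p r T F := by
    intro F
    rw [Sm, Sm, ← Equiv.sum_comp (Equiv.arrowCongr f.symm (Equiv.refl Bool))
      (fun σ => F σ * wt p r T σ)]
    refine Finset.sum_congr rfl fun σ _ => ?_
    rw [hw σ]
    rfl
  have hm : mon (A.map f) = fun σ => mon A (fun v => σ (f v)) := by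
    funext σ; simp [mon, Function.comp_def]
  rw [cor, cor, hm, hS]

/-- Reflection inequality: if `R` is a symmetry exchanging two sides, and the only bonds joining
the sides join a site to its mirror image, then moving one of two sites on opposite sides to its
mirror image increases the correlation. -/
lemma reflection (p r : E → V) (T : E → ℝ) (h0 : ∀ e, 0 ≤ T e) (h1 : ∀ e, T e < 1)
    (R : V → V) (hR : ∀ v, R (R v) = v) (side : V → Prop) [DecidablePred side]
    (hside : ∀ v, side (R v) ↔ ¬ side v)
    (g : E ≃ E) (hT : ∀ e, T (g e) = T e)
    (hp : ∀ e, p (g e) = R (r e)) (hr : ∀ e, r (g e) = R (p e))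
    (hcross : ∀ e, T e ≠ 0 → (side (p e) ∧ side (r e)) ∨ (¬ side (p e) ∧ ¬ side (r e)) ∨
      (side (p e) ∧ r e = R (p e)))
    (x y : V) (hx : side x) (hy : ¬ side y) : cor p r T [x, y] ≤ cor p r T [x, R y] := by
  classical
  set μ : (V → Bool) → (V → Bool) → V → Bool :=
    fun σ σ' v => if side v then σ v else σ' (R v) with hμ
  set ν : (V → Bool) → (V → Bool) → V → Bool :=
    fun σ σ' v => if side v then σ (R v) else σ' v with hν
  have hinv : Function.Involutive
      (fun z : (V → Bool) × (V → Bool) => (μ z.1 z.2, ν z.1 z.2)) := by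
    rintro ⟨σ, σ'⟩
    ext v <;> by_cases h : side v <;> simp [hμ, hν, h, hside, hR]
  -- the weight of the bonds inside the chosen side
  set T' : E → ℝ := fun e => if side (p e) ∧ side (r e) then T e else 0 with hT'
  set H : (V → Bool) → ℝ := fun ρ => ∏ e, if side (p e) ∧ ¬ side (r e) then
    1 + T e * bs (ρ (p e)) else 1 with hHdef
  have hw : ∀ σ σ' : V → Bool, wt p r T (μ σ σ') =
      wt p r T' σ * wt p r T' σ' * H (fun v => σ' v == σ v) := by
    intro σ σ'
    have : wt p r T' σ' = ∏ e, (1 + T' (g e) * (bs (σ' (p (g e))) * bs (σ' (r (g e))))) := by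
      rw [wt, Equiv.prod_comp g (fun e => 1 + T' e * (bs (σ' (p e)) * bs (σ' (r e))))]
    rw [this, wt, wt, hHdef]
    simp only [← Finset.prod_mul_distrib]
    refine Finset.prod_congr rfl fun e _ => ?_
    by_cases hTe : T e = 0
    · simp [hT', hTe, hT]
    · rcases hcross e hTe with ⟨a, b⟩ | ⟨a, b⟩ | ⟨a, b⟩
      · simp [hT', hμ, hp, hr, hside, a, b]
      · simp [hT', hμ, hp, hr, hside, a, b, hT, mul_comm]
      · simp [hT', hμ, hp, hr, hside, a, b, hR, bs_beq, mul_comm]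
  have hT0 : ∀ e, 0 ≤ T' e := by
    intro e; simp only [hT']; split_ifs <;> [exact h0 e; exact le_rfl]
  have hT1 : ∀ e, T' e < 1 := by
    intro e; simp only [hT']; split_ifs <;> [exact h1 e; exact zero_lt_one]
  have hH : ∀ ρ, 0 ≤ H ρ := by
    intro ρ
    refine Finset.prod_nonneg fun e _ => ?_
    split_ifs
    · rcases bs_cases (ρ (p e)) with h | h <;> rw [h] <;> linarith [h0 e, h1 e]
    · exact zero_le_one
  have h := dup_nonneg p r T' hT0 hT1 H hH [x] [R y]
  have hsum : ∑ σ : V → Bool, ∑ σ' : V → Bool, wt p r T' σ * wt p r T' σ' *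
      H (fun v => σ' v == σ v) * (mon [x] σ * (mon [R y] σ - mon [R y] σ')) =
      Fintype.card (V → Bool) * (Sm p r T (mon [x, R y]) - Sm p r T (mon [x, y])) := by
    have e1 : ∀ σ σ' : V → Bool, wt p r T' σ * wt p r T' σ' *
        H (fun v => σ' v == σ v) * (mon [x] σ * (mon [R y] σ - mon [R y] σ')) =
        (mon [x, R y] (μ σ σ') - mon [x, y] (μ σ σ')) * wt p r T (μ σ σ') := by
      intro σ σ'
      have hRy : side (R y) := (hside y).2 hy
      rw [hw]
      simp [mon, hμ, hx, hy, hRy]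
      ring
    simp only [e1]
    rw [← Fintype.sum_prod_type' (fun σ σ' : V → Bool =>
      (mon [x, R y] (μ σ σ') - mon [x, y] (μ σ σ')) * wt p r T (μ σ σ'))]
    have e2 := Equiv.sum_comp (Function.Involutive.toPerm _ hinv) (fun z : (V → Bool) × (V → Bool) =>
      (mon [x, R y] z.1 - mon [x, y] z.1) * wt p r T z.1)
    have e3 : ∑ z : (V → Bool) × (V → Bool),
        (mon [x, R y] (μ z.1 z.2) - mon [x, y] (μ z.1 z.2)) * wt p r T (μ z.1 z.2) =
        ∑ z : (V → Bool) × (V → Bool),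
          (mon [x, R y] z.1 - mon [x, y] z.1) * wt p r T z.1 := e2
    rw [e3, Fintype.sum_prod_type_right]
    simp only [Finset.sum_const, Finset.card_univ, nsmul_eq_mul, Sm, ← Finset.sum_sub_distrib,
      sub_mul]
  rw [hsum] at h
  have hc : (0 : ℝ) < Fintype.card (V → Bool) := by exact_mod_cast Fintype.card_pos
  have h2 := nonneg_of_mul_nonneg_right h hc
  rw [cor, cor]
  exact div_le_div_of_nonneg_right (by linarith) (Z_pos p r T h0 h1).le

/-- Effect of switching on one bond `b` of strength `s`, in terms of truncated correlations. -/
lemma cor_add_bond (p r : E → V) (T : E → ℝ) (h0 : ∀ e, 0 ≤ T e) (h1 : ∀ e, T e < 1)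
    (b : E) (hb : T b = 0) (s : ℝ) (hs0 : 0 ≤ s) (A : List V) :
    cor p r T A ≤ cor p r (Function.update T b s) A ∧
    cor p r (Function.update T b s) A ≤ cor p r T A +
      s * (cor p r T (A ++ [p b, r b]) - cor p r T A * cor p r T [p b, r b]) := by
  have hZ := Z_pos p r T h0 h1
  have hw : ∀ σ, wt p r (Function.update T b s) σ =
      wt p r T σ * (1 + s * mon [p b, r b] σ) := by
    intro σ
    rw [wt, wt, ← Finset.mul_prod_erase _ _ (Finset.mem_univ b),
      ← Finset.mul_prod_erase _ _ (Finset.mem_univ b), hb]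
    have : ∏ e ∈ Finset.univ.erase b,
        (1 + Function.update T b s e * (bs (σ (p e)) * bs (σ (r e)))) =
        ∏ e ∈ Finset.univ.erase b, (1 + T e * (bs (σ (p e)) * bs (σ (r e)))) := by
      refine Finset.prod_congr rfl fun e he => ?_
      rw [Function.update_of_ne (Finset.ne_of_mem_erase he)]
    rw [this]
    simp [mon]
    ring
  have hS : ∀ B, Sm p r (Function.update T b s) (mon B) =
      Sm p r T (mon B) + s * Sm p r T (mon (B ++ [p b, r b])) := by
    intro B
    simp only [Sm, Finset.mul_sum, ← Finset.sum_add_distrib]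
    refine Finset.sum_congr rfl fun σ _ => ?_
    rw [hw, mon_append]; ring
  have h1' : (fun _ : V → Bool => (1 : ℝ)) = mon [] := by funext σ; rw [mon_nil]
  have hSA := hS A
  have hSZ := hS []
  rw [List.nil_append, ← h1'] at hSZ
  have g2 := griffiths_two p r T h0 h1 A [p b, r b]
  have hcb := cor_nonneg p r T h0 h1 [p b, r b]
  have hden : 0 < 1 + s * cor p r T [p b, r b] := by positivity
  have hcor : cor p r (Function.update T b s) A =
      (cor p r T A + s * cor p r T (A ++ [p b, r b])) / (1 + s * cor p r T [p b, r b]) := by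
    rw [cor, hSA, hSZ, cor, cor, cor]
    field_simp
  rw [hcor]
  set a := cor p r T A
  set ab := cor p r T (A ++ [p b, r b])
  set c := cor p r T [p b, r b]
  constructor
  · rw [le_div_iff₀ hden]; nlinarith
  · rw [div_le_iff₀ hden]
    have : 0 ≤ s * (ab - a * c) * (s * c) := by
      apply mul_nonneg (mul_nonneg hs0 (by linarith)) (by positivity)
    nlinarith

/-- A bond of strength `T_b` forces the correlation of its endpoints to be at least `T_b`. -/
lemma cor_bond_ge (p r : E → V) (T : E → ℝ) (h0 : ∀ e, 0 ≤ T e) (h1 : ∀ e, T e < 1) (b : E) :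
    T b ≤ cor p r T [p b, r b] := by
  have hZ := Z_pos p r T h0 h1
  rw [cor, le_div_iff₀ hZ]
  have h := griffiths_one p r (fun e => if e = b then 0 else 1)
    (fun e => if e = b then 1 - T b ^ 2 else T e)
    (fun e => by split_ifs <;> norm_num)
    (fun e => by split_ifs <;> nlinarith [h0 e, h0 b, h1 b]) []
  rw [Sm, Sm, Finset.mul_sum, ← sub_nonneg, ← Finset.sum_sub_distrib]
  refine h.trans_eq (Finset.sum_congr rfl fun σ _ => ?_)
  rw [wt, ← Finset.mul_prod_erase _ _ (Finset.mem_univ b),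
    ← Finset.mul_prod_erase _ _ (Finset.mem_univ b)]
  have : ∏ e ∈ Finset.univ.erase b, ((if e = b then (0 : ℝ) else 1) +
      (if e = b then 1 - T b ^ 2 else T e) * (bs (σ (p e)) * bs (σ (r e)))) =
      ∏ e ∈ Finset.univ.erase b, (1 + T e * (bs (σ (p e)) * bs (σ (r e)))) := by
    refine Finset.prod_congr rfl fun e he => ?_
    simp [Finset.ne_of_mem_erase he]
  rw [this]
  rcases bond_cases p r σ b with h' | h' <;> simp [mon, h'] <;> ring

end Generic

/-! ### Conditioning on the neighbours of a vertex of degree three, and the maximum principle -/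

section Site

set_option linter.unusedSectionVars false

variable {V E : Type*} [Fintype V] [DecidableEq V] [Fintype E] [DecidableEq E]

/-- The local picture at a site `z` of degree three: bonds `e1`, `e2` of strength `t` to `a`, `b`
and a bond `e3` of strength `s` to `c`. -/
structure SiteAt (p r : E → V) (T : E → ℝ) (t s : ℝ) (z a b c : V) (e1 e2 e3 : E) : Prop where
  h12 : e1 ≠ e2
  h13 : e1 ≠ e3
  h23 : e2 ≠ e3
  ha : a ≠ z
  hb : b ≠ z
  hc : c ≠ z
  b1 : ∀ σ : V → Bool, bs (σ (p e1)) * bs (σ (r e1)) = bs (σ z) * bs (σ a)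
  b2 : ∀ σ : V → Bool, bs (σ (p e2)) * bs (σ (r e2)) = bs (σ z) * bs (σ b)
  b3 : ∀ σ : V → Bool, bs (σ (p e3)) * bs (σ (r e3)) = bs (σ z) * bs (σ c)
  hp : ∀ e, e ≠ e1 → e ≠ e2 → e ≠ e3 → p e ≠ z
  hr : ∀ e, e ≠ e1 → e ≠ e2 → e ≠ e3 → r e ≠ z
  t1 : T e1 = t
  t2 : T e2 = t
  t3 : T e3 = s

/-- The conditional mean of a spin given three neighbouring spins `a`, `b`, `c`, written as
`α (a + b) + β c + γ a b c`. -/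
lemma cond_mean (t s : ℝ) (ht0 : 0 ≤ t) (ht1 : t < 1) (hs0 : 0 ≤ s) (hs1 : s < 1) :
    ∃ α β γ : ℝ, 0 ≤ α ∧ α ≤ t / (1 + t ^ 2) ∧ 0 ≤ β ∧ β ≤ s ∧ γ ≤ 0 ∧
      ∀ a b c : Bool,
        (1 - (α * (bs a + bs b) + β * bs c + γ * (bs a * bs b * bs c))) *
            ((1 + t * bs a) * (1 + t * bs b) * (1 + s * bs c)) +
          (-1 - (α * (bs a + bs b) + β * bs c + γ * (bs a * bs b * bs c))) *
            ((1 - t * bs a) * (1 - t * bs b) * (1 - s * bs c)) = 0 := by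
  have hs2 : 0 ≤ 1 - s ^ 2 := by nlinarith
  have h4 : 0 ≤ (1 + t ^ 2) ^ 2 - 4 * t ^ 2 := by
    have : (1 + t ^ 2) ^ 2 - 4 * t ^ 2 = (1 - t ^ 2) ^ 2 := by ring
    rw [this]; positivity
  have hD : 0 < (1 + t ^ 2) ^ 2 - 4 * t ^ 2 * s ^ 2 := by
    have h5 : 0 < (1 - t ^ 2) ^ 2 := by
      have : 0 < 1 - t ^ 2 := by nlinarith
      positivity
    nlinarith [mul_nonneg (sq_nonneg t) hs2]
  set D := (1 + t ^ 2) ^ 2 - 4 * t ^ 2 * s ^ 2 with hDdef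
  have hN : ((1 + t ^ 2) ^ 2 - 4 * t ^ 2) / D ≤ 1 := by
    rw [div_le_one hD]; nlinarith [mul_nonneg (sq_nonneg t) hs2]
  have hN0 : 0 ≤ ((1 + t ^ 2) ^ 2 - 4 * t ^ 2) / D := div_nonneg h4 hD.le
  set N := ((1 + t ^ 2) ^ 2 - 4 * t ^ 2) / D with hNdef
  refine ⟨t * (1 + t ^ 2) * (1 - s ^ 2) / D, s * (1 + N) / 2, s * (N - 1) / 2,
    by positivity, ?_, by positivity, by nlinarith, by nlinarith, ?_⟩
  · rw [div_le_div_iff₀ hD (by positivity)]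
    have : 0 ≤ t * (s ^ 2 * ((1 + t ^ 2) ^ 2 - 4 * t ^ 2)) := by positivity
    nlinarith
  · have hne := hD.ne'
    rintro (_ | _) (_ | _) (_ | _) <;> simp only [bs, hNdef] <;> field_simp <;>
      simp only [hDdef] <;> simp <;> ring

/-- Conditioning on all spins but one. The coefficients do not depend on the remaining spins. -/
lemma site_identity (p r : E → V) (T : E → ℝ) {t s : ℝ} (ht0 : 0 ≤ t) (ht1 : t < 1)
    (hs0 : 0 ≤ s) (hs1 : s < 1) {z a b c : V} {e1 e2 e3 : E}
    (h : SiteAt p r T t s z a b c e1 e2 e3) :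
    ∃ α β γ : ℝ, 0 ≤ α ∧ α ≤ t / (1 + t ^ 2) ∧ 0 ≤ β ∧ β ≤ s ∧ γ ≤ 0 ∧
      ∀ A : List V, z ∉ A → cor p r T (z :: A) =
        α * (cor p r T (a :: A) + cor p r T (b :: A)) + β * cor p r T (c :: A) +
          γ * cor p r T (a :: b :: c :: A) := by
  obtain ⟨α, β, γ, hα, hα', hβ, hβ', hγ, key⟩ := cond_mean t s ht0 ht1 hs0 hs1
  refine ⟨α, β, γ, hα, hα', hβ, hβ', hγ, fun A hA => ?_⟩
  -- the spin flip at `z`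
  set fl : (V → Bool) → V → Bool := fun σ => Function.update σ z (!(σ z)) with hfl
  have hinv : Function.Involutive fl := by
    intro σ; simp [hfl]
  have flz : ∀ σ, bs (fl σ z) = - bs (σ z) := by intro σ; simp [hfl, bs_not]
  have flne : ∀ σ v, v ≠ z → fl σ v = σ v := by
    intro σ v hv; simp [hfl, hv]
  have flA : ∀ σ, mon A (fl σ) = mon A σ := by
    intro σ
    unfold mon
    congr 1
    refine List.map_congr_left fun v hv => ?_
    rw [flne σ v (fun h => hA (h ▸ hv))]
  set rest : (V → Bool) → ℝ := fun σ => ∏ e ∈ ((Finset.univ.erase e1).erase e2).erase e3,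
    (1 + T e * (bs (σ (p e)) * bs (σ (r e)))) with hrest
  have flrest : ∀ σ, rest (fl σ) = rest σ := by
    intro σ
    refine Finset.prod_congr rfl fun e he => ?_
    simp only [Finset.mem_erase, Finset.mem_univ, and_true] at he
    rw [flne _ _ (h.hp e he.2.2 he.2.1 he.1), flne _ _ (h.hr e he.2.2 he.2.1 he.1)]
  have hw : ∀ σ, wt p r T σ = (1 + t * (bs (σ z) * bs (σ a))) *
      ((1 + t * (bs (σ z) * bs (σ b))) * ((1 + s * (bs (σ z) * bs (σ c))) * rest σ)) := by
    intro σ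
    rw [wt, ← Finset.mul_prod_erase _ _ (Finset.mem_univ e1),
      ← Finset.mul_prod_erase _ _ (Finset.mem_erase.2 ⟨h.h12.symm, Finset.mem_univ e2⟩),
      ← Finset.mul_prod_erase _ _ (Finset.mem_erase.2 ⟨h.h23.symm,
        Finset.mem_erase.2 ⟨h.h13.symm, Finset.mem_univ e3⟩⟩), h.b1, h.b2, h.b3, h.t1, h.t2, h.t3]
  set F : (V → Bool) → ℝ := fun σ => (bs (σ z) - (α * (bs (σ a) + bs (σ b)) + β * bs (σ c) +
    γ * (bs (σ a) * bs (σ b) * bs (σ c)))) * mon A σ * wt p r T σ with hF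
  have hzero : ∑ σ, F σ = 0 := by
    have h1 : ∑ σ, F (fl σ) = ∑ σ, F σ := Equiv.sum_comp (Function.Involutive.toPerm _ hinv) F
    have h2 : ∑ σ, (F σ + F (fl σ)) = 0 := by
      refine Finset.sum_eq_zero fun σ _ => ?_
      have hk := key (σ a) (σ b) (σ c)
      simp only [hF]
      rw [hw, hw, flz, flA, flrest, flne σ a h.ha, flne σ b h.hb, flne σ c h.hc]
      rcases bs_cases (σ z) with hz | hz <;> rw [hz] <;>
        linear_combination (mon A σ * rest σ) * hk
    rw [Finset.sum_add_distrib, h1] at h2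
    linarith
  have hS : Sm p r T (mon (z :: A)) = α * (Sm p r T (mon (a :: A)) + Sm p r T (mon (b :: A))) +
      β * Sm p r T (mon (c :: A)) + γ * Sm p r T (mon (a :: b :: c :: A)) := by
    rw [← sub_eq_zero, ← hzero]
    simp only [Sm, Finset.mul_sum, ← Finset.sum_add_distrib, ← Finset.sum_sub_distrib]
    refine Finset.sum_congr rfl fun σ _ => ?_
    simp only [hF, mon_cons]; ring
  simp only [cor, hS]
  ring

lemma site_sub (p r : E → V) (T : E → ℝ) (h0 : ∀ e, 0 ≤ T e) (h1 : ∀ e, T e < 1)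
    {t s s' : ℝ} (ht0 : 0 ≤ t) (ht1 : t < 1)
    (hs0 : 0 ≤ s) (hs1 : s < 1) (hss : s ≤ s') {z a b c : V} {e1 e2 e3 : E}
    (h : SiteAt p r T t s z a b c e1 e2 e3) (y : V) (hy : z ≠ y) :
    cor p r T [z, y] ≤ t / (1 + t ^ 2) * (cor p r T [a, y] + cor p r T [b, y]) +
      s' * cor p r T [c, y] := by
  obtain ⟨α, β, γ, hα, hα', hβ, hβ', hγ, key⟩ := site_identity p r T ht0 ht1 hs0 hs1 h
  rw [key [y] (by simpa using hy)]
  have := cor_nonneg p r T h0 h1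
  have g1 := mul_le_mul_of_nonneg_right hα' (add_nonneg (this [a, y]) (this [b, y]))
  have g2 := mul_le_mul_of_nonneg_right (hβ'.trans hss) (this [c, y])
  have g3 := mul_nonneg (neg_nonneg.2 hγ) (this [a, b, c, y])
  linarith

/-- The truncated four-point function `⟨σ_x σ_y σ_u σ_v⟩ - ⟨σ_x σ_y⟩⟨σ_u σ_v⟩`. -/
noncomputable def trunc (p r : E → V) (T : E → ℝ) (u v y x : V) : ℝ :=
  cor p r T ([x, y] ++ [u, v]) - cor p r T [x, y] * cor p r T [u, v]

lemma trunc_nonneg (p r : E → V) (T : E → ℝ) (h0 : ∀ e, 0 ≤ T e) (h1 : ∀ e, T e < 1)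
    (u v y x : V) : 0 ≤ trunc p r T u v y x :=
  sub_nonneg.2 (griffiths_two p r T h0 h1 [x, y] [u, v])

/-- The truncated function is subharmonic in `x` off `{y, u, v}`: the cubic term of `site_identity`
has a coefficient of negative sign and multiplies a truncated correlation, nonnegative by the
second Griffiths inequality. -/
lemma trunc_sub (p r : E → V) (T : E → ℝ) (h0 : ∀ e, 0 ≤ T e) (h1 : ∀ e, T e < 1)
    {t s s' : ℝ} (ht0 : 0 ≤ t) (ht1 : t < 1)
    (hs0 : 0 ≤ s) (hs1 : s < 1) (hss : s ≤ s') {z a b c : V} {e1 e2 e3 : E}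
    (h : SiteAt p r T t s z a b c e1 e2 e3) (u v y : V) (hy : z ≠ y) (hu : z ≠ u) (hv : z ≠ v) :
    trunc p r T u v y z ≤ t / (1 + t ^ 2) * (trunc p r T u v y a + trunc p r T u v y b) +
      s' * trunc p r T u v y c := by
  obtain ⟨α, β, γ, hα, hα', hβ, hβ', hγ, key⟩ := site_identity p r T ht0 ht1 hs0 hs1 h
  have k1 := key [y] (by simpa using hy)
  have k2 := key [y, u, v] (by simp [hy, hu, hv])
  have this := trunc_nonneg p r T h0 h1 u v y
  have g1 := mul_le_mul_of_nonneg_right hα' (add_nonneg (this a) (this b))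
  have g2 := mul_le_mul_of_nonneg_right (hβ'.trans hss) (this c)
  have g3 := mul_nonneg (neg_nonneg.2 hγ) (sub_nonneg.2
    (griffiths_two p r T h0 h1 [a, b, c, y] [u, v]))
  have hz : trunc p r T u v y z = α * (trunc p r T u v y a + trunc p r T u v y b) +
      β * trunc p r T u v y c + γ * (cor p r T ([a, b, c, y] ++ [u, v]) -
        cor p r T [a, b, c, y] * cor p r T [u, v]) := by
    simp only [trunc, List.cons_append, List.nil_append, k1, k2]; ring
  rw [hz]
  linarith

/-- Maximum principle for a killed walk. -/
lemma max_principle (α s : ℝ) (hα : 0 ≤ α) (hs : 0 ≤ s) (hlt : 2 * α + s < 1) (a b c : V → V)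
    (B : V → Prop) (F W : V → ℝ)
    (hF : ∀ z, ¬ B z → F z ≤ α * (F (a z) + F (b z)) + s * F (c z))
    (hW : ∀ z, ¬ B z → α * (W (a z) + W (b z)) + s * W (c z) ≤ W z)
    (hB : ∀ z, B z → F z ≤ W z) (z : V) : F z ≤ W z := by
  obtain ⟨m, -, hm⟩ := Finset.exists_max_image Finset.univ (fun z => F z - W z) ⟨z, Finset.mem_univ z⟩
  have hm' : ∀ v, F v - W v ≤ F m - W m := fun v => hm v (Finset.mem_univ v)
  suffices H : F m - W m ≤ 0 by linarith [hm' z]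
  by_cases hBm : B m
  · linarith [hB m hBm]
  · by_contra hpos
    push Not at hpos
    have h1 := mul_le_mul_of_nonneg_left (hm' (a m)) hα
    have h2 := mul_le_mul_of_nonneg_left (hm' (b m)) hα
    have h3 := mul_le_mul_of_nonneg_left (hm' (c m)) hs
    nlinarith [hF m hBm, hW m hBm]

end Site

/-! ### The hexagonal lattice on the torus: decay, cutting and reflection -/

section Hexagonal

set_option linter.unusedSectionVars false

/-- Vertices of the hexagonal lattice: `inl x` carries `σ_x` and `inr x` carries `τ_x`. -/
abbrev Vx (L : ℕ) := Torus L ⊕ Torus L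

/-- Bonds: `(x, 0)`, `(x, 1)`, `(x, 2)` join `σ_x` to `τ_{x↑}`, `τ_{x→}`, `τ_x`. -/
abbrev Bd (L : ℕ) := Torus L × Fin 3

/-- The `σ`-endpoint of a bond. -/
def pe {L : ℕ} (e : Bd L) : Vx L := Sum.inl e.1

/-- The `τ`-endpoint of a bond. -/
def re {L : ℕ} (e : Bd L) : Vx L :=
  Sum.inr (if e.2 = 0 then up e.1 else if e.2 = 1 then rt e.1 else e.1)

/-- Bond strengths: `t` on the bonds of `J`-type, and `ρ x` on the vertical bond at `x`. -/
noncomputable def Tt {L : ℕ} (t : ℝ) (ρ : Torus L → ℝ) (e : Bd L) : ℝ :=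
  if e.2 = 2 then ρ e.1 else t

/-- First neighbour along the chain. -/
def na {L : ℕ} : Vx L → Vx L
  | Sum.inl x => Sum.inr (up x)
  | Sum.inr y => Sum.inl (y.1, y.2 - 1)

/-- Second neighbour along the chain. -/
def nb {L : ℕ} : Vx L → Vx L
  | Sum.inl x => Sum.inr (rt x)
  | Sum.inr y => Sum.inl (y.1 - 1, y.2)

/-- Neighbour across the vertical bond, in an adjacent chain. -/
def nc {L : ℕ} : Vx L → Vx L
  | Sum.inl x => Sum.inr x
  | Sum.inr y => Sum.inl y

/-- The torus site under a vertex. -/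
def base {L : ℕ} : Vx L → Torus L
  | Sum.inl x => x
  | Sum.inr y => y

/-- The index (modulo `2L`) of the antidiagonal chain of `J`-bonds containing a vertex. -/
def ch {L : ℕ} : Vx L → ZMod (2 * L)
  | Sum.inl x => x.1 + x.2
  | Sum.inr y => y.1 + y.2 - 1

/-- The bond to the first neighbour. -/
def ea {L : ℕ} : Vx L → Bd L
  | Sum.inl x => (x, 0)
  | Sum.inr y => ((y.1, y.2 - 1), 0)

/-- The bond to the second neighbour. -/
def eb {L : ℕ} : Vx L → Bd L
  | Sum.inl x => (x, 1)
  | Sum.inr y => ((y.1 - 1, y.2), 1)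

lemma ch_na {L : ℕ} (z : Vx L) : ch (na z) = ch z := by
  rcases z with x | y <;> simp [ch, na, up] <;> ring

lemma ch_nb {L : ℕ} (z : Vx L) : ch (nb z) = ch z := by
  rcases z with x | y <;> simp [ch, nb, rt] <;> ring

lemma ch_nc {L : ℕ} (z : Vx L) : ch (nc z) = ch z + 1 ∨ ch (nc z) = ch z - 1 := by
  rcases z with x | y <;> simp [ch, nc]

lemma fin3_cases (i : Fin 3) : i = 0 ∨ i = 1 ∨ i = 2 := by
  fin_cases i <;> simp

lemma siteAt {L : ℕ} (t : ℝ) (ρ : Torus L → ℝ) (z : Vx L) :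
    SiteAt pe re (Tt t ρ) t (ρ (base z)) z (na z) (nb z) (nc z) (ea z) (eb z) (base z, 2) := by
  constructor
  · rcases z with x | y <;> simp [ea, eb]
  · rcases z with x | y <;> simp [ea, base]
  · rcases z with x | y <;> simp [eb, base]
  · rcases z with x | y <;> simp [na]
  · rcases z with x | y <;> simp [nb]
  · rcases z with x | y <;> simp [nc]
  · intro σ; rcases z with x | y <;> simp [ea, na, pe, re, up, mul_comm]
  · intro σ; rcases z with x | y <;> simp [eb, nb, pe, re, rt, mul_comm]
  · intro σ; rcases z with x | y <;> simp [base, nc, pe, re, mul_comm]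
  · rintro ⟨x, i⟩ h1 h2 h3 h
    rcases z with y | y
    · simp only [pe, Sum.inl.injEq] at h
      subst h
      rcases fin3_cases i with rfl | rfl | rfl <;> simp [ea, eb, base] at h1 h2 h3
    · simp [pe] at h
  · rintro ⟨x, i⟩ h1 h2 h3 h
    rcases z with y | y
    · simp [re] at h
    · simp only [re, Sum.inr.injEq] at h
      subst h
      rcases fin3_cases i with rfl | rfl | rfl <;> simp [ea, eb, base, up, rt] at h1 h2 h3
  · rcases z with x | y <;> simp [Tt, ea]
  · rcases z with x | y <;> simp [Tt, eb]
  · simp [Tt]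

/-- Distance to `0` on the cycle `ℤ/2L`. -/
def Dz {L : ℕ} (c : ZMod (2 * L)) : ℕ := c.valMinAbs.natAbs

lemma Dz_zero {L : ℕ} : Dz (0 : ZMod (2 * L)) = 0 := by simp [Dz]

lemma Dz_step {L : ℕ} [NeZero L] (a b : ZMod (2 * L)) (h : a = b + 1 ∨ a = b - 1) :
    Dz a ≤ Dz b + 1 := by
  have key : ∀ u v : ZMod (2 * L), Dz (u + v) ≤ Dz u + Dz v := fun u v =>
    (ZMod.natAbs_valMinAbs_add_le u v).trans (Int.natAbs_add_le _ _)
  have h1 : Dz (1 : ZMod (2 * L)) ≤ 1 := by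
    have hL := NeZero.pos L
    have := ZMod.valMinAbs_natCast_of_le_half (n := 2 * L) (a := 1) (by omega)
    rw [Nat.cast_one] at this
    simp [Dz, this]
  have h2 : Dz (-1 : ZMod (2 * L)) ≤ 1 := by
    have : Dz (-1 : ZMod (2 * L)) = Dz (1 : ZMod (2 * L)) := ZMod.natAbs_valMinAbs_neg _
    omega
  rcases h with rfl | rfl
  · exact (key _ _).trans (by omega)
  · rw [sub_eq_add_neg]; exact (key _ _).trans (by omega)

lemma le_Dz {L : ℕ} [NeZero L] (a : ℤ) (h1 : -L ≤ a) (h2 : a ≤ L) :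
    a.natAbs ≤ Dz (a : ZMod (2 * L)) := by
  have h := ZMod.coe_valMinAbs (a : ZMod (2 * L))
  rw [ZMod.intCast_eq_intCast_iff_dvd_sub] at h
  obtain ⟨j, hj⟩ := h
  unfold Dz
  set m := (a : ZMod (2 * L)).valMinAbs
  push_cast at hj
  rcases lt_trichotomy j 0 with hj0 | hj0 | hj0
  · have : (L : ℤ) * (j + 1) ≤ 0 := mul_nonpos_of_nonneg_of_nonpos (by positivity) (by omega)
    have : a.natAbs ≤ L := by omega
    have : m ≥ L := by nlinarith
    omega
  · subst hj0
    have : m = a := by linarith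
    rw [this]
  · have : (0 : ℤ) ≤ (L : ℤ) * (j - 1) := mul_nonneg (by positivity) (by omega)
    have : a.natAbs ≤ L := by omega
    have : m ≤ -L := by nlinarith
    omega

section Bounds

variable {L : ℕ} [NeZero L] {t s κ : ℝ} (ρ : Torus L → ℝ)

/-- Standing assumptions on the parameters; `κ` is the decay rate per crossed chain. -/
structure Par (t s κ : ℝ) : Prop where
  t0 : 0 < t
  t1 : t < 1
  s0 : 0 < s
  s1 : s < 1
  k0 : 0 < κ
  k1 : κ ≤ 1
  hk : s = κ * (1 - 2 * (t / (1 + t ^ 2)))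
  hs : 2 * (t / (1 + t ^ 2)) + s < 1

lemma Par.a0 (h : Par t s κ) : 0 < t / (1 + t ^ 2) := by
  have := h.t0; positivity

lemma Par.sk (h : Par t s κ) : s ≤ κ := by
  have := h.a0; rw [h.hk]; nlinarith [h.k0]

lemma Tt_nonneg (h : Par t s κ) (h0 : ∀ x, 0 ≤ ρ x) (e : Bd L) : 0 ≤ Tt t ρ e := by
  unfold Tt; split_ifs; exacts [h0 _, h.t0.le]

lemma Tt_lt (h : Par t s κ) (h1 : ∀ x, ρ x ≤ s) (e : Bd L) : Tt t ρ e < 1 := by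
  unfold Tt; split_ifs; exacts [(h1 _).trans_lt h.s1, h.t1]

/-- The barrier `κ ^ dist` (distance between chains) is superharmonic. -/
lemma barrier (h : Par t s κ) (d : ZMod (2 * L)) (z : Vx L) :
    t / (1 + t ^ 2) * (κ ^ Dz (ch (na z) - d) + κ ^ Dz (ch (nb z) - d)) +
      s * κ ^ Dz (ch (nc z) - d) ≤ κ ^ Dz (ch z - d) := by
  rw [ch_na, ch_nb]
  have h1 : Dz (ch z - d) ≤ Dz (ch (nc z) - d) + 1 := by
    apply Dz_step
    rcases ch_nc z with e | e <;> rw [e]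
    · right; ring
    · left; ring
  have h2 := pow_le_pow_of_le_one h.k0.le h.k1 h1
  rw [pow_succ] at h2
  have h3 : 0 ≤ 1 - 2 * (t / (1 + t ^ 2)) := by linarith [h.hs, h.s0]
  have h4 := mul_le_mul_of_nonneg_left h2 h3
  have h5 : s * κ ^ Dz (ch (nc z) - d) =
    (1 - 2 * (t / (1 + t ^ 2))) * (κ ^ Dz (ch (nc z) - d) * κ) := by
    conv_lhs => rw [h.hk]
    ring
  rw [h5]
  linarith

lemma two_point_le (h : Par t s κ) (h0 : ∀ x, 0 ≤ ρ x) (h1 : ∀ x, ρ x ≤ s) (z y : Vx L) :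
    cor pe re (Tt t ρ) [z, y] ≤ κ ^ Dz (ch z - ch y) := by
  have hT0 := Tt_nonneg ρ h h0
  have hT1 := Tt_lt ρ h h1
  refine max_principle (t / (1 + t ^ 2)) s h.a0.le h.s0.le h.hs na nb nc (fun z => z = y)
    (fun z => cor pe re (Tt t ρ) [z, y]) (fun z => κ ^ Dz (ch z - ch y)) ?_ ?_ ?_ z
  · intro z hz
    exact site_sub pe re _ hT0 hT1 h.t0.le h.t1 (h0 _) ((h1 _).trans_lt h.s1) (h1 _)
      (siteAt t ρ z) y hz
  · intro z _
    exact barrier h (ch y) z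
  · rintro z rfl
    simp [cor_self pe re _ hT0 hT1, Dz_zero]

lemma trunc_le (h : Par t s κ) (h0 : ∀ x, 0 ≤ ρ x) (h1 : ∀ x, ρ x ≤ s) (u v y x : Vx L) :
    trunc pe re (Tt t ρ) u v y x ≤ κ ^ Dz (ch x - ch u) * κ ^ Dz (ch y - ch v) +
      κ ^ Dz (ch x - ch v) * κ ^ Dz (ch y - ch u) := by
  have hT0 := Tt_nonneg ρ h h0
  have hT1 := Tt_lt ρ h h1
  have hk := h.k0
  refine max_principle (t / (1 + t ^ 2)) s h.a0.le h.s0.le h.hs na nb nc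
    (fun z => z = y ∨ z = u ∨ z = v) (fun z => trunc pe re (Tt t ρ) u v y z)
    (fun x => κ ^ Dz (ch x - ch u) * κ ^ Dz (ch y - ch v) +
      κ ^ Dz (ch x - ch v) * κ ^ Dz (ch y - ch u)) ?_ ?_ ?_ x
  · intro z hz
    push Not at hz
    exact trunc_sub pe re _ hT0 hT1 h.t0.le h.t1 (h0 _) ((h1 _).trans_lt h.s1) (h1 _)
      (siteAt t ρ z) u v y hz.1 hz.2.1 hz.2.2
  · intro z _
    have b1 := mul_le_mul_of_nonneg_right (barrier h (ch u) z) (pow_nonneg hk.le (Dz (ch y - ch v)))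
    have b2 := mul_le_mul_of_nonneg_right (barrier h (ch v) z) (pow_nonneg hk.le (Dz (ch y - ch u)))
    linarith
  · have hcn := cor_nonneg pe re _ hT0 hT1
    rintro z (rfl | rfl | rfl)
    · have e : cor pe re (Tt t ρ) ([z, z] ++ [u, v]) = cor pe re (Tt t ρ) [u, v] :=
        cor_congr pe re _ fun σ => by simp [mon, ← mul_assoc, bs_mul_self]
      rw [trunc, e, cor_self pe re _ hT0 hT1, one_mul, sub_self]
      positivity
    · have e : cor pe re (Tt t ρ) ([z, y] ++ [z, v]) = cor pe re (Tt t ρ) [y, v] :=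
        cor_congr pe re _ fun σ => by
          simp [mon]; linear_combination (bs (σ y) * bs (σ v)) * bs_mul_self (σ z)
      have := two_point_le ρ h h0 h1 y v
      have := mul_nonneg (hcn [z, y]) (hcn [z, v])
      rw [trunc, e, sub_self, Dz_zero, pow_zero, one_mul]
      have : 0 ≤ κ ^ Dz (ch z - ch v) * κ ^ Dz (ch y - ch z) := by positivity
      linarith
    · have e : cor pe re (Tt t ρ) ([z, y] ++ [u, z]) = cor pe re (Tt t ρ) [y, u] :=
        cor_congr pe re _ fun σ => by
          simp [mon]; linear_combination (bs (σ y) * bs (σ u)) * bs_mul_self (σ z)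
      have := two_point_le ρ h h0 h1 y u
      have := mul_nonneg (hcn [z, y]) (hcn [u, z])
      rw [trunc, e, sub_self, Dz_zero, pow_zero, one_mul]
      have : 0 ≤ κ ^ Dz (ch z - ch u) * κ ^ Dz (ch y - ch z) := by positivity
      linarith

end Bounds

/-- Vertical bond strengths equal to `s`, except for those in `C`, which are removed. -/
noncomputable def cutAt {L : ℕ} (s : ℝ) (C : Finset (Torus L)) (x : Torus L) : ℝ :=
  if x ∈ C then 0 else s

/-- Removing vertical bonds lowers the correlations, by an amount controlled by the barrier. -/
lemma cut_bounds {L : ℕ} [NeZero L] {t s κ : ℝ} (h : Par t s κ) (x y : Vx L)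
    (C : Finset (Torus L)) :
    cor pe re (Tt t (cutAt s C)) [x, y] ≤ cor pe re (Tt t (cutAt s ∅)) [x, y] ∧
    cor pe re (Tt t (cutAt s ∅)) [x, y] ≤ cor pe re (Tt t (cutAt s C)) [x, y] +
      ∑ z ∈ C, s * (κ ^ Dz (ch x - (z.1 + z.2)) * κ ^ Dz (ch y - (z.1 + z.2 - 1)) +
        κ ^ Dz (ch x - (z.1 + z.2 - 1)) * κ ^ Dz (ch y - (z.1 + z.2))) := by
  have hc0 : ∀ C x, 0 ≤ cutAt (L := L) s C x := by
    intro C x; unfold cutAt; split_ifs; exacts [le_rfl, h.s0.le]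
  have hc1 : ∀ C x, cutAt (L := L) s C x ≤ s := by
    intro C x; unfold cutAt; split_ifs; exacts [h.s0.le, le_rfl]
  induction C using Finset.induction_on with
  | empty => simp
  | insert z C hz ih =>
    have hup : Tt t (cutAt s C) = Function.update (Tt t (cutAt s (insert z C))) (z, 2) s := by
      funext ⟨w, i⟩
      by_cases hw : (w, i) = (z, 2)
      · rw [hw, Function.update_self]; simp [Tt, cutAt, hz]
      · rw [Function.update_of_ne hw]
        by_cases hi : i = 2
        · have hwz : w ≠ z := fun e => hw (by rw [e, hi])
          simp [Tt, cutAt, hi, hwz]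
        · simp [Tt, hi]
    have hb := cor_add_bond pe re (Tt t (cutAt s (insert z C)))
      (Tt_nonneg _ h (hc0 _)) (Tt_lt _ h (hc1 _)) (z, 2) (by simp [Tt, cutAt]) s h.s0.le [x, y]
    rw [← hup] at hb
    have ht := trunc_le (cutAt s (insert z C)) h (hc0 _) (hc1 _) (pe (z, 2)) (re (z, 2)) y x
    have ht2 := mul_le_mul_of_nonneg_left ht h.s0.le
    refine ⟨hb.1.trans ih.1, ih.2.trans ?_⟩
    rw [Finset.sum_insert hz]
    have e1 : ch (pe (z, 2)) = z.1 + z.2 := by simp [ch, pe]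
    have e2 : ch (re (z, 2)) = z.1 + z.2 - 1 := by simp [ch, re]
    rw [e1, e2, trunc] at ht2
    linarith [hb.2]

/-- The reflection exchanging `σ` and `τ` and the two endpoints of each vertical bond of the
antidiagonal `i + j = 0`. -/
def Rf {L : ℕ} : Vx L → Vx L
  | Sum.inl x => Sum.inr (-x.2, -x.1)
  | Sum.inr x => Sum.inl (-x.2, -x.1)

/-- Action of the reflection on bonds. -/
def Rb {L : ℕ} (e : Bd L) : Bd L :=
  if e.2 = 0 then ((-e.1.2 - 1, -e.1.1), 1)
  else if e.2 = 1 then ((-e.1.2, -e.1.1 - 1), 0) else ((-e.1.2, -e.1.1), 2)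

lemma Rf_Rf {L : ℕ} (v : Vx L) : Rf (Rf v) = v := by
  rcases v with x | x <;> simp [Rf]

lemma Rb_Rb {L : ℕ} (e : Bd L) : Rb (Rb e) = e := by
  rcases e with ⟨x, i⟩
  rcases fin3_cases i with rfl | rfl | rfl <;> simp [Rb]

lemma pe_Rb {L : ℕ} (e : Bd L) : pe (Rb e) = Rf (re e) := by
  rcases e with ⟨x, i⟩
  rcases fin3_cases i with rfl | rfl | rfl <;> simp [Rb, Rf, pe, re, up, rt] <;> ring

lemma re_Rb {L : ℕ} (e : Bd L) : re (Rb e) = Rf (pe e) := by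
  rcases e with ⟨x, i⟩
  rcases fin3_cases i with rfl | rfl | rfl <;> simp [Rb, Rf, pe, re, up, rt]

lemma ch_Rf {L : ℕ} (v : Vx L) : ch (Rf v) = - ch v - 1 := by
  rcases v with x | x <;> simp [Rf, ch]

lemma val_refl {L : ℕ} [NeZero L] (c : ZMod (2 * L)) :
    (-c - 1).val = 2 * L - 1 - c.val := by
  have hc := ZMod.val_lt c
  have : -c - 1 = ((2 * L - 1 - c.val : ℕ) : ZMod (2 * L)) := by
    rw [Nat.sub_sub, Nat.cast_sub (by omega)]
    simp only [Nat.cast_add, Nat.cast_one, ZMod.natCast_self, ZMod.natCast_zmod_val]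
    ring
  rw [this, ZMod.val_natCast_of_lt (by omega)]

/-- The vertical bonds on the antidiagonal `i + j = L`, opposite to the reflection line. -/
def seam (L : ℕ) [NeZero L] : Finset (Torus L) :=
  Finset.univ.filter fun x => x.1 + x.2 = (L : ZMod (2 * L))

lemma card_seam (L : ℕ) [NeZero L] : (seam L).card ≤ 2 * L := by
  have : (seam L).card ≤ (Finset.univ : Finset (ZMod (2 * L))).card := by
    refine Finset.card_le_card_of_injOn Prod.fst (fun _ _ => Finset.mem_univ _) ?_
    rintro ⟨a, b⟩ h1 ⟨c, d⟩ h2 (rfl : a = c)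
    simp only [seam, Finset.coe_filter, Finset.mem_univ, true_and, Set.mem_ofPred_eq] at h1 h2
    have : b = d := add_left_cancel (h1.trans h2.symm)
    rw [this]
  simpa using this

lemma val_pred {L : ℕ} [NeZero L] (c : ZMod (2 * L)) (hc : c ≠ 0) :
    (c - 1).val = c.val - 1 := by
  have h1 := ZMod.val_lt c
  have h2 : 0 < c.val := by rw [ZMod.val_pos]; exact hc
  have : c - 1 = ((c.val - 1 : ℕ) : ZMod (2 * L)) := by
    rw [Nat.cast_sub (by omega)]
    simp
  rw [this, ZMod.val_natCast_of_lt (by omega)]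

/-- On the torus the reflection maps the seam to itself by a glide, so the reflection inequality
applies after the seam has been cut. -/
lemma cut_reflection {L : ℕ} [NeZero L] {t s κ : ℝ} (h : Par t s κ) (x y : Vx L)
    (hx : (ch x).val < L) (hy : L ≤ (ch y).val) :
    cor pe re (Tt t (cutAt s (seam L))) [x, y] ≤
      cor pe re (Tt t (cutAt s (seam L))) [x, Rf y] := by
  have hL := NeZero.pos L
  have hc0 : ∀ x, 0 ≤ cutAt (L := L) s (seam L) x := by
    intro x; unfold cutAt; split_ifs; exacts [le_rfl, h.s0.le]
  have hc1 : ∀ x, cutAt (L := L) s (seam L) x ≤ s := by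
    intro x; unfold cutAt; split_ifs; exacts [h.s0.le, le_rfl]
  refine reflection pe re _ (Tt_nonneg _ h hc0) (Tt_lt _ h hc1) Rf Rf_Rf
    (fun v => (ch v).val < L) ?_ (Function.Involutive.toPerm Rb Rb_Rb) ?_ pe_Rb re_Rb ?_ x y hx
    (by simpa using hy)
  · intro v
    have := ZMod.val_lt (ch v)
    rw [ch_Rf, val_refl]
    omega
  · rintro ⟨x, i⟩
    have key : (-x.2, -x.1) ∈ seam L ↔ x ∈ seam L := by
      have hneg : -(L : ZMod (2 * L)) = L := by
        rw [neg_eq_iff_add_eq_zero, ← two_mul]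
        exact_mod_cast ZMod.natCast_self (2 * L)
      simp only [seam, Finset.mem_filter, Finset.mem_univ, true_and]
      constructor
      · intro e; rw [← hneg, ← e]; ring
      · intro e; rw [← hneg, ← e]; ring
    rcases fin3_cases i with rfl | rfl | rfl <;>
      simp [Function.Involutive.toPerm, Rb, Tt, cutAt, key]
  · rintro ⟨x, i⟩ hT
    rcases fin3_cases i with rfl | rfl | rfl
    · have : ch (re (x, 0)) = ch (pe (x, 0)) := by simp [ch, pe, re, up]; ring
      rw [this]; tauto
    · have : ch (re (x, 1)) = ch (pe (x, 1)) := by simp [ch, pe, re, rt]; ring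
      rw [this]; tauto
    · have e1 : ch (pe (x, 2)) = x.1 + x.2 := by simp [ch, pe]
      have e2 : ch (re (x, 2)) = x.1 + x.2 - 1 := by simp [ch, re]
      rw [e1, e2]
      have hns : x ∉ seam L := by
        intro hx; apply hT; simp [Tt, cutAt, hx]
      by_cases hz : x.1 + x.2 = 0
      · right; right
        refine ⟨by rw [hz, ZMod.val_zero]; exact hL, ?_⟩
        have h1 : -x.2 = x.1 := (eq_neg_of_add_eq_zero_left hz).symm
        have h2 : -x.1 = x.2 := (eq_neg_of_add_eq_zero_right hz).symm
        simp [re, pe, Rf, h1, h2]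
      · rw [val_pred _ hz]
        have hne : (x.1 + x.2).val ≠ L := by
          intro e
          apply hns
          simp only [seam, Finset.mem_filter, Finset.mem_univ, true_and]
          have hv := ZMod.natCast_zmod_val (x.1 + x.2)
          rw [e] at hv
          exact hv.symm
        omega

/-- Reflection inequality on the uncut torus, with an error of the order of the weight of the
paths joining `x` to `y` through the seam. -/
lemma approx_reflection {L : ℕ} [NeZero L] {t s κ : ℝ} (h : Par t s κ) (x y : Vx L)
    (hx : (ch x).val < L) (hy : L ≤ (ch y).val) :
    cor pe re (Tt t (cutAt s ∅)) [x, y] ≤ cor pe re (Tt t (cutAt s ∅)) [x, Rf y] +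
      4 * L * κ ^ ((ch y).val - (ch x).val) := by
  have h1 := (cut_bounds h x y (seam L)).2
  have h2 := (cut_bounds h x (Rf y) (seam L)).1
  have h3 := cut_reflection h x y hx hy
  have hk := h.k0
  have hlt := ZMod.val_lt (ch y)
  set n := (ch y).val - (ch x).val with hn
  have hterm : ∀ z ∈ seam L, s * (κ ^ Dz (ch x - (z.1 + z.2)) * κ ^ Dz (ch y - (z.1 + z.2 - 1)) +
        κ ^ Dz (ch x - (z.1 + z.2 - 1)) * κ ^ Dz (ch y - (z.1 + z.2))) ≤ 2 * κ ^ n := by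
    intro z hz
    have hz' : z.1 + z.2 = (L : ZMod (2 * L)) := by
      simpa [seam] using hz
    rw [hz', ← pow_add, ← pow_add]
    have cx : ch x = (((ch x).val : ℤ) : ZMod (2 * L)) := by simp
    have cy : ch y = (((ch y).val : ℤ) : ZMod (2 * L)) := by simp
    have d1 := le_Dz (L := L) ((ch x).val - L) (by omega) (by omega)
    have d2 := le_Dz (L := L) ((ch y).val - (L - 1)) (by omega) (by omega)
    have d3 := le_Dz (L := L) ((ch x).val - (L - 1)) (by omega) (by omega)
    have d4 := le_Dz (L := L) ((ch y).val - L) (by omega) (by omega)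
    push_cast at d1 d2 d3 d4
    rw [ZMod.natCast_zmod_val] at d1 d2 d3 d4
    have p1 : κ ^ (Dz (ch x - (L : ZMod (2 * L))) + Dz (ch y - ((L : ZMod (2 * L)) - 1))) ≤
        κ ^ (n - 1) := pow_le_pow_of_le_one hk.le h.k1 (by omega)
    have p2 : κ ^ (Dz (ch x - ((L : ZMod (2 * L)) - 1)) + Dz (ch y - (L : ZMod (2 * L)))) ≤
        κ ^ (n - 1) := pow_le_pow_of_le_one hk.le h.k1 (by omega)
    have p3 : κ ^ n = κ * κ ^ (n - 1) := by
      rw [← pow_succ']; congr 1; omega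
    have p4 : 0 < κ ^ (n - 1) := by positivity
    rw [p3]
    calc _ ≤ s * (κ ^ (n - 1) + κ ^ (n - 1)) := by
          apply mul_le_mul_of_nonneg_left (add_le_add p1 p2) h.s0.le
      _ ≤ κ * (κ ^ (n - 1) + κ ^ (n - 1)) := by
          apply mul_le_mul_of_nonneg_right h.sk (by positivity)
      _ = _ := by ring
  have h4 := Finset.sum_le_card_nsmul _ _ _ hterm
  rw [nsmul_eq_mul] at h4
  have h5 : ((seam L).card : ℝ) ≤ 2 * L := by exact_mod_cast card_seam L
  have h6 : ((seam L).card : ℝ) * (2 * κ ^ n) ≤ 2 * L * (2 * κ ^ n) :=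
    mul_le_mul_of_nonneg_right h5 (by positivity)
  linarith

end Hexagonal

/-! ### Two-point function along an antidiagonal chain -/

section Chain

set_option linter.unusedSectionVars false

/-- The two-point function of the full torus model. -/
noncomputable def G {L : ℕ} [NeZero L] (t s : ℝ) (u v : Vx L) : ℝ :=
  cor pe re (Tt t (cutAt s ∅)) [u, v]

/-- Translation of vertices by `a`. -/
def shV {L : ℕ} (a : Torus L) : Vx L ≃ Vx L := Equiv.sumCongr (Equiv.addRight a) (Equiv.addRight a)

/-- Translation of bonds by `a`. -/
def shE {L : ℕ} (a : Torus L) : Bd L ≃ Bd L := Equiv.prodCongr (Equiv.addRight a) (Equiv.refl _)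

lemma Tt_cut_empty {L : ℕ} (t s : ℝ) (e : Bd L) :
    Tt t (cutAt s ∅) e = if e.2 = 2 then s else t := by
  simp [Tt, cutAt]

variable {L : ℕ} [NeZero L] {t s κ : ℝ}

lemma G_shift (a : Torus L) (u v : Vx L) : G t s (shV a u) (shV a v) = G t s u v := by
  refine cor_map pe re _ (shV a) (shE a) ?_ ?_ [u, v]
  · rintro ⟨x, i⟩
    simp [Tt_cut_empty, shE]
  · rintro ⟨x, i⟩
    left
    rcases fin3_cases i with rfl | rfl | rfl <;>
      simp [shE, shV, pe, re, up, rt, Prod.ext_iff, add_right_comm]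

lemma G_Rf (u v : Vx L) : G t s (Rf u) (Rf v) = G t s u v := by
  refine cor_map pe re _ (Function.Involutive.toPerm Rf Rf_Rf)
    (Function.Involutive.toPerm Rb Rb_Rb) ?_ ?_ [u, v]
  · rintro ⟨x, i⟩
    rcases fin3_cases i with rfl | rfl | rfl <;>
      simp [Tt_cut_empty, Function.Involutive.toPerm, Rb]
  · intro e
    right
    exact ⟨pe_Rb e, re_Rb e⟩

lemma G_comm (u v : Vx L) : G t s u v = G t s v u := cor_comm _ _ _ _ _

lemma cut0_nonneg (h : Par t s κ) (e : Bd L) : 0 ≤ Tt t (cutAt s ∅) e := by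
  rw [Tt_cut_empty]; split_ifs; exacts [h.s0.le, h.t0.le]

lemma cut0_lt (h : Par t s κ) (e : Bd L) : Tt t (cutAt s ∅) e < 1 := by
  rw [Tt_cut_empty]; split_ifs; exacts [h.s1, h.t1]

lemma G_nonneg (h : Par t s κ) (u v : Vx L) : 0 ≤ G t s u v :=
  cor_nonneg _ _ _ (cut0_nonneg h) (cut0_lt h) _

lemma val_neg_one : (-1 : ZMod (2 * L)).val = 2 * L - 1 := by
  have := val_refl (L := L) 0
  simpa using this

/-- A vertex `τ_z` across the reflection line is less correlated with `σ_0` than `σ_z`, up to an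
error. -/
lemma reflect_even (h : Par t s κ) (z : Torus L) (hz : z.1 + z.2 = 0) :
    G t s (Sum.inl 0) (Sum.inr z) ≤ G t s (Sum.inl 0) (Sum.inl z) + 4 * L * κ ^ (2 * L - 1) := by
  have hL := NeZero.pos L
  have cx : ch (Sum.inl 0 : Vx L) = 0 := by simp [ch]
  have cy : ch (Sum.inr z : Vx L) = -1 := by simp [ch, hz]
  have := approx_reflection h (Sum.inl 0) (Sum.inr z) (by rw [cx, ZMod.val_zero]; exact hL)
    (by rw [cy, val_neg_one]; omega)
  rw [cx, cy, val_neg_one, ZMod.val_zero, Nat.sub_zero] at this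
  have h1 : -z.2 = z.1 := (eq_neg_of_add_eq_zero_left hz).symm
  have h2 : -z.1 = z.2 := (eq_neg_of_add_eq_zero_right hz).symm
  simpa only [G, Rf, h1, h2] using this

/-- The companion of `reflect_even` for the other sublattice. -/
lemma reflect_odd (h : Par t s κ) (w : Torus L) (hw : w.1 + w.2 = 1) :
    G t s (Sum.inl 0) (Sum.inl w) ≤ G t s (Sum.inl 0) (Sum.inr w) + 4 * L * κ ^ (2 * L - 1) := by
  have hL := NeZero.pos L
  have h2 : w.2 = 1 - w.1 := by linear_combination hw
  have cx : ch (Sum.inl (w.1 - 1, w.2) : Vx L) = 0 := by simp [ch, h2]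
  have cy : ch (Sum.inl (-1, 0) : Vx L) = -1 := by simp [ch]
  have key := approx_reflection h (Sum.inl (w.1 - 1, w.2)) (Sum.inl (-1, 0))
    (by rw [cx, ZMod.val_zero]; exact hL) (by rw [cy, val_neg_one]; omega)
  rw [cx, cy, val_neg_one, ZMod.val_zero, Nat.sub_zero] at key
  change G t s _ _ ≤ G t s _ _ + _ at key
  rw [← G_shift (1, 0), ← G_Rf _ (Rf _), Rf_Rf, ← G_shift (1, 0) (Rf _)] at key
  have e1 : shV (1, 0) (Sum.inl (w.1 - 1, w.2) : Vx L) = Sum.inl w := by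
    simp [shV]
  have e2 : shV (1, 0) (Sum.inl (-1, 0) : Vx L) = Sum.inl 0 := by
    simp [shV, Prod.ext_iff]
  have e3 : shV (1, 0) (Rf (Sum.inl (w.1 - 1, w.2)) : Vx L) = Sum.inr w := by
    simp [shV, Rf, Prod.ext_iff, h2]
  rw [e1, e2, e3] at key
  rwa [G_comm _ (Sum.inl w), G_comm _ (Sum.inr w)]

/-- The diagonal two-point function is bounded by the one at the antipode `(L, L)`, up to an
error: translate by `(L - ℓ, 0)`, reflect, translate back, and reflect once more. -/
lemma diag_le_antipode (h : Par t s κ) (ℓ : ℕ) (h0 : 0 < ℓ) (h1 : ℓ < L) :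
    G t s (Sum.inl (0 : Torus L)) (Sum.inl ((ℓ : ZMod (2 * L)), (ℓ : ZMod (2 * L)))) ≤
      G t s (Sum.inl (0 : Torus L)) (Sum.inl ((L : ZMod (2 * L)), (L : ZMod (2 * L)))) +
        4 * L * κ ^ (2 * ℓ) + 4 * L * κ ^ (2 * L - 1) := by
  obtain ⟨m, rfl⟩ : ∃ m, L = m + ℓ := ⟨L - ℓ, by omega⟩
  set L := m + ℓ with hLdef
  have h2L : (2 : ZMod (2 * L)) * (m + ℓ) = 0 := by
    have := ZMod.natCast_self (2 * L)
    rw [hLdef] at this ⊢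
    push_cast at this
    exact_mod_cast this
  have cx : ch (Sum.inl ((m : ZMod (2 * L)), 0) : Vx L) = ((m : ℕ) : ZMod (2 * L)) := by simp [ch]
  have cy : ch (Sum.inl ((m : ZMod (2 * L)) + ℓ, (ℓ : ZMod (2 * L))) : Vx L) =
      ((m + ℓ + ℓ : ℕ) : ZMod (2 * L)) := by simp [ch]
  have vx : (ch (Sum.inl ((m : ZMod (2 * L)), 0) : Vx L)).val = m := by
    rw [cx, ZMod.val_natCast_of_lt (by omega)]
  have vy : (ch (Sum.inl ((m : ZMod (2 * L)) + ℓ, (ℓ : ZMod (2 * L))) : Vx L)).val = m + ℓ + ℓ := by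
    rw [cy, ZMod.val_natCast_of_lt (by omega)]
  have key := approx_reflection h _ _ (vx.trans_lt (by omega)) (by rw [vy]; omega)
  rw [vx, vy, show m + ℓ + ℓ - m = 2 * ℓ by omega] at key
  change G t s _ _ ≤ G t s _ _ + _ at key
  rw [← G_shift (-(m : ZMod (2 * L)), 0), ← G_shift (-(m : ZMod (2 * L)), 0) _ (Rf _)] at key
  have e1 : shV (-(m : ZMod (2 * L)), 0) (Sum.inl ((m : ZMod (2 * L)), 0) : Vx L) = Sum.inl 0 := by
    simp [shV, Prod.ext_iff]
  have e2 : shV (-(m : ZMod (2 * L)), 0)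
      (Sum.inl ((m : ZMod (2 * L)) + ℓ, (ℓ : ZMod (2 * L))) : Vx L) =
      Sum.inl ((ℓ : ZMod (2 * L)), (ℓ : ZMod (2 * L))) := by
    simp [shV]
  have e3 : shV (-(m : ZMod (2 * L)), 0)
      (Rf (Sum.inl ((m : ZMod (2 * L)) + ℓ, (ℓ : ZMod (2 * L)))) : Vx L) =
      Sum.inr ((L : ZMod (2 * L)), (L : ZMod (2 * L))) := by
    have hc : (L : ZMod (2 * L)) = m + ℓ := by
      rw [show ((L : ℕ) : ZMod (2 * L)) = ((m + ℓ : ℕ) : ZMod (2 * L)) from rfl]; push_cast; ring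
    simp only [shV, Rf, hc, Equiv.sumCongr_apply, Sum.map_inr, Equiv.coe_addRight, Sum.inr.injEq,
      Prod.ext_iff, Prod.fst_add, Prod.snd_add]
    constructor <;> linear_combination -h2L
  rw [e1, e2, e3] at key
  have key2 := reflect_even h ((L : ZMod (2 * L)), (L : ZMod (2 * L))) (by
    change (L : ZMod (2 * L)) + L = 0
    rw [← two_mul]; exact_mod_cast ZMod.natCast_self (2 * L))
  linarith

/-- The chain of `J`-bonds through `σ_0`, running along the antidiagonal. -/
def cv (L : ℕ) (n : ℤ) : Vx L :=
  if n % 2 = 0 then Sum.inl ((n / 2 : ℤ), -((n / 2 : ℤ) : ZMod (2 * L)))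
  else Sum.inr ((n / 2 : ℤ) + 1, -((n / 2 : ℤ) : ZMod (2 * L)))

lemma cv_even (L : ℕ) (j : ℤ) : cv L (2 * j) = Sum.inl ((j : ZMod (2 * L)), -(j : ZMod (2 * L))) := by
  simp [cv]

lemma cv_odd (L : ℕ) (j : ℤ) : cv L (2 * j + 1) =
    Sum.inr ((j : ZMod (2 * L)) + 1, -(j : ZMod (2 * L))) := by
  have h1 : (2 * j + 1) % 2 = 1 := by omega
  have h2 : (2 * j + 1) / 2 = j := by omega
  simp [cv, h1, h2]

lemma cv_odd' (L : ℕ) (j : ℤ) : cv L (2 * j - 1) =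
    Sum.inr ((j : ZMod (2 * L)), 1 - (j : ZMod (2 * L))) := by
  have := cv_odd L (j - 1)
  rw [show 2 * (j - 1) + 1 = 2 * j - 1 by ring] at this
  rw [this]; push_cast; congr 2 <;> ring

/-- Approximate subharmonicity along the chain: the contribution of the vertical bond is absorbed
by the reflection inequality. -/
lemma chain_rec (h : Par t s κ) (n : ℤ) (h0 : 0 < n) (h1 : n < 4 * L) :
    (1 - s) * G t s (Sum.inl 0) (cv L n) ≤ t / (1 + t ^ 2) *
      (G t s (Sum.inl 0) (cv L (n - 1)) + G t s (Sum.inl 0) (cv L (n + 1))) +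
        s * (4 * L * κ ^ (2 * L - 1)) := by
  have hsub : ∀ z : Vx L, z ≠ Sum.inl 0 → G t s (Sum.inl 0) z ≤ t / (1 + t ^ 2) *
      (G t s (Sum.inl 0) (na z) + G t s (Sum.inl 0) (nb z)) + s * G t s (Sum.inl 0) (nc z) := by
    intro z hz
    have hρ : cutAt s ∅ (base z) = s := by simp [cutAt]
    have := site_sub pe re _ (cut0_nonneg h) (cut0_lt h) h.t0.le h.t1 (hρ ▸ h.s0.le)
      (hρ ▸ h.s1) hρ.le (siteAt t (cutAt s ∅) z) (Sum.inl 0) hz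
    simp only [G_comm (Sum.inl 0)]
    exact this
  rcases Int.even_or_odd' n with ⟨j, rfl | rfl⟩
  · have hz : cv L (2 * j) ≠ Sum.inl 0 := by
      rw [cv_even]
      intro e
      have e' : (j : ZMod (2 * L)) = 0 := congrArg Prod.fst (Sum.inl.inj e)
      rw [ZMod.intCast_zmod_eq_zero_iff_dvd] at e'
      have := Int.le_of_dvd (by omega) e'
      push_cast at this
      omega
    have key := hsub _ hz
    have k2 := reflect_even h ((j : ZMod (2 * L)), -(j : ZMod (2 * L))) (by simp)
    rw [cv_odd', cv_odd]
    rw [cv_even] at key ⊢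
    simp only [na, nb, nc, up, rt] at key
    rw [neg_add_eq_sub] at key
    have := mul_le_mul_of_nonneg_left k2 h.s0.le
    linarith
  · have hz : cv L (2 * j + 1) ≠ Sum.inl 0 := by
      rw [cv_odd]; simp
    have key := hsub _ hz
    have k2 := reflect_odd h ((j : ZMod (2 * L)) + 1, -(j : ZMod (2 * L))) (by simp)
    rw [show 2 * j + 1 - 1 = 2 * j by ring, show 2 * j + 1 + 1 = 2 * (j + 1) by ring, cv_even,
      cv_even]
    rw [cv_odd] at key ⊢
    simp only [na, nb, nc, add_sub_cancel_right] at key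
    have e : -((j + 1 : ℤ) : ZMod (2 * L)) = -(j : ZMod (2 * L)) - 1 := by push_cast; ring
    rw [e]
    push_cast
    have := mul_le_mul_of_nonneg_left k2 h.s0.le
    linarith

/-- A strictly subharmonic profile, with an additive error `e`, is smaller at the centre `N` by a
definite factor than its average over `N - k` and `N + k`: above the level `e` the symmetrised
profile increases away from `N`. -/
lemma profile (N : ℤ) (g : ℤ → ℝ) (α s e : ℝ) (hg : ∀ n, 0 ≤ g n) (hα : 0 < α) (hs : 0 ≤ s)
    (he : 0 ≤ e) (hδ : 2 * α + 2 * s ≤ 1)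
    (hrec : ∀ n, 0 < n → n < 2 * N → (1 - s) * g n ≤ α * (g (n - 1) + g (n + 1)) + s * e)
    (k : ℕ) (hk : 1 ≤ k) (hkN : (k : ℤ) ≤ N) :
    g N ≤ (1 - (1 - 2 * α) / 2) * ((g (N - k) + g (N + k)) / 2) + e := by
  set w : ℕ → ℝ := fun j => (g (N - j) + g (N + j)) / 2 - e with hw
  have w0 : w 0 = g N - e := by simp [hw]
  have hvk : w k ≤ (g (N - k) + g (N + k)) / 2 := by simp only [hw]; linarith
  have hvk0 : 0 ≤ (g (N - k) + g (N + k)) / 2 := by linarith [hg (N - k), hg (N + k)]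
  by_cases hpos : g N ≤ e
  · nlinarith
  have hw0 : 0 < w 0 := by rw [w0]; linarith
  have hes : (2 * α + 2 * s - 1) * e ≤ 0 := by nlinarith
  have r0 : (1 - s) * w 0 ≤ 2 * α * w 1 := by
    have := hrec N (by omega) (by omega)
    simp only [hw]; push_cast
    simp only [sub_zero, add_zero]
    linarith
  have r1 : ∀ j : ℕ, ((j + 1 : ℕ) : ℤ) < N →
      (1 - s) * w (j + 1) ≤ α * (w j + w (j + 2)) := by
    intro j hj
    have a := hrec (N - (j + 1 : ℕ)) (by omega) (by omega)
    have b := hrec (N + (j + 1 : ℕ)) (by omega) (by omega)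
    rw [show N - ((j + 1 : ℕ) : ℤ) - 1 = N - ((j + 2 : ℕ) : ℤ) by push_cast; ring,
      show N - ((j + 1 : ℕ) : ℤ) + 1 = N - (j : ℤ) by push_cast; ring] at a
    rw [show N + ((j + 1 : ℕ) : ℤ) - 1 = N + (j : ℤ) by push_cast; ring,
      show N + ((j + 1 : ℕ) : ℤ) + 1 = N + ((j + 2 : ℕ) : ℤ) by push_cast; ring] at b
    simp only [hw]
    linarith
  have mono : ∀ j : ℕ, (j : ℤ) < N → 0 < w j ∧ w j ≤ w (j + 1) := by
    intro j
    induction j with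
    | zero =>
      intro _
      refine ⟨hw0, ?_⟩
      by_contra hc
      push Not at hc
      nlinarith
    | succ j ih =>
      intro hj
      obtain ⟨p, q⟩ := ih (by push_cast at hj; omega)
      have p' := p.trans_le q
      refine ⟨p', ?_⟩
      have := r1 j hj
      by_contra hc
      push Not at hc
      have : α * w (j + 1 + 1) < α * w (j + 1) := mul_lt_mul_of_pos_left hc hα
      have : α * w j ≤ α * w (j + 1) := mul_le_mul_of_nonneg_left q hα.le
      nlinarith
  have hmono : ∀ j : ℕ, 1 ≤ j → (j : ℤ) ≤ N → w 1 ≤ w j := by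
    intro j hj
    induction j, hj using Nat.le_induction with
    | base => intro _; exact le_rfl
    | succ j hj ih =>
      intro hjN
      exact (ih (by push_cast at hjN; omega)).trans (mono j (by push_cast at hjN; omega)).2
  have h1k := hmono k hk hkN
  have hw1 : 0 < w 1 := hw0.trans_le (mono 0 (by omega)).2
  have c1 : w 0 ≤ (1 - (1 - 2 * α) / 2) * w 1 := by
    have a1 : (1 - (1 - 2 * α) / 2) * w 0 ≤ (1 - s) * w 0 :=
      mul_le_mul_of_nonneg_right (by linarith) hw0.le
    have a2 : 2 * α * w 1 ≤ (1 - (1 - 2 * α) / 2) ^ 2 * w 1 :=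
      mul_le_mul_of_nonneg_right (by nlinarith [sq_nonneg (1 - 2 * α)]) hw1.le
    have a3 : (1 - (1 - 2 * α) / 2) * w 0 ≤
        (1 - (1 - 2 * α) / 2) * ((1 - (1 - 2 * α) / 2) * w 1) := by
      linarith
    exact le_of_mul_le_mul_left a3 (by linarith)
  have c2 : (1 - (1 - 2 * α) / 2) * w 1 ≤
      (1 - (1 - 2 * α) / 2) * ((g (N - k) + g (N + k)) / 2) :=
    mul_le_mul_of_nonneg_left (h1k.trans hvk) (by linarith)
  linarith

/-- On the chain of `σ_0`, the correlation at the antipode `cv L (2 * L)` is smaller by a definite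
factor than at `cv L (2 * ℓ)`, up to an error. -/
lemma antipode_le (h : Par t s κ) (h2 : 2 * (t / (1 + t ^ 2)) + 2 * s ≤ 1) (ℓ : ℕ) (hℓ : ℓ < L) :
    G t s (Sum.inl (0 : Torus L)) (Sum.inl ((L : ZMod (2 * L)), (L : ZMod (2 * L)))) ≤
      (1 - (1 - 2 * (t / (1 + t ^ 2))) / 2) * G t s (Sum.inl 0) (cv L (2 * ℓ)) +
        4 * L * κ ^ (2 * L - 1) := by
  have hκ := h.k0
  have key := profile (2 * L) (fun n => G t s (Sum.inl 0) (cv L n)) _ s (4 * L * κ ^ (2 * L - 1))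
    (fun n => G_nonneg h _ _) h.a0 h.s0.le (by positivity) h2
    (fun n h0 h1 => chain_rec h n h0 (by linarith)) (2 * (L - ℓ)) (by omega) (by omega)
  have hc : ((2 * (L - ℓ) : ℕ) : ℤ) = 2 * ((L : ℤ) - ℓ) := by
    rw [Nat.cast_mul, Nat.cast_sub hℓ.le]; rfl
  have h2L : (L : ZMod (2 * L)) + L = 0 := by
    rw [← two_mul]; exact_mod_cast ZMod.natCast_self (2 * L)
  have e1 : cv L (2 * L) = Sum.inl ((L : ZMod (2 * L)), (L : ZMod (2 * L))) := by
    rw [cv_even, Int.cast_natCast, neg_eq_of_add_eq_zero_left h2L]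
  have e2 : cv L (2 * L + 2 * ((L : ℤ) - ℓ)) =
      Sum.inl (-(ℓ : ZMod (2 * L)), (ℓ : ZMod (2 * L))) := by
    rw [← mul_add, cv_even]
    push_cast
    congr 2
    · linear_combination h2L
    · linear_combination -h2L
  have e3 : G t s (Sum.inl 0) (cv L (2 * L + 2 * ((L : ℤ) - ℓ))) =
      G t s (Sum.inl 0) (cv L (2 * ℓ)) := by
    rw [e2, cv_even, ← G_shift ((ℓ : ZMod (2 * L)), -(ℓ : ZMod (2 * L))), G_comm]
    congr 1 <;> simp [shV, Prod.ext_iff]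
  beta_reduce at key
  rw [hc, show (2 : ℤ) * L - 2 * ((L : ℤ) - ℓ) = 2 * ℓ by ring, e3, e1, add_self_div_two] at key
  exact key

/-- Each bond of the chain costs a factor `t`, by the second Griffiths inequality. -/
lemma chain_lower (h : Par t s κ) (n : ℕ) : t ^ n ≤ G t s (Sum.inl 0) (cv L n) := by
  induction n with
  | zero =>
    have : cv L ((0 : ℕ) : ℤ) = Sum.inl 0 := by simp [cv]
    rw [this, G, cor_self _ _ _ (cut0_nonneg h) (cut0_lt h), pow_zero]
  | succ n ih =>
    have hb : t ≤ G t s (cv L n) (cv L ((n + 1 : ℕ) : ℤ)) := by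
      rcases Nat.even_or_odd' n with ⟨j, rfl | rfl⟩
      · have := cor_bond_ge pe re _ (cut0_nonneg h) (cut0_lt h)
          (((j : ZMod (2 * L)), -(j : ZMod (2 * L))), (1 : Fin 3))
        push_cast
        rw [show (2 * (j : ℤ)) = 2 * ((j : ℕ) : ℤ) from rfl, cv_even, cv_odd]
        simpa [G, Tt_cut_empty, pe, re, rt] using this
      · have := cor_bond_ge pe re _ (cut0_nonneg h) (cut0_lt h)
          (((j : ZMod (2 * L)) + 1, -(j : ZMod (2 * L)) - 1), (0 : Fin 3))
        push_cast
        rw [show (2 * (j : ℤ) + 1 + 1) = 2 * ((j : ℤ) + 1) by ring, cv_even, cv_odd, G_comm]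
        have e : -(((j : ℤ) + 1 : ℤ) : ZMod (2 * L)) = -(j : ZMod (2 * L)) - 1 := by
          push_cast; ring
        rw [e]
        simpa [G, Tt_cut_empty, pe, re, up] using this
    have hg := griffiths_two pe re _ (cut0_nonneg h) (cut0_lt h) [Sum.inl 0, cv L n]
      [cv L n, cv L ((n + 1 : ℕ) : ℤ)]
    have e : cor pe re (Tt t (cutAt s ∅)) ([Sum.inl 0, cv L n] ++
        [cv L n, cv L ((n + 1 : ℕ) : ℤ)]) = G t s (Sum.inl 0) (cv L ((n + 1 : ℕ) : ℤ)) :=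
      cor_congr pe re _ fun σ => by
        simp only [mon, List.cons_append, List.nil_append, List.map_cons, List.prod_cons,
          List.map_nil, List.prod_nil]
        linear_combination (bs (σ (Sum.inl 0)) * bs (σ (cv L ((n + 1 : ℕ) : ℤ)))) *
          bs_mul_self (σ (cv L n))
    rw [e] at hg
    rw [pow_succ]
    exact (mul_le_mul ih hb h.t0.le (G_nonneg h _ _)).trans hg

/-- The comparison of the two diagonals for small `κ`. When `2ℓ ≤ L` decay is enough; otherwise
`L < 2ℓ`, and the three errors add up to at most `12 L κ ^ (2ℓ)`, below the gained fraction
`δ / 2` of the antidiagonal correlation. -/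
lemma diag_lt (h : Par t s κ) (h2 : 2 * (t / (1 + t ^ 2)) + 2 * s ≤ 1)
    (h3 : κ ≤ t * (1 - 2 * (t / (1 + t ^ 2))) / 10) (ℓ : ℕ) (h0 : 0 < ℓ) (h1 : ℓ < L) :
    G t s (Sum.inl (0 : Torus L)) (Sum.inl ((ℓ : ZMod (2 * L)), (ℓ : ZMod (2 * L)))) <
      G t s (Sum.inl 0) (cv L (2 * ℓ)) := by
  have hκ := h.k0
  have ht := h.t0
  have hlow := chain_lower (L := L) h (2 * ℓ)
  push_cast at hlow
  set δ := 1 - 2 * (t / (1 + t ^ 2)) with hδ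
  have hδ0 : 0 < δ := by linarith [h.hs, h.s0]
  have hδ1 : δ < 1 := by linarith [h.a0]
  set g := G t s (Sum.inl 0) (cv L (2 * ℓ)) with hg
  have hκt : κ < t := by nlinarith
  by_cases hcase : 2 * ℓ ≤ L
  · have hle := two_point_le (cutAt s ∅) h (fun x => by simp [cutAt, h.s0.le])
      (fun x => by simp [cutAt]) (Sum.inl ((ℓ : ZMod (2 * L)), (ℓ : ZMod (2 * L))))
      (Sum.inl (0 : Torus L))
    have hD := le_Dz (L := L) (2 * ℓ) (by omega) (by omega)
    have hch : ch (Sum.inl ((ℓ : ZMod (2 * L)), (ℓ : ZMod (2 * L))) : Vx L) -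
        ch (Sum.inl (0 : Torus L)) = ((2 * ℓ : ℤ) : ZMod (2 * L)) := by
      simp [ch]; ring
    rw [hch] at hle
    have p1 : κ ^ Dz ((2 * ℓ : ℤ) : ZMod (2 * L)) ≤ κ ^ (2 * ℓ) :=
      pow_le_pow_of_le_one hκ.le h.k1 (by omega)
    have p2 : κ ^ (2 * ℓ) < t ^ (2 * ℓ) := pow_lt_pow_left₀ hκt hκ.le (by omega)
    rw [G_comm]
    exact (hle.trans p1).trans_lt (p2.trans_le hlow)
  · have m1 := diag_le_antipode (L := L) h ℓ h0 h1
    have m2 := antipode_le (L := L) h h2 ℓ h1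
    have p1 : κ ^ (2 * L - 1) ≤ κ ^ (2 * ℓ) := pow_le_pow_of_le_one hκ.le h.k1 (by omega)
    have p2 : 4 * (L : ℝ) * κ ^ (2 * L - 1) ≤ 4 * L * κ ^ (2 * ℓ) :=
      mul_le_mul_of_nonneg_left p1 (by positivity)
    have hLℓ : (L : ℝ) ≤ 2 * ℓ := by exact_mod_cast (by omega : L ≤ 2 * ℓ)
    have hpow : (ℓ : ℝ) ≤ 2 ^ ℓ := by exact_mod_cast (Nat.lt_two_pow_self (n := ℓ)).le
    have p3 : κ ^ (2 * ℓ) ≤ (t * δ / 10) ^ (2 * ℓ) := pow_le_pow_left₀ hκ.le h3 _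
    have p4 : (2 : ℝ) ^ ℓ * (t * δ / 10) ^ (2 * ℓ) = (δ ^ 2 / 50) ^ ℓ * t ^ (2 * ℓ) := by
      rw [pow_mul, pow_mul, ← mul_pow, ← mul_pow]; congr 1; ring
    have p5 : (δ ^ 2 / 50) ^ ℓ ≤ δ ^ 2 / 50 :=
      pow_le_of_le_one (by positivity) (by nlinarith) (by omega)
    have ht2 : 0 < t ^ (2 * ℓ) := by positivity
    have q1 : 12 * (L : ℝ) * κ ^ (2 * ℓ) ≤ 24 * ((2 : ℝ) ^ ℓ * (t * δ / 10) ^ (2 * ℓ)) := by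
      have hκp : 0 ≤ κ ^ (2 * ℓ) := by positivity
      calc 12 * (L : ℝ) * κ ^ (2 * ℓ) ≤ 12 * (2 * 2 ^ ℓ) * κ ^ (2 * ℓ) := by
            apply mul_le_mul_of_nonneg_right _ hκp; linarith
        _ ≤ 12 * (2 * 2 ^ ℓ) * (t * δ / 10) ^ (2 * ℓ) :=
            mul_le_mul_of_nonneg_left p3 (by positivity)
        _ = _ := by ring
    have q2 : 24 * ((2 : ℝ) ^ ℓ * (t * δ / 10) ^ (2 * ℓ)) ≤ 24 * (δ ^ 2 / 50 * t ^ (2 * ℓ)) := by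
      rw [p4]
      have := mul_le_mul_of_nonneg_right p5 ht2.le
      linarith
    have q3 : 24 * (δ ^ 2 / 50 * t ^ (2 * ℓ)) < δ / 2 * t ^ (2 * ℓ) := by
      have : 24 * (δ ^ 2 / 50) < δ / 2 := by nlinarith
      have := mul_lt_mul_of_pos_right this ht2
      linarith
    have q4 : δ / 2 * t ^ (2 * ℓ) ≤ δ / 2 * g := mul_le_mul_of_nonneg_left hlow (by positivity)
    linarith

end Chain

/-! ### From the pair Hamiltonian to the hexagonal Ising model -/

section Connection

variable {L : ℕ} [NeZero L]

lemma exp_bond (K b : ℝ) (hb : b = 1 ∨ b = -1) :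
    exp (K * b) = cosh K * (1 + tanh K * b) := by
  have hc := (cosh_pos K).ne'
  rw [tanh_eq_sinh_div_cosh]
  rcases hb with rfl | rfl
  · rw [mul_one, mul_one, mul_add, mul_div_cancel₀ _ hc, mul_one, cosh_add_sinh]
  · rw [mul_neg_one, mul_neg_one, mul_add, mul_neg, mul_div_cancel₀ _ hc, mul_one, ← sub_eq_add_neg,
      cosh_sub_sinh]

/-- The Boltzmann factor in high-temperature form. -/
lemma exp_neg_Hpair_s12 (J q : ℝ) (σ τ : Cfg L) :
    exp (-(Hpair L J q σ τ)) = (∏ _x : Torus L, cosh J * cosh J * cosh q) *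
      wt pe re (Tt (tanh J) (cutAt (tanh q) ∅)) (Sum.elim σ τ) := by
  have hbs : ∀ a b : Bool, bs a * bs b = 1 ∨ bs a * bs b = -1 := by
    intro a b; cases a <;> cases b <;> simp [bs]
  rw [Hpair, neg_neg, exp_sum, wt,
    Fintype.prod_prod_type (fun e : Bd L => 1 + Tt (tanh J) (cutAt (tanh q) ∅) e *
      (bs (Sum.elim σ τ (pe e)) * bs (Sum.elim σ τ (re e)))), ← Finset.prod_mul_distrib]
  refine Finset.prod_congr rfl fun x _ => ?_
  have e : J * spin σ x * (spin τ (up x) + spin τ (rt x)) + q * spin σ x * spin τ x =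
      J * (bs (σ x) * bs (τ (up x))) + J * (bs (σ x) * bs (τ (rt x))) +
        q * (bs (σ x) * bs (τ x)) := by
    simp only [spin, bs]; ring
  rw [e, exp_add, exp_add, exp_bond _ _ (hbs _ _), exp_bond _ _ (hbs _ _), exp_bond _ _ (hbs _ _),
    Fin.prod_univ_three]
  simp [Tt_cut_empty, pe, re]
  ring

lemma sum_Vx (F : (Vx L → Bool) → ℝ) :
    ∑ φ, F φ = ∑ σ : Cfg L, ∑ τ : Cfg L, F (Sum.elim σ τ) := by
  rw [← Fintype.sum_prod_type']
  refine Fintype.sum_equiv (Equiv.sumArrowEquivProdArrow _ _ _) _ _ fun φ => ?_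
  congr 1
  funext v
  rcases v with x | x <;> rfl

lemma corr_eq_G (J q : ℝ) (x y : Torus L) :
    corr L J q x y = G (tanh J) (tanh q) (Sum.inl x) (Sum.inl y) := by
  set C : ℝ := ∏ _x : Torus L, cosh J * cosh J * cosh q with hC
  have hC0 : C ≠ 0 := (Finset.prod_pos fun _ _ => by
    have := cosh_pos J; have := cosh_pos q; positivity).ne'
  have hZ : Zpair L J q =
      C * Sm pe re (Tt (tanh J) (cutAt (tanh q) (∅ : Finset (Torus L)))) (fun _ => 1) := by
    simp only [Zpair, Sm, sum_Vx, Finset.mul_sum, exp_neg_Hpair_s12, one_mul, hC]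
  have hN : ∑ σ : Cfg L, (∑ τ : Cfg L, exp (-(Hpair L J q σ τ))) * (spin σ x * spin σ y) =
      C * Sm pe re (Tt (tanh J) (cutAt (tanh q) (∅ : Finset (Torus L))))
        (mon [Sum.inl x, Sum.inl y]) := by
    simp only [Sm, sum_Vx, Finset.mul_sum, Finset.sum_mul, exp_neg_Hpair_s12, ← hC]
    refine Finset.sum_congr rfl fun σ _ => Finset.sum_congr rfl fun τ _ => ?_
    have e : mon [Sum.inl x, Sum.inl y] (Sum.elim σ τ) = spin σ x * spin σ y := by
      simp only [mon_cons, mon_nil, Sum.elim_inl, mul_one]; rfl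
    rw [e]
    ring
  rw [corr, G, cor, ← mul_div_mul_left _ _ hC0, ← hZ, ← hN, Finset.sum_div]
  refine Finset.sum_congr rfl fun σ _ => ?_
  rw [piMeas]; ring

lemma tanh_pos_of_pos {x : ℝ} (hx : 0 < x) : 0 < tanh x := by
  rw [tanh_eq_sinh_div_cosh]; exact div_pos (sinh_pos_iff.2 hx) (cosh_pos x)

lemma tanh_le_two_mul {x : ℝ} (hx : 0 ≤ x) : tanh x ≤ 2 * x := by
  rw [tanh_eq_sinh_div_cosh, div_le_iff₀ (cosh_pos x), sinh_eq, cosh_eq]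
  have h1 : exp (-x) = exp x * exp (-2 * x) := by rw [← exp_add]; congr 1; ring
  have h2 := add_one_le_exp (-2 * x)
  have h3 := mul_le_mul_of_nonneg_left h2 (exp_pos x).le
  have h4 := mul_nonneg hx (exp_pos (-x)).le
  nlinarith

end Connection

/-- For every `J > 0` there is `q₀ > 0` such that for all `q ∈ (0,q₀)`,
all `L` and all integers `0 < ℓ < L` there exist constants `c₁ < c₂` with
`π(σ_{(0,0)} σ_{(ℓ,ℓ)}) ≤ c₁ < c₂ ≤ π(σ_{(0,ℓ)} σ_{(ℓ,0)})`: the correlation along the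
main diagonal is strictly smaller than along the anti-diagonal at the same distance. -/
theorem statement12 (J : ℝ) (hJ : 0 < J) :
    ∃ q0 : ℝ, 0 < q0 ∧ ∀ q : ℝ, 0 < q → q < q0 →
      ∀ (L : ℕ) [NeZero L], ∀ ℓ : ℕ, 0 < ℓ → ℓ < L →
        ∃ c1 c2 : ℝ, c1 < c2 ∧
          corr L J q ((0 : ZMod (2 * L)), (0 : ZMod (2 * L)))
              ((ℓ : ZMod (2 * L)), (ℓ : ZMod (2 * L))) ≤ c1 ∧
          c2 ≤ corr L J q ((0 : ZMod (2 * L)), (ℓ : ZMod (2 * L)))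
              ((ℓ : ZMod (2 * L)), (0 : ZMod (2 * L))) := by
  have ht0 : 0 < tanh J := tanh_pos_of_pos hJ
  have ht1 : tanh J < 1 := tanh_lt_one J
  set t := tanh J with ht
  set δ := 1 - 2 * (t / (1 + t ^ 2)) with hδ
  have hα : 0 < t / (1 + t ^ 2) := by positivity
  have hδ0 : 0 < δ := by
    have : δ = (1 - t) ^ 2 / (1 + t ^ 2) := by rw [hδ]; field_simp; ring
    rw [this]
    have : 0 < 1 - t := by linarith
    positivity
  have hδ1 : δ < 1 := by linarith
  refine ⟨t * δ ^ 2 / 20, by positivity, fun q hq0 hq L _ ℓ h0 h1 => ?_⟩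
  have hs0 : 0 < tanh q := tanh_pos_of_pos hq0
  have hsq : tanh q ≤ 2 * q := tanh_le_two_mul hq0.le
  have hs : tanh q < t * δ ^ 2 / 10 := by linarith
  have hs2 : t * δ ^ 2 / 10 ≤ δ / 10 := by nlinarith [mul_pos hδ0 hδ0, mul_pos ht0 hδ0]
  have hk : tanh q / δ ≤ t * δ / 10 := by
    rw [div_le_iff₀ hδ0]; nlinarith
  have hpar : Par t (tanh q) (tanh q / δ) :=
    { t0 := ht0, t1 := ht1, s0 := hs0, s1 := tanh_lt_one q, k0 := div_pos hs0 hδ0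
      k1 := hk.trans (by nlinarith)
      hk := (div_mul_cancel₀ _ hδ0.ne').symm
      hs := by linarith }
  refine ⟨_, _, ?_, le_rfl, le_rfl⟩
  have key := diag_lt (L := L) hpar (by linarith) hk ℓ h0 h1
  rw [corr_eq_G, corr_eq_G]
  have e : G t (tanh q) (Sum.inl ((0 : ZMod (2 * L)), (ℓ : ZMod (2 * L))))
      (Sum.inl ((ℓ : ZMod (2 * L)), (0 : ZMod (2 * L)))) =
      G t (tanh q) (Sum.inl 0) (cv L (2 * ℓ)) := by
    rw [cv_even, ← G_shift ((0 : ZMod (2 * L)), -(ℓ : ZMod (2 * L)))]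
    congr 1 <;> simp [shV, Prod.ext_iff]
  rw [e]
  exact key
end

section
/- Let G = (V,E) be a finite graph and let p_e ∈ [0,1] for each e ∈ E. Let Φ be the random cluster measure with cluster weight 2: Φ(ω) = (1/Z^{RC}) [Π_{e∈E} p_e^{ω(e)}(1−p_e)^{1−ω(e)}] 2^{k(ω)} for ω ∈ {0,1}^E, where k(ω) is the number of connected components of (V, {e : ω(e)=1}). Then for any two vertices x, y ∈ V, Φ(x ↔ y) ≤ Σ_γ Π_{e∈γ} p_e, where the sum runs over all simple paths γ ⊆ E joining x and y, and {x ↔ y} is the event that x and y are joined by a path of open edges. -/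
/-!
If `x ↔ y` in `ω`, then some simple path from `x` to `y` is entirely open, so a union bound
reduces the claim to `Φ(γ open) ≤ ∏_{e ∈ γ} p_e` for a fixed path `γ`. This follows by adding the
edges of `γ` one at a time: conditionally on all other edges, an edge `e` is open with probability
at most `p_e`, because opening `e` never increases the number of clusters and the cluster weight
is at least `1`. The one-edge comparison is `rcWG_update_le`; its summed form is
`sum_open_cons_le`, obtained from the involution that flips the state of `e`.
-/

open Real

attribute [local instance] Classical.propDecidable

variable {V : Type*} [Fintype V] [DecidableEq V]

/-- The spanning subgraph of `G` whose edges are the open edges of `ω`. -/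
def openSub (G : SimpleGraph V) [DecidableRel G.Adj] (ω : G.edgeSet → Bool) :
    SimpleGraph V :=
  SimpleGraph.fromEdgeSet {s : Sym2 V | ∃ h : s ∈ G.edgeSet, ω ⟨s, h⟩ = true}

/-- `k(ω)`: the number of connected components of the spanning subgraph of open edges. -/
noncomputable def kGen (G : SimpleGraph V) [DecidableRel G.Adj] (ω : G.edgeSet → Bool) : ℕ :=
  Nat.card (openSub G ω).ConnectedComponent

/-- Random cluster weight `[Π_e p_e^{ω(e)} (1−p_e)^{1−ω(e)}] 2^{k(ω)}`
with cluster weight `2`. -/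
noncomputable def rcWG (G : SimpleGraph V) [DecidableRel G.Adj] (p : Sym2 V → ℝ)
    (ω : G.edgeSet → Bool) : ℝ :=
  (∏ e : G.edgeSet, if ω e then p e.1 else 1 - p e.1) * 2 ^ kGen G ω

/-- The normalizing constant `Z^{RC}`. -/
noncomputable def ZrcG (G : SimpleGraph V) [DecidableRel G.Adj] (p : Sym2 V → ℝ) : ℝ :=
  ∑ ω : G.edgeSet → Bool, rcWG G p ω

/-- The random cluster measure `Φ` with cluster weight `2`. -/
noncomputable def PhiG (G : SimpleGraph V) [DecidableRel G.Adj] (p : Sym2 V → ℝ)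
    (ω : G.edgeSet → Bool) : ℝ :=
  rcWG G p ω / ZrcG G p

/-- Every edge in the list `l` is an open edge of `G` in the configuration `ω`. -/
def AllOpen (G : SimpleGraph V) [DecidableRel G.Adj] (l : List (Sym2 V))
    (ω : G.edgeSet → Bool) : Prop :=
  ∀ s ∈ l, ∃ h : s ∈ G.edgeSet, ω ⟨s, h⟩ = true

theorem rcWG_nonneg (G : SimpleGraph V) [DecidableRel G.Adj]
    (p : Sym2 V → ℝ) (hp : ∀ e : Sym2 V, 0 ≤ p e ∧ p e ≤ 1) (ω : G.edgeSet → Bool) :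
    0 ≤ rcWG G p ω := by
  unfold rcWG
  refine mul_nonneg (Finset.prod_nonneg fun e _ => ?_) (by positivity)
  have := hp e.1
  split_ifs <;> linarith

theorem kGen_le_update (G : SimpleGraph V) [DecidableRel G.Adj]
    (ω : G.edgeSet → Bool) (e : G.edgeSet) :
    kGen G ω ≤ kGen G (Function.update ω e false) := by
  have hle : openSub G (Function.update ω e false) ≤ openSub G ω := by
    unfold openSub
    apply SimpleGraph.fromEdgeSet_mono
    rintro s ⟨h, hs⟩
    refine ⟨h, ?_⟩
    by_cases hse : (⟨s, h⟩ : G.edgeSet) = e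
    · rw [hse] at hs
      simp at hs
    · rwa [Function.update_of_ne hse] at hs
  unfold kGen
  exact Nat.card_le_card_of_surjective _
    (SimpleGraph.ConnectedComponent.surjective_map_ofLE hle)

/-- The one-edge comparison, equivalent to: given the other edges, `e` is open with probability at
most `p e`. -/
theorem rcWG_update_le (G : SimpleGraph V) [DecidableRel G.Adj]
    (p : Sym2 V → ℝ) (hp : ∀ e : Sym2 V, 0 ≤ p e ∧ p e ≤ 1) (ω : G.edgeSet → Bool)
    (e : G.edgeSet) (he : ω e = true) :
    (1 - p e.1) * rcWG G p ω ≤ p e.1 * rcWG G p (Function.update ω e false) := by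
  unfold rcWG
  rw [← Finset.mul_prod_erase Finset.univ _ (Finset.mem_univ e),
    ← Finset.mul_prod_erase Finset.univ
      (fun a : G.edgeSet => if Function.update ω e false a then p a.1 else 1 - p a.1)
      (Finset.mem_univ e)]
  have hrest : (∏ a ∈ Finset.univ.erase e,
        if Function.update ω e false a then p a.1 else 1 - p a.1)
      = ∏ a ∈ Finset.univ.erase e, if ω a then p a.1 else 1 - p a.1 := by
    refine Finset.prod_congr rfl fun a ha => ?_
    rw [Function.update_of_ne (Finset.ne_of_mem_erase ha)]
  have hR : 0 ≤ ∏ a ∈ Finset.univ.erase e, if ω a then p a.1 else 1 - p a.1 := by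
    refine Finset.prod_nonneg fun a _ => ?_
    have := hp a.1
    split_ifs <;> linarith
  have hk : (2 : ℝ) ^ kGen G ω ≤ 2 ^ kGen G (Function.update ω e false) :=
    pow_le_pow_right₀ (by norm_num) (kGen_le_update G ω e)
  rw [hrest]
  simp only [he, Function.update_self, if_true, Bool.false_eq_true, if_false]
  have hc : 0 ≤ p e.1 * (1 - p e.1) :=
    mul_nonneg (hp e.1).1 (by linarith [(hp e.1).2])
  have := mul_le_mul_of_nonneg_left hk (mul_nonneg hc hR)
  linarith

/-- Requiring one more edge to be open costs at least a factor `p s`. -/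
theorem sum_open_cons_le (G : SimpleGraph V) [DecidableRel G.Adj]
    (p : Sym2 V → ℝ) (hp : ∀ e : Sym2 V, 0 ≤ p e ∧ p e ≤ 1) (s : Sym2 V) (l : List (Sym2 V))
    (hs : s ∈ G.edgeSet) (hsl : s ∉ l) :
    (∑ ω : G.edgeSet → Bool, if AllOpen G (s :: l) ω then rcWG G p ω else 0)
      ≤ p s * ∑ ω : G.edgeSet → Bool, if AllOpen G l ω then rcWG G p ω else 0 := by
  set e : G.edgeSet := ⟨s, hs⟩ with hedef
  let σ : (G.edgeSet → Bool) → (G.edgeSet → Bool) := fun ω => Function.update ω e (!ω e)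
  have hσ : Function.Involutive σ := by
    intro ω
    simp [σ]
  have hσl : ∀ ω, AllOpen G l (σ ω) ↔ AllOpen G l ω := by
    intro ω
    refine forall₂_congr fun t ht => exists_congr fun h => ?_
    have hne : (⟨t, h⟩ : G.edgeSet) ≠ e := by
      intro heq
      have hts : t = s := congrArg Subtype.val heq
      exact hsl (hts ▸ ht)
    simp only [σ]
    rw [Function.update_of_ne hne]
  have hcons : ∀ ω, AllOpen G (s :: l) ω ↔ ω e = true ∧ AllOpen G l ω := by
    intro ω
    simp [AllOpen, hs, hedef]
  let f : (G.edgeSet → Bool) → ℝ := fun ω => if AllOpen G l ω then rcWG G p ω else 0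
  let g : (G.edgeSet → Bool) → ℝ := fun ω => if AllOpen G (s :: l) ω then rcWG G p ω else 0
  have hopen : ∀ ω, ω e = true → g ω + g (σ ω) ≤ p s * (f ω + f (σ ω)) := by
    intro ω he
    have hσe : σ ω = Function.update ω e false := by simp [σ, he]
    have hσe' : (σ ω) e = false := by rw [hσe]; simp
    have key := rcWG_update_le G p hp ω e he
    rw [← hσe] at key
    simp only [f, g, hcons, hσl, he, hσe', true_and, Bool.false_eq_true, false_and, if_false]
    split_ifs
    · simp only [hedef] at key
      linarith
    · simp
  -- Symmetrized over an orbit `{ω, σ ω}`, the inequality holds pointwise.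
  have hpt : ∀ ω, g ω + g (σ ω) ≤ p s * (f ω + f (σ ω)) := by
    intro ω
    cases he : ω e with
    | true => exact hopen ω he
    | false =>
      have h := hopen (σ ω) (by simp [σ, he])
      rw [hσ ω] at h
      linarith
  have hsum := Finset.sum_le_sum fun ω (_ : ω ∈ Finset.univ) => hpt ω
  rw [← Finset.mul_sum, Finset.sum_add_distrib, Finset.sum_add_distrib,
    hσ.bijective.sum_comp g, hσ.bijective.sum_comp f] at hsum
  change ∑ ω, g ω ≤ p s * ∑ ω, f ω
  linarith

theorem sum_open_le (G : SimpleGraph V) [DecidableRel G.Adj]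
    (p : Sym2 V → ℝ) (hp : ∀ e : Sym2 V, 0 ≤ p e ∧ p e ≤ 1) (l : List (Sym2 V))
    (hl : ∀ s ∈ l, s ∈ G.edgeSet) (hnd : l.Nodup) :
    (∑ ω : G.edgeSet → Bool, if AllOpen G l ω then rcWG G p ω else 0)
      ≤ (l.map p).prod * ZrcG G p := by
  induction l with
  | nil => simp [AllOpen, ZrcG]
  | cons s l ih =>
    rw [List.nodup_cons] at hnd
    refine (sum_open_cons_le G p hp s l (hl s (by simp)) hnd.1).trans ?_
    rw [List.map_cons, List.prod_cons, mul_assoc]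
    exact mul_le_mul_of_nonneg_left
      (ih (fun t ht => hl t (List.mem_cons_of_mem _ ht)) hnd.2) (hp s).1

theorem exists_open_path (G : SimpleGraph V) [DecidableRel G.Adj] (ω : G.edgeSet → Bool)
    (x y : V) (h : (openSub G ω).Reachable x y) :
    ∃ γ : G.Path x y, AllOpen G (γ : G.Walk x y).edges ω := by
  have hmem : ∀ s ∈ (openSub G ω).edgeSet, ∃ h : s ∈ G.edgeSet, ω ⟨s, h⟩ = true := by
    intro s hs
    unfold openSub at hs
    rw [SimpleGraph.edgeSet_fromEdgeSet] at hs
    exact hs.1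
  have hle : openSub G ω ≤ G :=
    SimpleGraph.edgeSet_subset_edgeSet.1 fun s hs => (hmem s hs).1
  obtain ⟨w, hw⟩ := h.exists_isPath
  refine ⟨⟨w.mapLe hle, hw.mapLe hle⟩, fun s hs => hmem s ?_⟩
  simp only [SimpleGraph.Walk.edges_mapLe_eq_edges] at hs
  exact w.edges_subset_edgeSet hs

/-- For the random cluster measure with cluster weight `2` on a finite
graph, the connection probability is bounded above by the sum over all simple paths `γ`
joining `x` and `y` of the product of the edge probabilities along `γ`:
`Φ(x ↔ y) ≤ Σ_γ Π_{e∈γ} p_e`. -/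
theorem statement13 (G : SimpleGraph V) [DecidableRel G.Adj]
    (p : Sym2 V → ℝ) (hp : ∀ e : Sym2 V, 0 ≤ p e ∧ p e ≤ 1) (x y : V) :
    (∑ ω : G.edgeSet → Bool, if (openSub G ω).Reachable x y then PhiG G p ω else 0)
      ≤ ∑ γ : G.Path x y, ((γ : G.Walk x y).edges.map p).prod := by
  have hZ : 0 ≤ ZrcG G p := Finset.sum_nonneg fun ω _ => rcWG_nonneg G p hp ω
  have hΦ : ∀ ω, 0 ≤ PhiG G p ω := fun ω => div_nonneg (rcWG_nonneg G p hp ω) hZ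
  calc (∑ ω : G.edgeSet → Bool, if (openSub G ω).Reachable x y then PhiG G p ω else 0)
      ≤ ∑ ω : G.edgeSet → Bool, ∑ γ : G.Path x y,
          if AllOpen G (γ : G.Walk x y).edges ω then PhiG G p ω else 0 := by
        refine Finset.sum_le_sum fun ω _ => ?_
        have hnn : ∀ γ : G.Path x y,
            0 ≤ if AllOpen G (γ : G.Walk x y).edges ω then PhiG G p ω else 0 := by
          intro γ
          split_ifs
          · exact hΦ ω
          · exact le_rfl
        split_ifs with h
        · obtain ⟨γ, hγ⟩ := exists_open_path G ω x y h
          refine le_trans ?_ (Finset.single_le_sum (fun γ _ => hnn γ) (Finset.mem_univ γ))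
          rw [if_pos hγ]
        · exact Finset.sum_nonneg fun γ _ => hnn γ
    _ = ∑ γ : G.Path x y, ∑ ω : G.edgeSet → Bool,
          if AllOpen G (γ : G.Walk x y).edges ω then PhiG G p ω else 0 := Finset.sum_comm
    _ ≤ ∑ γ : G.Path x y, ((γ : G.Walk x y).edges.map p).prod := by
        refine Finset.sum_le_sum fun γ _ => ?_
        have h := sum_open_le G p hp (γ : G.Walk x y).edges
          (fun s hs => (γ : G.Walk x y).edges_subset_edgeSet hs) γ.2.isTrail.edges_nodup
        have heq : (∑ ω : G.edgeSet → Bool,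
              if AllOpen G (γ : G.Walk x y).edges ω then PhiG G p ω else 0)
            = (∑ ω : G.edgeSet → Bool,
              if AllOpen G (γ : G.Walk x y).edges ω then rcWG G p ω else 0) / ZrcG G p := by
          rw [Finset.sum_div]
          refine Finset.sum_congr rfl fun ω _ => ?_
          split_ifs <;> simp [PhiG]
        rw [heq]
        refine div_le_of_le_mul₀ hZ (List.prod_nonneg fun a ha => ?_) h
        obtain ⟨s, _, rfl⟩ := List.mem_map.1 ha
        exact (hp s).1
end
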